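/- arXiv:1611.06441 — 9 statements merged into one kernel-verified Lean document; each statement's English description precedes it below -/
import Mathlib

section
/- For every ε > 0, δ > 0 and integer k ≥ 1 there exist constants c > 0 and C > 0 such that the following holds for all sufficiently large n: if m ≥ (2+δ)n and A is a random n×m integer matrix whose entries are independent, ε-balanced, and each supported on integers of absolute value at most 2^(n^k), then the probability that A : ℤ^m → ℤ^n is surjective is at least 1 − C·e^(−cn). -/
open MeasureTheory Filter

def IsBalanced (ε : ℝ) (ν : Measure ℤ) : Prop :=
  ∀ p : ℕ, p.Prime → ∀ r : ZMod p, ν {x : ℤ | (x : ZMod p) = r} ≤ ENNReal.ofReal (1 - ε)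

/-- The law of a random `n × m` integer matrix whose entries are independent with laws `ν i j`:
the product measure on the space of matrices (viewed as functions `Fin n → Fin m → ℤ`). -/
noncomputable def matrixLaw {n m : ℕ} (ν : Fin n → Fin m → Measure ℤ) :
    Measure (Fin n → Fin m → ℤ) :=
  Measure.pi fun i => Measure.pi fun j => ν i j


lemma pi_succ_symm {α : Type} [MeasurableSpace α] [Countable α] [MeasurableSingletonClass α] {n : ℕ}
    (μ : Fin (n+1) → Measure α) [∀ i, IsProbabilityMeasure (μ i)] (S : Set (Fin (n+1) → α)) :
    Measure.pi μ S = ∫⁻ t, μ 0 {a | (Fin.cons a t : Fin (n+1) → α) ∈ S}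
      ∂(Measure.pi fun i : Fin n => μ i.succ) := by
  have h := (measurePreserving_piFinSuccAbove μ 0).symm
  rw [← h.measure_preimage (MeasurableSet.of_discrete).nullMeasurableSet,
    Measure.prod_apply_symm (MeasurableSet.of_discrete)]
  have hc : ∀ (a : α) (t : Fin n → α),
      (MeasurableEquiv.piFinSuccAbove (fun _ => α) 0).symm (a, t) = (Fin.cons a t : Fin (n+1) → α) := by
    intro a t
    exact Fin.insertNth_zero (α := fun _ => α) a t
  simp only [Fin.succAbove_zero, Set.preimage, hc, Set.mem_ofPred_eq]

lemma pi_succ {α : Type} [MeasurableSpace α] [Countable α] [MeasurableSingletonClass α] {n : ℕ}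
    (μ : Fin (n+1) → Measure α) [∀ i, IsProbabilityMeasure (μ i)] (S : Set (Fin (n+1) → α)) :
    Measure.pi μ S = ∫⁻ a, (Measure.pi fun i : Fin n => μ i.succ)
      {t | (Fin.cons a t : Fin (n+1) → α) ∈ S} ∂(μ 0) := by
  have h := (measurePreserving_piFinSuccAbove μ 0).symm
  rw [← h.measure_preimage (MeasurableSet.of_discrete).nullMeasurableSet,
    Measure.prod_apply (MeasurableSet.of_discrete)]
  have hc : ∀ (a : α) (t : Fin n → α),
      (MeasurableEquiv.piFinSuccAbove (fun _ => α) 0).symm (a, t) = (Fin.cons a t : Fin (n+1) → α) := by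
    intro a t
    exact Fin.insertNth_zero (α := fun _ => α) a t
  simp only [Fin.succAbove_zero, Set.preimage, hc, Set.mem_ofPred_eq]

/-- reduction mod p -/
def redv (p : ℕ) {n : ℕ} (x : Fin n → ℤ) : Fin n → ZMod p := fun i => (x i : ZMod p)

lemma odl (p : ℕ) [Fact p.Prime] (q : ENNReal) : ∀ (n : ℕ) (ν : Fin n → Measure ℤ)
    [∀ i, IsProbabilityMeasure (ν i)]
    (_ : ∀ i (r : ZMod p), ν i {x : ℤ | (x : ZMod p) = r} ≤ q)
    (V : Submodule (ZMod p) (Fin n → ZMod p)) (r : ℕ) (_ : Module.finrank (ZMod p) V + r ≤ n),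
    Measure.pi ν {x | redv p x ∈ V} ≤ q ^ r := by
  intro n
  induction n with
  | zero =>
    intro ν _ hν V r hr
    have : r = 0 := by omega
    subst this
    simpa using prob_le_one
  | succ n ih =>
    intro ν _ hν V r hr
    rcases r with _ | r
    · simpa using prob_le_one
    set T : (Fin (n+1) → ZMod p) →ₗ[ZMod p] (Fin n → ZMod p) :=
      LinearMap.funLeft (ZMod p) (ZMod p) Fin.succ with hT
    have hrk := LinearMap.finrank_range_add_finrank_ker (T.domRestrict V)
    rw [LinearMap.range_domRestrict] at hrk
    have hmem : ∀ (a : ℤ) (t : Fin n → ℤ), redv p (Fin.cons a t : Fin (n+1) → ℤ) ∈ V →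
        redv p t ∈ V.map T := by
      intro a t h
      refine ⟨_, h, ?_⟩
      ext i
      simp [hT, redv, LinearMap.funLeft]
    have key : ∀ c : ENNReal, (∀ t, ν 0 {a | redv p (Fin.cons a t : Fin (n+1) → ℤ) ∈ V} ≤ c) →
        Measure.pi ν {x | redv p x ∈ V} ≤
          c * (Measure.pi fun i : Fin n => ν i.succ) {t | redv p t ∈ V.map T} := by
      intro c hc
      rw [pi_succ_symm, ← lintegral_indicator_const (MeasurableSet.of_discrete)]
      refine lintegral_mono fun t => ?_
      by_cases ht : redv p t ∈ V.map T
      · rw [Set.indicator_of_mem (by exact ht)]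
        exact hc t
      · rw [Set.indicator_of_notMem (by exact ht)]
        have : {a | (Fin.cons a t : Fin (n+1) → ℤ) ∈ {x | redv p x ∈ V}} = ∅ := by
          ext a; simp; exact fun h => ht (hmem a t h)
        rw [this]; simp
    by_cases he : (Pi.single 0 1 : Fin (n+1) → ZMod p) ∈ V
    · refine (key 1 fun t => prob_le_one).trans ?_
      rw [one_mul]
      refine ih _ (fun i => hν i.succ) _ _ ?_
      have : 0 < Module.finrank (ZMod p) (LinearMap.ker (T.domRestrict V)) := by
        rw [Module.finrank_pos_iff_exists_ne_zero]
        refine ⟨⟨⟨_, he⟩, ?_⟩, ?_⟩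
        · ext i; simp [hT, LinearMap.funLeft]
        · intro h
          have h2 := congrArg (fun z => (z.1.1 : Fin (n+1) → ZMod p) 0) h
          simp at h2
      omega
    · refine (key q fun t => ?_).trans ?_
      · by_cases hne : {a | redv p (Fin.cons a t : Fin (n+1) → ℤ) ∈ V} = ∅
        · rw [hne]; simp
        obtain ⟨b, hb⟩ := Set.nonempty_iff_ne_empty.2 hne
        refine (measure_mono ?_).trans (hν 0 (b : ZMod p))
        intro a ha
        by_contra hab
        apply he
        have hab' : ((a : ZMod p) - b) ≠ 0 := sub_ne_zero.2 hab
        have h2 := V.smul_mem ((a : ZMod p) - b)⁻¹ (V.sub_mem ha hb)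
        convert h2 using 1
        ext i
        refine Fin.cases ?_ (fun i => ?_) i
        · simp [redv, hab']
        · simp [redv]
      · rw [pow_succ']
        gcongr
        exact ih _ (fun i => hν i.succ) _ _ (by omega)

lemma recur (p : ℕ) [Fact p.Prime] {n : ℕ} (q lam : ℝ) (hq : 0 ≤ q) (hl : 0 ≤ lam) (f : ℕ → ℝ) (hf1 : ∀ r, 1 ≤ f r)
    (hf : ∀ r, q ^ (r+1) * f (r+1) + f r ≤ lam * f (r+1)) : ∀ (m : ℕ) (μ : Fin m → Measure (Fin n → ℤ))
    [∀ j, IsProbabilityMeasure (μ j)]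
    (_ : ∀ j (V : Submodule (ZMod p) (Fin n → ZMod p)) (r : ℕ), Module.finrank (ZMod p) V + r ≤ n →
      μ j {x | redv p x ∈ V} ≤ ENNReal.ofReal q ^ r)
    (V : Submodule (ZMod p) (Fin n → ZMod p)) (r : ℕ) (_ : Module.finrank (ZMod p) V + r = n),
    Measure.pi μ {x | V ⊔ Submodule.span (ZMod p) (Set.range fun j => redv p (x j)) ≠ ⊤}
      ≤ ENNReal.ofReal (lam ^ m * f r) := by
  intro m
  induction m with
  | zero =>
    intro μ _ hμ V r hr
    refine prob_le_one.trans ?_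
    simpa using hf1 r
  | succ m ih =>
    intro μ _ hμ V r hr
    rcases r with _ | r
    · have : V = ⊤ := by
        apply Submodule.eq_top_of_finrank_eq
        simpa using hr
      subst this
      simp
    rw [pi_succ]
    set S : Set (Fin n → ℤ) := {x | redv p x ∈ V} with hS
    have hfp : ∀ r, 0 ≤ f r := fun r => zero_le_one.trans (hf1 r)
    have hb : ∀ a : Fin n → ℤ, (Measure.pi fun i : Fin m => μ i.succ)
        {t | (Fin.cons a t : Fin (m+1) → (Fin n → ℤ)) ∈ {x : Fin (m+1) → (Fin n → ℤ) | V ⊔ Submodule.span (ZMod p) (Set.range fun j => redv p (x j)) ≠ ⊤}}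
        ≤ S.indicator (fun _ => ENNReal.ofReal (lam ^ m * f (r+1))) a + ENNReal.ofReal (lam ^ m * f r) := by
      intro a
      have hr' : ∀ t : Fin m → Fin n → ℤ, (Set.range fun j => redv p ((Fin.cons a t : Fin (m+1) → (Fin n → ℤ)) j)) =
          insert (redv p a) (Set.range fun j => redv p (t j)) := by
        intro t
        ext y
        simp [Fin.exists_fin_succ, eq_comm]
      have hset : {t | (Fin.cons a t : Fin (m+1) → (Fin n → ℤ)) ∈ {x : Fin (m+1) → (Fin n → ℤ) | V ⊔ Submodule.span (ZMod p) (Set.range fun j => redv p (x j)) ≠ ⊤}}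
        = {t : Fin m → Fin n → ℤ | (V ⊔ Submodule.span (ZMod p) {redv p a}) ⊔ Submodule.span (ZMod p) (Set.range fun j => redv p (t j)) ≠ ⊤} := by
        ext t
        simp only [Set.mem_ofPred_eq, hr', Submodule.span_insert, sup_assoc]
      rw [hset]
      by_cases ha : a ∈ S
      · rw [Set.indicator_of_mem ha]
        have : V ⊔ Submodule.span (ZMod p) {redv p a} = V := by
          rw [sup_eq_left, Submodule.span_singleton_le_iff_mem]; exact ha
        rw [this]
        exact (ih _ (fun j => hμ j.succ) V (r+1) hr).trans le_self_add
      · refine (ih _ (fun j => hμ j.succ) _ r ?_).trans le_add_self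
        rw [Submodule.finrank_sup_span_singleton ha]; omega
    refine (lintegral_mono hb).trans ?_
    rw [lintegral_add_right _ measurable_const, lintegral_indicator_const (MeasurableSet.of_discrete)]
    simp only [lintegral_const, measure_univ, mul_one]
    have h1 := hμ 0 V (r+1) hr.le
    rw [← ENNReal.ofReal_pow hq] at h1
    calc _ ≤ ENNReal.ofReal (lam ^ m * f (r+1)) * ENNReal.ofReal (q ^ (r+1)) + ENNReal.ofReal (lam ^ m * f r) := by
          gcongr
      _ = ENNReal.ofReal (lam ^ m * (q ^ (r+1) * f (r+1) + f r)) := by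
          have := hfp (r+1)
          have := hfp r
          rw [← ENNReal.ofReal_mul (by positivity), ← ENNReal.ofReal_add (by positivity) (by positivity)]
          congr 1; ring
      _ ≤ _ := by
          apply ENNReal.ofReal_le_ofReal
          rw [pow_succ lam, mul_assoc]
          exact mul_le_mul_of_nonneg_left (hf r) (by positivity)

lemma minor (p : ℕ) [Fact p.Prime] {n m : ℕ} (x : Fin m → Fin n → ℤ)
    (h : Submodule.span (ZMod p) (Set.range fun j => redv p (x j)) = ⊤) :
    ∃ a : Fin n → Fin m, (Matrix.of (fun i => x (a i))).det ≠ 0 := by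
  obtain ⟨κ, a, ha, hs, hli⟩ := exists_linearIndependent' (ZMod p) (fun j => redv p (x j))
  rw [h] at hs
  let b := Module.Basis.mk hli hs.ge
  let e : Fin n ≃ κ := (Pi.basisFun (ZMod p) (Fin n)).indexEquiv b
  refine ⟨a ∘ e, fun h0 => ?_⟩
  have hli2 := hli.comp e e.injective
  have h1 : IsUnit ((Matrix.of (fun i => x (a (e i)))).map (Int.castRingHom (ZMod p))) := by
    rw [← Matrix.linearIndependent_rows_iff_isUnit]
    exact hli2
  rw [Matrix.isUnit_iff_isUnit_det] at h1
  have h2 := (Int.castRingHom (ZMod p)).map_det (Matrix.of (fun i => x (a (e i))))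
  rw [RingHom.mapMatrix_apply] at h2
  rw [← h2] at h1
  have h0' : (Matrix.of (fun i => x (a (e i)))).det = 0 := h0
  rw [h0'] at h1
  simp at h1

lemma numprimes {n k : ℕ} (hk : 1 ≤ k) (M : Matrix (Fin n) (Fin n) ℤ) (hM : ∀ i j, |M i j| ≤ 2 ^ (n^k))
    (h0 : M.det ≠ 0) : M.det.natAbs.primeFactors.card ≤ 2 * n ^ (k+1) := by
  have h1 := Matrix.det_le (abv := AbsoluteValue.abs) hM
  have h2 : M.det.natAbs ≤ n.factorial * (2 ^ (n^k)) ^ n := by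
    zify
    simpa using h1
  have h3 : 2 ^ M.det.natAbs.primeFactors.card ≤ M.det.natAbs := by
    refine le_trans ?_ (Nat.le_of_dvd (Int.natAbs_pos.2 h0) (Nat.prod_primeFactors_dvd _))
    exact Finset.pow_card_le_prod _ _ _ fun p hp => (Nat.prime_of_mem_primeFactors hp).two_le
  have h4 : n.factorial ≤ 2 ^ (n ^ (k+1)) := by
    calc n.factorial ≤ n ^ n := Nat.factorial_le_pow n
      _ ≤ (2 ^ n) ^ n := Nat.pow_le_pow_left Nat.lt_two_pow_self.le _
      _ = 2 ^ (n ^ 2) := by rw [← pow_mul, sq]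
      _ ≤ _ := by
        apply Nat.pow_le_pow_right (by norm_num)
        rcases Nat.eq_zero_or_pos n with rfl | hn
        · simp
        · exact Nat.pow_le_pow_right hn (by omega)
  have h5 : 2 ^ M.det.natAbs.primeFactors.card ≤ 2 ^ (2 * n ^ (k+1)) := by
    refine (h3.trans h2).trans ?_
    calc _ ≤ 2 ^ (n ^ (k+1)) * (2 ^ (n^k)) ^ n := by gcongr
      _ = _ := by rw [← pow_mul, ← pow_succ, ← pow_add, two_mul]
  exact (Nat.pow_le_pow_iff_right (by norm_num)).1 h5

/-- columns `x` generate `ℤ^n` -/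
lemma surj_of {n m : ℕ} (x : Fin m → Fin n → ℤ) (a : Fin n → Fin m)
    (h0 : (Matrix.of (fun i => x (a i))).det ≠ 0)
    (hp : ∀ p ∈ (Matrix.of (fun i => x (a i))).det.natAbs.primeFactors,
      Submodule.span (ZMod p) (Set.range fun j => redv p (x j)) = ⊤) :
    Submodule.span ℤ (Set.range x) = ⊤ := by
  set D := (Matrix.of (fun i => x (a i))).det with hD
  set R := Submodule.span ℤ (Set.range x) with hR
  have hDR : ∀ u : Fin n → ℤ, D • u ∈ R := by
    intro u
    have h1 : Matrix.vecMul (Matrix.vecMul u (Matrix.of (fun i => x (a i))).adjugate) (Matrix.of (fun i => x (a i))) = D • u := by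
      rw [Matrix.vecMul_vecMul, Matrix.adjugate_mul, Matrix.vecMul_smul, Matrix.vecMul_one]
    rw [← h1, Matrix.vecMul_eq_sum]
    refine R.sum_mem fun i _ => R.smul_mem _ (Submodule.subset_span ⟨a i, rfl⟩)
  have hmod : ∀ p ∈ D.natAbs.primeFactors, ∀ v : Fin n → ℤ, ∃ w ∈ R, ∃ u, v = w + (p : ℤ) • u := by
    intro p hpp v
    have hv : redv p v ∈ Submodule.span (ZMod p) (Set.range fun j => redv p (x j)) := by
      rw [hp p hpp]; trivial
    rw [Submodule.mem_span_range_iff_exists_fun] at hv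
    obtain ⟨c, hc⟩ := hv
    choose c' hc' using fun j => ZMod.intCast_surjective (c j)
    have hdiv : ∀ i, (p : ℤ) ∣ (v - ∑ j, c' j • x j) i := by
      intro i
      rw [← ZMod.intCast_zmod_eq_zero_iff_dvd]
      have h1 := congrFun hc i
      simp only [Finset.sum_apply, Pi.smul_apply, smul_eq_mul, redv, ← hc'] at h1
      simp only [Pi.sub_apply, Finset.sum_apply, Pi.smul_apply, smul_eq_mul]
      push_cast
      rw [h1, sub_self]
    choose u hu using hdiv
    refine ⟨∑ j, c' j • x j, R.sum_mem fun j _ => R.smul_mem _ (Submodule.subset_span ⟨j, rfl⟩), u, ?_⟩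
    ext i
    have := hu i
    simp only [Pi.sub_apply] at this
    simp only [Pi.add_apply, Pi.smul_apply, smul_eq_mul]
    linarith
  have hall : ∀ d : ℕ, d ≠ 0 → d ∣ D.natAbs → ∀ v : Fin n → ℤ, ∃ w ∈ R, ∃ u, v = w + (d : ℤ) • u := by
    intro d
    induction d using Nat.recOnMul with
    | zero => intro h; exact absurd rfl h
    | one => intro _ _ v; exact ⟨0, R.zero_mem, v, by simp⟩
    | prime p hpr =>
      intro _ hd
      exact hmod p (Nat.mem_primeFactors.2 ⟨hpr, hd, by simpa using h0⟩)
    | mul a b iha ihb =>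
      intro hab hd v
      obtain ⟨w, hw, u, rfl⟩ := iha (left_ne_zero_of_mul hab) ((dvd_mul_right a b).trans hd) v
      obtain ⟨w', hw', u', rfl⟩ := ihb (right_ne_zero_of_mul hab) ((dvd_mul_left b a).trans hd) u
      refine ⟨w + (a:ℤ) • w', R.add_mem hw (R.smul_mem _ hw'), u', ?_⟩
      push_cast
      rw [smul_add, mul_smul, add_assoc]
  rw [eq_top_iff]
  rintro v -
  obtain ⟨w, hw, u, rfl⟩ := hall D.natAbs (by simpa using h0) dvd_rfl v
  refine R.add_mem hw ?_
  rcases Int.natAbs_eq D with h | h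
  · rw [← h]; exact hDR u
  · have : ((D.natAbs : ℕ) : ℤ) = -D := by omega
    rw [this, neg_smul]
    exact R.neg_mem (hDR u)

lemma params (q δ : ℝ) (hq0 : 0 < q) (hq1 : q < 1) (hδ : 0 < δ) :
    ∃ C > (0:ℝ), ∃ c > (0:ℝ), ∃ lam : ℝ, 0 ≤ lam ∧ ∃ f : ℕ → ℝ, (∀ r, 1 ≤ f r) ∧
      (∀ r, q ^ (r+1) * f (r+1) + f r ≤ lam * f (r+1)) ∧
      ∀ n m : ℕ, (1 + δ) * n - 1 ≤ (m:ℝ) → lam ^ m * f n ≤ C * Real.exp (-c * n) := by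
  obtain ⟨lam, hql, hl1⟩ := exists_between hq1
  have hl0 : 0 < lam := hq0.trans hql
  set s : ℝ := lam ^ (-(1 + δ/2)) with hs
  have hs0 : 0 < s := Real.rpow_pos_of_pos hl0 _
  have hls : 1 < lam * s := by
    have : lam * s = lam ^ (-(δ/2)) := by
      rw [hs]
      nth_rewrite 1 [← Real.rpow_one lam]
      rw [← Real.rpow_add hl0]; congr 1; ring
    rw [this]
    exact Real.one_lt_rpow_of_pos_of_lt_one_of_neg hl0 hl1 (by linarith)
  have hs1 : 1 ≤ s := by nlinarith
  obtain ⟨K, hK⟩ := exists_pow_lt_of_lt_one (show 0 < (lam * s - 1) / s by apply div_pos <;> linarith) hq1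
  rw [lt_div_iff₀ hs0] at hK
  set T : ℝ := max 1 (1 / (lam - q)) with hT
  have hT1 : 1 ≤ T := le_max_left _ _
  have hT2 : 1 ≤ (lam - q) * T := by
    have h1 : 1 / (lam - q) ≤ T := le_max_right _ _
    rwa [div_le_iff₀' (by linarith)] at h1
  have hlog : Real.log lam < 0 := Real.log_neg hl0 hl1
  refine ⟨T ^ K * lam⁻¹, by positivity, -(δ/2) * Real.log lam, by nlinarith, lam, hl0.le,
    fun r => T ^ (min r K) * s ^ r, ?_, ?_, ?_⟩
  · intro r
    exact one_le_mul_of_one_le_of_one_le (one_le_pow₀ hT1) (one_le_pow₀ hs1)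
  · intro r
    dsimp only
    have hF : 0 < T ^ (min r K) * s ^ r := by positivity
    rcases le_or_gt (r+1) K with h | h
    · have h1 : min (r+1) K = min r K + 1 := by omega
      have h2 : T ^ (min (r+1) K) * s ^ (r+1) = (T ^ (min r K) * s ^ r) * (T * s) := by
        rw [h1]; ring
      rw [h2]
      set F := T ^ (min r K) * s ^ r
      have h3 : q ^ (r+1) ≤ q := pow_le_of_le_one hq0.le hq1.le (by omega)
      have h4 : 1 ≤ (lam - q ^ (r+1)) * (T * s) := by
        calc (1:ℝ) ≤ (lam - q) * T := hT2
          _ ≤ (lam - q) * T * s := le_mul_of_one_le_right (by linarith) hs1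
          _ = (lam - q) * (T * s) := by ring
          _ ≤ _ := by gcongr
      nlinarith
    · have h1 : min (r+1) K = min r K := by omega
      have h2 : T ^ (min (r+1) K) * s ^ (r+1) = (T ^ (min r K) * s ^ r) * s := by
        rw [h1]; ring
      rw [h2]
      set F := T ^ (min r K) * s ^ r
      have h3 : q ^ (r+1) ≤ q ^ K := pow_le_pow_of_le_one hq0.le hq1.le (by omega)
      have h4 : 1 ≤ (lam - q ^ (r+1)) * s := by nlinarith
      nlinarith
  · intro n m hnm
    dsimp only
    have h1 : T ^ (min n K) ≤ T ^ K := pow_le_pow_right₀ hT1 (min_le_right _ _)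
    have h2 : lam ^ m * s ^ n ≤ lam⁻¹ * Real.exp (-(-(δ/2) * Real.log lam) * n) := by
      have e1 : lam ^ m = lam ^ (m:ℝ) := (Real.rpow_natCast _ _).symm
      have e2 : s ^ n = lam ^ (-(1 + δ/2) * n) := by
        rw [hs, ← Real.rpow_natCast, ← Real.rpow_mul hl0.le]
      have e3 : Real.exp (-(-(δ/2) * Real.log lam) * n) = lam ^ (δ/2 * n) := by
        rw [Real.rpow_def_of_pos hl0]; congr 1; ring
      rw [e1, e2, e3, ← Real.rpow_neg_one lam, ← Real.rpow_add hl0, ← Real.rpow_add hl0]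
      apply Real.rpow_le_rpow_of_exponent_ge hl0 hl1.le
      linarith
    calc lam ^ m * (T ^ (min n K) * s ^ n) = T ^ (min n K) * (lam ^ m * s ^ n) := by ring
      _ ≤ T ^ K * (lam⁻¹ * Real.exp (-(-(δ/2) * Real.log lam) * n)) := by gcongr
      _ = _ := by ring

lemma colbound (ε δ : ℝ) (hε : 0 < ε) (hδ : 0 < δ) :
    ∃ C > (0:ℝ), ∃ c > (0:ℝ), ∀ p : ℕ, p.Prime → ∀ n m : ℕ, (1 + δ) * n - 1 ≤ (m:ℝ) →
      ∀ ν : Fin n → Fin m → Measure ℤ, (∀ i j, IsProbabilityMeasure (ν i j)) →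
        (∀ i j, IsBalanced ε (ν i j)) →
        (Measure.pi fun j => Measure.pi fun i => ν i j)
          {x : Fin m → Fin n → ℤ | Submodule.span (ZMod p) (Set.range fun j => redv p (x j)) ≠ ⊤}
          ≤ ENNReal.ofReal (C * Real.exp (-c * n)) := by
  set q : ℝ := max (1 - ε) (1/2) with hq
  have hq0 : 0 < q := lt_of_lt_of_le (by norm_num) (le_max_right _ _)
  have hq1 : q < 1 := max_lt (by linarith) (by norm_num)
  obtain ⟨C, hC, c, hc, lam, hl, f, hf1, hf, hfin⟩ := params q δ hq0 hq1 hδ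
  refine ⟨C, hC, c, hc, fun p hp n m hnm ν hν hb => ?_⟩
  have : Fact p.Prime := ⟨hp⟩
  have h := recur p q lam hq0.le hl f hf1 hf m (fun j => Measure.pi fun i => ν i j)
    (fun j V r hr => odl p _ n (fun i => ν i j) (fun i r => (hb i j p hp r).trans
      (ENNReal.ofReal_le_ofReal (le_max_left _ _))) V r hr) ⊥ n (by simp)
  simp only [bot_sup_eq] at h
  exact h.trans (ENNReal.ofReal_le_ofReal (hfin n m hnm))

lemma pi_append {α : Type} [MeasurableSpace α] [Countable α] [MeasurableSingletonClass α] {m₁ m₂ : ℕ}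
    (μ : Fin (m₁+m₂) → Measure α) [∀ i, IsProbabilityMeasure (μ i)] (S : Set (Fin (m₁+m₂) → α)) :
    Measure.pi μ S = ∫⁻ b, (Measure.pi fun i : Fin m₂ => μ (Fin.natAdd m₁ i))
      {c | Fin.append b c ∈ S} ∂(Measure.pi fun i : Fin m₁ => μ (Fin.castAdd m₂ i)) := by
  have h : Measure.pi μ = ((Measure.pi fun i : Fin m₁ => μ (Fin.castAdd m₂ i)).prod
      (Measure.pi fun i : Fin m₂ => μ (Fin.natAdd m₁ i))).map (fun z => Fin.append z.1 z.2) := by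
    refine Measure.ext_of_singleton fun a => ?_
    rw [Measure.map_apply (measurable_of_countable _) (MeasurableSet.of_discrete)]
    have : ((fun z : (Fin m₁ → α) × (Fin m₂ → α) => Fin.append z.1 z.2) ⁻¹' {a}) =
        {fun i => a (Fin.castAdd m₂ i)} ×ˢ {fun i => a (Fin.natAdd m₁ i)} := by
      ext ⟨u, v⟩
      simp only [Set.mem_preimage, Set.mem_singleton_iff, Set.mem_prod]
      constructor
      · rintro rfl
        constructor <;> ext i <;> simp
      · rintro ⟨rfl, rfl⟩
        exact Fin.append_castAdd_natAdd
    rw [this, Measure.prod_prod, Measure.pi_singleton, Measure.pi_singleton, Measure.pi_singleton,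
      Fin.prod_univ_add]
  rw [h, Measure.map_apply (measurable_of_countable _) (MeasurableSet.of_discrete),
    Measure.prod_apply (MeasurableSet.of_discrete)]
  rfl

lemma law_swap {n m : ℕ} (ν : Fin n → Fin m → Measure ℤ) [∀ i j, IsProbabilityMeasure (ν i j)] :
    matrixLaw ν = (Measure.pi fun j => Measure.pi fun i => ν i j).map (fun x i j => x j i) := by
  refine Measure.ext_of_singleton fun a => ?_
  rw [Measure.map_apply (measurable_of_countable _) (MeasurableSet.of_discrete)]
  have : ((fun (x : Fin m → Fin n → ℤ) i j => x j i) ⁻¹' {a}) = {fun j i => a i j} := by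
    ext x
    simp only [Set.mem_preimage, Set.mem_singleton_iff]
    constructor
    · rintro rfl; rfl
    · rintro rfl; rfl
  rw [this, matrixLaw]
  simp only [Measure.pi_singleton]
  exact Finset.prod_comm

lemma surj_iff {n m : ℕ} (x : Fin m → Fin n → ℤ) :
    Function.Surjective (Matrix.of (fun i j => x j i)).mulVecLin ↔
      Submodule.span ℤ (Set.range x) = ⊤ := by
  rw [← LinearMap.range_eq_top, Matrix.range_mulVecLin]
  rfl

lemma colmain (ε δ : ℝ) (hε : 0 < ε) (hδ : 0 < δ) (k : ℕ) (hk : 1 ≤ k) :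
    ∃ c > (0 : ℝ), ∃ C > (0 : ℝ), ∀ n m : ℕ, (2 + δ) * n ≤ (m : ℝ) →
      ∀ ν : Fin n → Fin m → Measure ℤ,
        (∀ i j, IsProbabilityMeasure (ν i j)) →
        (∀ i j, IsBalanced ε (ν i j)) →
        (∀ i j, ν i j {x : ℤ | (2 : ℤ) ^ (n ^ k) < |x|} = 0) →
        (Measure.pi fun j => Measure.pi fun i => ν i j)
          {x : Fin m → Fin n → ℤ | Submodule.span ℤ (Set.range x) ≠ ⊤}
          ≤ ENNReal.ofReal (C * Real.exp (-c * n)) := by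
  obtain ⟨C, hC, c, hc, hcol⟩ := colbound ε (δ/2) hε (by positivity)
  set P : ℝ := (k+1).factorial * (2/c) ^ (k+1) with hP
  have hP0 : 0 < P := by positivity
  refine ⟨c/2, by positivity, C + 2 * P * C, by positivity, fun n m hnm ν hν hb hbd => ?_⟩
  obtain ⟨m₁, m₂, rfl, h1, h2⟩ : ∃ m₁ m₂, m = m₁ + m₂ ∧ (1 + δ/2) * n - 1 ≤ (m₁:ℝ) ∧
      (1 + δ/2) * n - 1 ≤ (m₂:ℝ) := by
    refine ⟨m/2, m - m/2, by omega, ?_, ?_⟩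
    · have : (m:ℝ) ≤ 2 * ((m/2 : ℕ):ℝ) + 1 := by exact_mod_cast (by omega : m ≤ 2 * (m/2) + 1)
      linarith
    · have : (m:ℝ) ≤ 2 * ((m - m/2 : ℕ):ℝ) + 1 := by exact_mod_cast (by omega : m ≤ 2 * (m - m/2) + 1)
      linarith
  rw [pi_append]
  set μ₁ := Measure.pi fun j : Fin m₁ => Measure.pi fun i => ν i (Fin.castAdd m₂ j) with hμ₁
  set μ₂ := Measure.pi fun j : Fin m₂ => Measure.pi fun i => ν i (Fin.natAdd m₁ j) with hμ₂
  set E1 : Set (Fin m₁ → Fin n → ℤ) :=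
    {x | Submodule.span (ZMod 2) (Set.range fun j => redv 2 (x j)) ≠ ⊤} with hE1
  set E2 : Set (Fin m₁ → Fin n → ℤ) := ⋃ j, ⋃ i, {x | (2 : ℤ) ^ (n ^ k) < |x j i|} with hE2
  have hP1 : μ₁ E1 ≤ ENNReal.ofReal (C * Real.exp (-c * n)) :=
    hcol 2 Nat.prime_two n m₁ h1 (fun i j => ν i (Fin.castAdd m₂ j)) (fun i j => hν _ _) (fun i j => hb _ _)
  have hP2 : μ₁ E2 = 0 := by
    rw [hE2]
    simp only [measure_iUnion_null_iff]
    intro j i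
    have e1 := (measurePreserving_eval (fun j : Fin m₁ => Measure.pi fun i => ν i (Fin.castAdd m₂ j)) j)
    have e2 := (measurePreserving_eval (fun i => ν i (Fin.castAdd m₂ j)) i).comp e1
    have e3 := e2.measure_preimage (s := {x : ℤ | (2 : ℤ) ^ (n ^ k) < |x|}) (MeasurableSet.of_discrete).nullMeasurableSet
    rw [hbd] at e3
    exact e3
  set B : ENNReal := ENNReal.ofReal ((2 * n ^ (k+1) : ℕ) * (C * Real.exp (-c * n))) with hB
  have hg : ∀ b, μ₂ {c | Fin.append b c ∈ {x : Fin (m₁+m₂) → Fin n → ℤ | Submodule.span ℤ (Set.range x) ≠ ⊤}} ≤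
      (E1 ∪ E2).indicator (fun _ => 1) b + B := by
    intro b
    by_cases hbE : b ∈ E1 ∪ E2
    · rw [Set.indicator_of_mem hbE]
      exact prob_le_one.trans le_self_add
    · refine le_trans ?_ le_add_self
      rw [Set.mem_union, not_or] at hbE
      obtain ⟨hb1, hb2⟩ := hbE
      have hb1' : Submodule.span (ZMod 2) (Set.range fun j => redv 2 (b j)) = ⊤ := by
        by_contra h; exact hb1 h
      have hb2' : ∀ j i, |b j i| ≤ 2 ^ (n^k) := by
        intro j i
        by_contra h
        apply hb2
        simp only [hE2, Set.mem_iUnion]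
        exact ⟨j, i, lt_of_not_ge h⟩
      have : Fact (Nat.Prime 2) := ⟨Nat.prime_two⟩
      obtain ⟨a, ha⟩ := minor 2 b hb1'
      have hcard := numprimes hk _ (fun i j => hb2' (a i) j) ha
      set D := (Matrix.of (fun i => b (a i))).det with hD
      have hsub : {c | Fin.append b c ∈ {x : Fin (m₁+m₂) → Fin n → ℤ | Submodule.span ℤ (Set.range x) ≠ ⊤}} ⊆
          ⋃ p ∈ D.natAbs.primeFactors, {x : Fin m₂ → Fin n → ℤ |
            Submodule.span (ZMod p) (Set.range fun j => redv p (x j)) ≠ ⊤} := by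
        intro x hx
        by_contra hcon
        simp only [Set.mem_iUnion, not_exists] at hcon
        apply hx
        have hDa : (Matrix.of (fun i => (Fin.append b x) (Fin.castAdd m₂ (a i)))).det = D := by
          simp [hD]
        refine surj_of (Fin.append b x) (fun i => Fin.castAdd m₂ (a i)) (by rw [hDa]; exact ha) ?_
        rw [hDa]
        intro p hp
        have h3 : Submodule.span (ZMod p) (Set.range fun j => redv p (x j)) = ⊤ := by
          by_contra h; exact hcon p hp h
        rw [eq_top_iff, ← h3]
        apply Submodule.span_mono
        rintro _ ⟨j, rfl⟩
        exact ⟨Fin.natAdd m₁ j, by simp⟩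
      refine (measure_mono hsub).trans ((measure_biUnion_finset_le _ _).trans ?_)
      refine (Finset.sum_le_card_nsmul _ _ (ENNReal.ofReal (C * Real.exp (-c * n))) ?_).trans ?_
      · intro p hp
        exact hcol p (Nat.prime_of_mem_primeFactors hp) n m₂ h2 (fun i j => ν i (Fin.natAdd m₁ j))
          (fun i j => hν _ _) (fun i j => hb _ _)
      · rw [nsmul_eq_mul, hB, ENNReal.ofReal_mul (p := ((2 * n ^ (k+1) : ℕ) : ℝ)) (by positivity),
          ENNReal.ofReal_natCast]
        gcongr
        exact hcard
  refine (lintegral_mono hg).trans ?_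
  rw [lintegral_add_right _ measurable_const, lintegral_indicator_const (MeasurableSet.of_discrete)]
  simp only [lintegral_const, measure_univ, mul_one, one_mul]
  have hU : μ₁ (E1 ∪ E2) ≤ ENNReal.ofReal (C * Real.exp (-c * n)) := by
    refine (measure_union_le _ _).trans ?_
    rw [hP2, add_zero]; exact hP1
  refine (add_le_add_left hU B).trans ?_
  rw [hB, ← ENNReal.ofReal_add (by positivity) (by positivity)]
  apply ENNReal.ofReal_le_ofReal
  have hx : (n:ℝ) ^ (k+1) ≤ P * Real.exp (c/2 * n) := by
    have h := Real.pow_div_factorial_le_exp (c/2 * n) (by positivity) (k+1)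
    rw [div_le_iff₀ (by positivity)] at h
    have e : (n:ℝ) ^ (k+1) = (2/c) ^ (k+1) * (c/2 * n) ^ (k+1) := by
      rw [← mul_pow]; congr 1; field_simp
    rw [e, hP]
    calc _ ≤ (2/c) ^ (k+1) * (Real.exp (c/2 * n) * (k+1).factorial) := by gcongr
      _ = _ := by ring
  have hexp : Real.exp (c/2 * n) * Real.exp (-c * n) = Real.exp (-(c/2) * n) := by
    rw [← Real.exp_add]; congr 1; ring
  have hexp2 : Real.exp (-c * n) ≤ Real.exp (-(c/2) * n) := by
    apply Real.exp_le_exp.2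
    have : 0 ≤ c * n := by positivity
    linarith
  push_cast
  calc C * Real.exp (-c * n) + 2 * (n:ℝ) ^ (k+1) * (C * Real.exp (-c * n))
      ≤ C * Real.exp (-(c/2) * n) + 2 * (P * Real.exp (c/2 * n)) * (C * Real.exp (-c * n)) := by gcongr
    _ = C * Real.exp (-(c/2) * n) + 2 * P * C * (Real.exp (c/2 * n) * Real.exp (-c * n)) := by ring
    _ = _ := by rw [hexp]; ring

theorem stmt0 (ε δ : ℝ) (hε : 0 < ε) (hδ : 0 < δ) (k : ℕ) (hk : 1 ≤ k) :
    ∃ c > (0 : ℝ), ∃ C > (0 : ℝ), ∃ N : ℕ, ∀ n ≥ N, ∀ m : ℕ, (2 + δ) * n ≤ (m : ℝ) →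
      ∀ ν : Fin n → Fin m → Measure ℤ,
        (∀ i j, IsProbabilityMeasure (ν i j)) →
        (∀ i j, IsBalanced ε (ν i j)) →
        (∀ i j, ν i j {x : ℤ | (2 : ℤ) ^ (n ^ k) < |x|} = 0) →
        1 - C * Real.exp (-c * n) ≤
          ((matrixLaw ν) {A | Function.Surjective (Matrix.of A).mulVecLin}).toReal := by
  obtain ⟨c, hc, C, hC, h⟩ := colmain ε δ hε hδ k hk
  refine ⟨c, hc, C, hC, 0, fun n _ m hm ν hν hb hbd => ?_⟩
  have h1 := h n m hm ν hν hb hbd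
  rw [law_swap, Measure.map_apply (measurable_of_countable _) (MeasurableSet.of_discrete)]
  have hset : ((fun (x : Fin m → Fin n → ℤ) i j => x j i) ⁻¹'
      {A | Function.Surjective (Matrix.of A).mulVecLin}) =
      {x : Fin m → Fin n → ℤ | Submodule.span ℤ (Set.range x) ≠ ⊤}ᶜ := by
    ext x
    have := surj_iff x
    simp only [Set.mem_preimage, Set.mem_compl_iff, Set.mem_ofPred_eq, not_not]
    exact this
  rw [hset]
  have h2 := probReal_compl_eq_one_sub
    (μ := Measure.pi fun j => Measure.pi fun i => ν i j)
    (s := {x : Fin m → Fin n → ℤ | Submodule.span ℤ (Set.range x) ≠ ⊤}) (MeasurableSet.of_discrete)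
  rw [measureReal_def] at h2
  rw [h2]
  have h3 := ENNReal.toReal_le_of_le_ofReal (by positivity) h1
  rw [measureReal_def]
  linarith
end

section
/- Fix ε > 0 and an integer u ≥ 1. For each n, let A_n be a random n×(n+u) integer matrix that is ε-balanced (with laws that may depend arbitrarily on n). Then limsup_{n→∞} P(A_n is surjective) ≤ ∏_{p prime} ∏_{k=1}^{∞} (1 − p^(−k−u)), which equals ∏_{k=u+1}^{∞} ζ(k)^(−1) where ζ is the Riemann zeta function. -/
open MeasureTheory Filter

lemma term_le (u : ℕ) (hu : 1 ≤ u) (p : Nat.Primes) (k : ℕ) :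
    ((p : ℕ) : ℝ)⁻¹ ^ (k + 1 + u) ≤ ((p : ℕ) : ℝ)⁻¹ ^ 2 * (1 / 2 : ℝ) ^ k := by
  have h2 : (2 : ℝ) ≤ ((p : ℕ) : ℝ) := by exact_mod_cast p.2.two_le
  have h0 : 0 ≤ ((p : ℕ) : ℝ)⁻¹ := by positivity
  have h1 : ((p : ℕ) : ℝ)⁻¹ ≤ 1 / 2 := by
    rw [one_div]; exact inv_anti₀ (by norm_num) h2
  have h3 : ((p : ℕ) : ℝ)⁻¹ ≤ 1 := by linarith
  calc ((p : ℕ) : ℝ)⁻¹ ^ (k + 1 + u) ≤ ((p : ℕ) : ℝ)⁻¹ ^ (2 + k) :=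
        pow_le_pow_of_le_one h0 h3 (by omega)
    _ = ((p : ℕ) : ℝ)⁻¹ ^ 2 * ((p : ℕ) : ℝ)⁻¹ ^ k := pow_add _ _ _
    _ ≤ _ := by gcongr

lemma summable_pair (u : ℕ) (hu : 1 ≤ u) :
    Summable (fun x : Nat.Primes × ℕ => ((x.1 : ℕ) : ℝ)⁻¹ ^ (x.2 + 1 + u)) := by
  have h1 : Summable (fun p : Nat.Primes => ((p : ℕ) : ℝ)⁻¹ ^ 2) := by
    have := (Nat.Primes.summable_rpow (r := -2)).2 (by norm_num)
    refine this.congr fun p => ?_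
    rw [Real.rpow_neg (by positivity), inv_pow]
    norm_num
  have h2 : Summable (fun k : ℕ => (1 / 2 : ℝ) ^ k) := summable_geometric_two
  have h3 := h1.mul_of_nonneg h2 (fun p => by positivity) (fun p => by positivity)
  exact Summable.of_nonneg_of_le (fun x => by positivity) (fun x => term_le u hu x.1 x.2) h3

lemma mult_pair (u : ℕ) (hu : 1 ≤ u) :
    Multipliable (fun x : Nat.Primes × ℕ => (1 - ((x.1 : ℕ) : ℝ)⁻¹ ^ (x.2 + 1 + u))) := by
  have := Real.multipliable_one_add_of_summable (summable_pair u hu).neg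
  simpa [sub_eq_add_neg] using this

lemma mult_k (u : ℕ) (hu : 1 ≤ u) (p : Nat.Primes) :
    Multipliable (fun k : ℕ => (1 - ((p : ℕ) : ℝ)⁻¹ ^ (k + 1 + u))) := by
  have := Real.multipliable_one_add_of_summable ((summable_pair u hu).prod_factor p).neg
  simpa [sub_eq_add_neg] using this

lemma mult_p (u : ℕ) (hu : 1 ≤ u) (k : ℕ) :
    Multipliable (fun p : Nat.Primes => (1 - ((p : ℕ) : ℝ)⁻¹ ^ (k + 1 + u))) := by
  have := Real.multipliable_one_add_of_summable
    ((summable_pair u hu).prod_symm.prod_factor k).neg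
  simpa [sub_eq_add_neg] using this

lemma zeta_part (u : ℕ) (hu : 1 ≤ u) :
    ((∏' p : Nat.Primes, ∏' k : ℕ, (1 - ((p : ℕ) : ℝ)⁻¹ ^ (k + 1 + u)) : ℝ) : ℂ) =
      ∏' k : ℕ, (riemannZeta ((k : ℂ) + u + 1))⁻¹ := by
  rw [← Multipliable.tprod_comm' (f := fun (p : Nat.Primes) (k : ℕ) =>
    (1 - ((p : ℕ) : ℝ)⁻¹ ^ (k + 1 + u))) (mult_pair u hu) (mult_k u hu) (mult_p u hu)]
  have e : ∀ {β : Type} (f : β → ℝ), ((∏' b, f b : ℝ) : ℂ) = ∏' b, (f b : ℂ) := fun f =>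
    Function.LeftInverse.map_tprod f (g := Complex.ofRealHom) Complex.continuous_ofReal
      (g' := Complex.re) Complex.continuous_re (fun x => Complex.ofReal_re x)
  rw [e]
  congr 1
  funext k
  rw [e]
  have hs : 1 < ((k : ℂ) + u + 1).re := by
    have h1 : (1 : ℝ) ≤ u := by exact_mod_cast hu
    have h2 : (0 : ℝ) ≤ k := by positivity
    simp
    linarith
  have := (riemannZeta_eulerProduct_hasProd hs).inv₀ (riemannZeta_ne_zero_of_one_lt_re hs)
  rw [← this.tprod_eq]
  congr 1
  funext p
  rw [inv_inv]
  have h3 : ((k : ℂ) + u + 1) = ((k + 1 + u : ℕ) : ℂ) := by push_cast; ring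
  rw [h3, Complex.cpow_neg, Complex.cpow_natCast]
  push_cast
  rw [inv_pow]

/-- Balancedness of a weight function on `ZMod N`. -/
def WBal {N : ℕ} [NeZero N] (q : ℝ) (a : ZMod N → ℝ) : Prop :=
  (∀ x, 0 ≤ a x) ∧ (∑ x, a x = 1) ∧
    ∀ z : ZMod N, z ≠ 0 → ∀ t : ZMod N, (∑ x, if x * z = t then a x else 0) ≤ q

lemma kappa_exists (N : ℕ) [NeZero N] :
    ∃ κ : ℝ, κ < 1 ∧ 0 ≤ κ ∧ ∀ t : ZMod N, t ≠ 0 → (ZMod.stdAddChar t).re ≤ κ := by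
  classical
  let S : Finset ℝ := insert 0 ((Finset.univ.filter (fun t : ZMod N => t ≠ 0)).image
    (fun t => (ZMod.stdAddChar t).re))
  have hS : S.Nonempty := ⟨0, Finset.mem_insert_self _ _⟩
  refine ⟨S.max' hS, ?_, S.le_max' 0 (Finset.mem_insert_self _ _), ?_⟩
  · rw [Finset.max'_lt_iff]
    intro y hy
    rw [Finset.mem_insert, Finset.mem_image] at hy
    rcases hy with rfl | ⟨t, ht, rfl⟩
    · norm_num
    · have ht0 : t ≠ 0 := (Finset.mem_filter.1 ht).2
      have hn : ‖ZMod.stdAddChar t‖ = 1 := AddChar.norm_apply _ _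
      have hne : ZMod.stdAddChar t ≠ 1 := by
        intro h
        apply ht0
        apply ZMod.injective_stdAddChar
        rw [h, AddChar.map_zero_eq_one]
      have hle : (ZMod.stdAddChar t).re ≤ 1 := hn ▸ Complex.re_le_norm _
      refine lt_of_le_of_ne hle fun h => hne ?_
      have h2 := Complex.sq_norm (ZMod.stdAddChar t)
      rw [hn, Complex.normSq_apply, h] at h2
      apply Complex.ext
      · simpa using h
      · have : (ZMod.stdAddChar t).im * (ZMod.stdAddChar t).im = 0 := by linarith
        simpa using this
  · intro t ht
    apply S.le_max'
    apply Finset.mem_insert_of_mem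
    exact Finset.mem_image_of_mem _ (by simp [ht])

lemma rho_exists (N : ℕ) [NeZero N] (q : ℝ) (hq : q < 1) :
    ∃ ρ : ℝ, 0 ≤ ρ ∧ ρ < 1 ∧ ∀ a : ZMod N → ℝ, WBal q a → ∀ z : ZMod N, z ≠ 0 →
      ‖∑ x, (a x : ℂ) * ZMod.stdAddChar (x * z)‖ ≤ ρ := by
  classical
  obtain ⟨κ, hκ1, hκ0, hκ⟩ := kappa_exists N
  refine ⟨Real.sqrt (1 - (1 - κ) * (1 - q)), Real.sqrt_nonneg _, ?_, ?_⟩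
  · rw [Real.sqrt_lt' one_pos]
    nlinarith
  rintro a ⟨ha0, ha1, hab⟩ z hz
  apply Real.le_sqrt_of_sq_le
  set c := ∑ x, (a x : ℂ) * ZMod.stdAddChar (x * z) with hc
  have h1 : ((‖c‖ ^ 2 : ℝ) : ℂ) = ∑ x, ∑ y, (a x * a y : ℂ) * ZMod.stdAddChar (x * z - y * z) := by
    push_cast
    rw [← Complex.mul_conj', hc, map_sum, Finset.sum_mul_sum]
    refine Finset.sum_congr rfl fun x _ => Finset.sum_congr rfl fun y _ => ?_
    rw [(starRingEnd ℂ).map_mul, Complex.conj_ofReal, sub_eq_add_neg, AddChar.map_add_eq_mul,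
      AddChar.map_neg_eq_conj]
    ring
  have h2 : ‖c‖ ^ 2 = ∑ x, ∑ y, a x * a y * (ZMod.stdAddChar (x * z - y * z)).re := by
    have := congrArg Complex.re h1
    rw [Complex.ofReal_re] at this
    rw [this, Complex.re_sum]
    refine Finset.sum_congr rfl fun x _ => ?_
    rw [Complex.re_sum]
    refine Finset.sum_congr rfl fun y _ => ?_
    rw [← Complex.ofReal_mul, Complex.re_ofReal_mul]
  rw [h2]
  have h3 : ∀ x y, a x * a y * (ZMod.stdAddChar (x * z - y * z)).re ≤
      a y * (κ * a x + (1 - κ) * (if x * z = y * z then a x else 0)) := by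
    intro x y
    split_ifs with h
    · rw [h, sub_self, AddChar.map_zero_eq_one, Complex.one_re]
      apply le_of_eq
      ring
    · have := hκ (x * z - y * z) (sub_ne_zero.2 h)
      have := mul_le_mul_of_nonneg_left this (mul_nonneg (ha0 x) (ha0 y))
      linarith
  calc ∑ x, ∑ y, a x * a y * (ZMod.stdAddChar (x * z - y * z)).re
      ≤ ∑ x, ∑ y, a y * (κ * a x + (1 - κ) * (if x * z = y * z then a x else 0)) :=
        Finset.sum_le_sum fun x _ => Finset.sum_le_sum fun y _ => h3 x y
    _ = ∑ y, a y * (κ * 1 + (1 - κ) * ∑ x, if x * z = y * z then a x else 0) := by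
        rw [Finset.sum_comm]
        refine Finset.sum_congr rfl fun y _ => ?_
        rw [← Finset.mul_sum, Finset.sum_add_distrib, ← Finset.mul_sum, ← Finset.mul_sum, ha1]
    _ ≤ ∑ y, a y * (κ * 1 + (1 - κ) * q) := by
        refine Finset.sum_le_sum fun y _ => mul_le_mul_of_nonneg_left ?_ (ha0 y)
        have := hab z hz (y * z)
        have := mul_le_mul_of_nonneg_left this (sub_nonneg.2 hκ1.le)
        linarith
    _ = _ := by rw [← Finset.sum_mul, ha1]; ring

/-- Weight of a row. -/
def rowW {N m : ℕ} (a : Fin m → ZMod N → ℝ) (r : Fin m → ZMod N) : ℝ := ∏ j, a j (r j)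

lemma rowW_nonneg {N m : ℕ} [NeZero N] {q : ℝ} {a : Fin m → ZMod N → ℝ} (ha : ∀ j, WBal q (a j))
    (r : Fin m → ZMod N) : 0 ≤ rowW a r := Finset.prod_nonneg fun j _ => (ha j).1 _

lemma rowW_sum {N m : ℕ} [NeZero N] {q : ℝ} {a : Fin m → ZMod N → ℝ} (ha : ∀ j, WBal q (a j)) :
    ∑ r, rowW a r = 1 := by
  classical
  unfold rowW
  rw [← Fintype.prod_sum]
  exact Finset.prod_eq_one fun j _ => (ha j).2.1

lemma row_char {N m : ℕ} [NeZero N] (a : Fin m → ZMod N → ℝ) (w : Fin m → ZMod N) :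
    ∑ r, (rowW a r : ℂ) * ZMod.stdAddChar (r ⬝ᵥ w) =
      ∏ j, ∑ x, (a j x : ℂ) * ZMod.stdAddChar (x * w j) := by
  classical
  rw [Fintype.prod_sum]
  refine Finset.sum_congr rfl fun r _ => ?_
  rw [Finset.prod_mul_distrib, rowW, dotProduct, Complex.ofReal_prod]
  congr 1
  have h : ∀ S : Finset (Fin m), (ZMod.stdAddChar (∑ i ∈ S, r i * w i) : ℂ) =
      ∏ i ∈ S, ZMod.stdAddChar (r i * w i) := by
    intro S
    induction S using Finset.induction_on with
    | empty => simp
    | insert i S hi ih => rw [Finset.sum_insert hi, Finset.prod_insert hi,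
        AddChar.map_add_eq_mul, ih]
  exact h _

lemma row_char_bound {N m : ℕ} [NeZero N] {q ρ : ℝ} (hρ0 : 0 ≤ ρ) (hρ1 : ρ < 1)
    (hρ : ∀ a : ZMod N → ℝ, WBal q a → ∀ z : ZMod N, z ≠ 0 →
      ‖∑ x, (a x : ℂ) * ZMod.stdAddChar (x * z)‖ ≤ ρ)
    (a : Fin m → ZMod N → ℝ) (ha : ∀ j, WBal q (a j)) (w : Fin m → ZMod N) (s : ℕ)
    (hw : s ≤ (Finset.univ.filter (fun j => w j ≠ 0)).card) :
    ‖∑ r, (rowW a r : ℂ) * ZMod.stdAddChar (r ⬝ᵥ w)‖ ≤ ρ ^ s := by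
  classical
  rw [row_char, norm_prod]
  have h1 : ∀ j, ‖∑ x, (a j x : ℂ) * ZMod.stdAddChar (x * w j)‖ ≤ if w j ≠ 0 then ρ else 1 := by
    intro j
    split_ifs with h
    · exact hρ _ (ha j) _ h
    · refine (norm_sum_le _ _).trans ?_
      rw [← (ha j).2.1]
      refine Finset.sum_le_sum fun x _ => ?_
      rw [norm_mul, AddChar.norm_apply, mul_one, Complex.norm_real, Real.norm_of_nonneg ((ha j).1 x)]
  calc _ ≤ ∏ j, if w j ≠ 0 then ρ else 1 :=
        Finset.prod_le_prod (fun _ _ => norm_nonneg _) fun j _ => h1 j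
    _ = ρ ^ (Finset.univ.filter (fun j => w j ≠ 0)).card := by
        rw [Finset.prod_ite]; simp
    _ ≤ ρ ^ s := pow_le_pow_of_le_one hρ0 hρ1.le hw

/-- Probability that a random row is orthogonal to a fixed nonzero vector. -/
lemma row_orth {N m : ℕ} [NeZero N] {q : ℝ}
    (a : Fin m → ZMod N → ℝ) (ha : ∀ j, WBal q (a j)) (w : Fin m → ZMod N) (hw : w ≠ 0) :
    (∑ r, if r ⬝ᵥ w = 0 then rowW a r else 0) ≤ q := by
  classical
  obtain ⟨j0, hj0⟩ := Function.ne_iff.1 hw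
  cases m with
  | zero => exact j0.elim0
  | succ m =>
    rw [← (Fin.insertNthEquiv (fun _ => ZMod N) j0).sum_comp, Fintype.sum_prod_type_right]
    have h1 : ∀ r : Fin m → ZMod N,
        (∑ x : ZMod N, if (Fin.insertNthEquiv (fun _ => ZMod N) j0 (x, r)) ⬝ᵥ w = 0 then
          rowW a (Fin.insertNthEquiv (fun _ => ZMod N) j0 (x, r)) else 0) ≤
        rowW (fun j => a (j0.succAbove j)) r * q := by
      intro r
      have := (ha j0).2.2 (w j0) hj0 (-∑ j, r j * w (j0.succAbove j))
      refine le_trans (le_of_eq ?_) (mul_le_mul_of_nonneg_left this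
        (rowW_nonneg (fun j => ha (j0.succAbove j)) r))
      rw [Finset.mul_sum]
      refine Finset.sum_congr rfl fun x _ => ?_
      have e1 : (Fin.insertNthEquiv (fun _ => ZMod N) j0 (x, r)) ⬝ᵥ w =
          x * w j0 + ∑ j, r j * w (j0.succAbove j) := by
        rw [dotProduct, Fin.sum_univ_succAbove _ j0]
        simp
      have e2 : rowW a (Fin.insertNthEquiv (fun _ => ZMod N) j0 (x, r)) =
          rowW (fun j => a (j0.succAbove j)) r * a j0 x := by
        rw [rowW, Fin.prod_univ_succAbove _ j0, rowW, mul_comm]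
        simp
      simp only [e1, e2, add_eq_zero_iff_eq_neg]
      split_ifs <;> simp
    refine (Finset.sum_le_sum fun r _ => h1 r).trans ?_
    rw [← Finset.sum_mul, rowW_sum (fun j => ha (j0.succAbove j)), one_mul]

/-- Surjectivity of a matrix over `ZMod N`. -/
def MSurj {N l m : ℕ} (A : Fin l → Fin m → ZMod N) : Prop :=
  ∀ y : Fin l → ZMod N, ∃ v : Fin m → ZMod N, ∀ i, A i ⬝ᵥ v = y i

/-- The right kernel contains no nonzero sparse vector. -/
def GoodMat {N l m : ℕ} (s : ℕ) (A : Fin l → Fin m → ZMod N) : Prop :=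
  ∀ w : Fin m → ZMod N, w ≠ 0 → (∀ i, A i ⬝ᵥ w = 0) →
    s ≤ (Finset.univ.filter (fun j => w j ≠ 0)).card

/-- The right kernel. -/
def kerA {N l m : ℕ} (A : Fin l → Fin m → ZMod N) : AddSubgroup (Fin m → ZMod N) where
  carrier := {w | ∀ i, A i ⬝ᵥ w = 0}
  zero_mem' := fun i => dotProduct_zero _
  add_mem' := fun {a b} ha hb i => by
    have h1 : A i ⬝ᵥ a = 0 := ha i
    have h2 : A i ⬝ᵥ b = 0 := hb i
    rw [dotProduct_add, h1, h2, add_zero]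
  neg_mem' := fun {a} ha i => by
    have h1 : A i ⬝ᵥ a = 0 := ha i
    rw [dotProduct_neg, h1, neg_zero]

lemma mem_kerA {N l m : ℕ} (A : Fin l → Fin m → ZMod N) (w : Fin m → ZMod N) :
    w ∈ kerA A ↔ ∀ i, A i ⬝ᵥ w = 0 := Iff.rfl

lemma tors_iff {N E D : ℕ} [NeZero N] (h : E * D = N) (x : ZMod N) :
    (E : ZMod N) * x = 0 ↔ D ∣ x.val := by
  have hE : 0 < E := Nat.pos_of_ne_zero (by rintro rfl; exact NeZero.ne N (by simpa using h.symm))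
  have e : (E : ZMod N) * x = ((E * x.val : ℕ) : ZMod N) := by
    rw [Nat.cast_mul, ZMod.natCast_zmod_val]
  have e2 : N ∣ E * x.val ↔ E * D ∣ E * x.val := by rw [h]
  rw [e, ZMod.natCast_eq_zero_iff, e2, Nat.mul_dvd_mul_iff_left hE]

lemma tors_card {N E D : ℕ} [NeZero N] (h : E * D = N) :
    (Finset.univ.filter (fun x : ZMod N => (E : ZMod N) * x = 0)).card = E := by
  classical
  have hD : 0 < D := Nat.pos_of_ne_zero (by rintro rfl; exact NeZero.ne N (by simpa using h.symm))
  have : Finset.univ.filter (fun x : ZMod N => (E : ZMod N) * x = 0) =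
      (Finset.range E).image (fun i => ((D * i : ℕ) : ZMod N)) := by
    ext x
    simp only [Finset.mem_filter, Finset.mem_univ, true_and, Finset.mem_image, Finset.mem_range]
    rw [tors_iff h]
    constructor
    · rintro ⟨c, hc⟩
      refine ⟨c, ?_, ?_⟩
      · have := ZMod.val_lt x
        rw [hc, ← h, mul_comm E D] at this
        exact lt_of_mul_lt_mul_left this hD.le
      · rw [← hc, ZMod.natCast_zmod_val]
    · rintro ⟨c, hc, rfl⟩
      rw [ZMod.val_natCast, Nat.dvd_mod_iff (h ▸ Dvd.intro_left _ rfl)]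
      exact Dvd.intro _ rfl
  rw [this, Finset.card_image_of_injOn, Finset.card_range]
  intro i hi j hj hij
  simp only [Finset.coe_range, Set.mem_Iio] at hi hj
  have hi' : D * i < N := by rw [← h, mul_comm E]; exact Nat.mul_lt_mul_of_pos_left hi hD
  have hj' : D * j < N := by rw [← h, mul_comm E]; exact Nat.mul_lt_mul_of_pos_left hj hD
  have := congrArg ZMod.val hij
  simp only at this
  rw [ZMod.val_natCast_of_lt hi', ZMod.val_natCast_of_lt hj'] at this
  exact Nat.eq_of_mul_eq_mul_left hD this

lemma tors_card_pi {N E D : ℕ} [NeZero N] (h : E * D = N) (m : ℕ) :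
    (Finset.univ.filter (fun x : Fin m → ZMod N => (E : ZMod N) • x = 0)).card = E ^ m := by
  classical
  have : Finset.univ.filter (fun x : Fin m → ZMod N => (E : ZMod N) • x = 0) =
      Fintype.piFinset (fun _ => Finset.univ.filter (fun x : ZMod N => (E : ZMod N) * x = 0)) := by
    ext x
    simp [Fintype.mem_piFinset, funext_iff]
  rw [this, Fintype.card_piFinset]
  simp [tors_card h]

lemma ker_card {N E D l m : ℕ} [NeZero N] (h : E * D = N) (A : Fin l → Fin m → ZMod N)
    (hA : MSurj A) :
    (Finset.univ.filter (fun w : Fin m → ZMod N =>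
      (E : ZMod N) • w = 0 ∧ ∀ i, A i ⬝ᵥ w = 0)).card * E ^ l = E ^ m := by
  classical
  rw [← tors_card_pi h m, ← tors_card_pi h l]
  have hmap : ∀ v ∈ Finset.univ.filter (fun x : Fin m → ZMod N => (E : ZMod N) • x = 0),
      (fun i => A i ⬝ᵥ v) ∈
        Finset.univ.filter (fun x : Fin l → ZMod N => (E : ZMod N) • x = 0) := by
    intro v hv
    simp only [Finset.mem_filter, Finset.mem_univ, true_and] at hv ⊢
    funext i
    simp only [Pi.smul_apply, Pi.zero_apply]
    rw [← dotProduct_smul, hv, dotProduct_zero]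
  rw [Finset.card_eq_sum_card_fiberwise (f := fun v i => A i ⬝ᵥ v) hmap]
  rw [mul_comm, ← smul_eq_mul, ← Finset.sum_const]
  refine Finset.sum_congr rfl fun y hy => ?_
  simp only [Finset.mem_filter, Finset.mem_univ, true_and] at hy
  -- a torsion preimage
  have hdiv : ∀ i, ∃ c : ZMod N, y i = (D : ZMod N) * c := by
    intro i
    have : (E : ZMod N) * y i = 0 := congrFun hy i
    obtain ⟨c, hc⟩ := (tors_iff h _).1 this
    exact ⟨c, by rw [← Nat.cast_mul, ← hc, ZMod.natCast_zmod_val]⟩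
  choose c hc using hdiv
  obtain ⟨v, hv⟩ := hA c
  have hv0 : ∀ i, A i ⬝ᵥ ((D : ZMod N) • v) = y i := fun i => by
    rw [dotProduct_smul, hv, smul_eq_mul, hc]
  have hv1 : (E : ZMod N) • ((D : ZMod N) • v) = 0 := by
    rw [smul_smul, ← Nat.cast_mul, h, ZMod.natCast_self, zero_smul]
  rw [Finset.filter_filter]
  refine Finset.card_nbij' (fun w => w + (D : ZMod N) • v) (fun w => w - (D : ZMod N) • v)
    ?_ ?_ ?_ ?_
  · intro w hw
    simp only [Finset.coe_filter, Finset.mem_univ, true_and, Set.mem_ofPred_eq] at hw ⊢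
    refine ⟨by rw [smul_add, hw.1, hv1, add_zero], ?_⟩
    funext i
    rw [dotProduct_add, hw.2, hv0, zero_add]
  · intro w hw
    simp only [Finset.coe_filter, Finset.mem_univ, true_and, Set.mem_ofPred_eq] at hw ⊢
    refine ⟨by rw [smul_sub, hw.1, hv1, sub_zero], ?_⟩
    intro i
    rw [dotProduct_sub, hv0, ← hw.2, sub_self]
  · intro w _; simp
  · intro w _; simp

open Classical in
lemma orth {N m : ℕ} [NeZero N] (W : AddSubgroup (Fin m → ZMod N)) (c : Fin m → ZMod N) :
    ∑ w : W, (ZMod.stdAddChar (c ⬝ᵥ (w : Fin m → ZMod N)) : ℂ) =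
      if ∀ w ∈ W, c ⬝ᵥ w = 0 then (Fintype.card W : ℂ) else 0 := by
  let f : W →+ ZMod N :=
    { toFun := fun w => c ⬝ᵥ (w : Fin m → ZMod N)
      map_zero' := by simp
      map_add' := fun x y => by simp [dotProduct_add] }
  have := AddChar.sum_eq_ite ((ZMod.stdAddChar (N := N)).compAddMonoidHom f)
  have e : ((ZMod.stdAddChar (N := N)).compAddMonoidHom f = 0) ↔ ∀ w ∈ W, c ⬝ᵥ w = 0 := by
    constructor
    · intro h w hw
      apply ZMod.injective_stdAddChar
      have := DFunLike.congr_fun h (⟨w, hw⟩ : W)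
      rw [AddChar.map_zero_eq_one]
      exact this
    · intro h
      ext w
      have : f w = 0 := h w w.2
      simp [this]
  simp only [e] at this
  exact this

open Classical in
lemma tors_prob {N E D l m d s : ℕ} [NeZero N] (h : E * D = N) (hd : l + d = m)
    {q ρ : ℝ} (hρ0 : 0 ≤ ρ) (hρ1 : ρ < 1)
    (hρ : ∀ a : ZMod N → ℝ, WBal q a → ∀ z : ZMod N, z ≠ 0 →
      ‖∑ x, (a x : ℂ) * ZMod.stdAddChar (x * z)‖ ≤ ρ)
    (a : Fin m → ZMod N → ℝ) (ha : ∀ j, WBal q (a j))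
    (A : Fin l → Fin m → ZMod N) (hA : MSurj A) (hG : GoodMat s A) :
    |(∑ r, rowW a r * (if ∀ w ∈ kerA A, (E : ZMod N) * (r ⬝ᵥ w) = 0 then 1 else 0)) -
      ((D : ℝ)⁻¹) ^ d| ≤ ρ ^ s := by
  set W := kerA A with hW
  have hN : N ≠ 0 := NeZero.ne N
  have hE0 : E ≠ 0 := by rintro rfl; exact hN (by simpa using h.symm)
  have hD0 : D ≠ 0 := by rintro rfl; exact hN (by simpa using h.symm)
  have hEm : ∀ E : ℕ, E ^ m = E ^ l * E ^ d := fun E => by rw [← hd, pow_add]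
  have hcW : (Fintype.card W) = N ^ d := by
    have h1 := ker_card (E := N) (D := 1) (mul_one N) A hA
    have h2 : (Finset.univ.filter (fun w : Fin m → ZMod N =>
      (N : ZMod N) • w = 0 ∧ ∀ i, A i ⬝ᵥ w = 0)).card = Fintype.card W := by
      rw [Fintype.card_subtype]
      congr 1
      ext w
      simp [hW, mem_kerA]
    rw [h2, hEm, mul_comm] at h1
    exact Nat.eq_of_mul_eq_mul_left (by positivity) h1
  have hcE : (∑ w : W, if (E : ZMod N) • (w : Fin m → ZMod N) = 0 then (1 : ℂ) else 0) =
      ((E ^ d : ℕ) : ℂ) := by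
    have h1 := ker_card h A hA
    have h2 : (Finset.univ.filter (fun w : Fin m → ZMod N =>
      (E : ZMod N) • w = 0 ∧ ∀ i, A i ⬝ᵥ w = 0)).card =
        (Finset.univ.filter (fun w : W => (E : ZMod N) • (w : Fin m → ZMod N) = 0)).card := by
      symm
      refine Finset.card_bij (fun w _ => (w : Fin m → ZMod N)) ?_ ?_ ?_
      · intro w hw
        simp only [Finset.mem_filter, Finset.mem_univ, true_and] at hw ⊢
        exact ⟨hw, w.2⟩
      · intro w _ w' _ hww
        exact Subtype.ext hww
      · intro w hw
        simp only [Finset.mem_filter, Finset.mem_univ, true_and] at hw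
        exact ⟨⟨w, hw.2⟩, by simp [hw.1], rfl⟩
    rw [h2, hEm, mul_comm] at h1
    rw [← Nat.eq_of_mul_eq_mul_left (by positivity) h1]
    simp
  have hWC : (Fintype.card W : ℂ) ≠ 0 := by
    rw [hcW]; exact_mod_cast pow_ne_zero _ hN
  have hind : ∀ r : Fin m → ZMod N,
      ((if ∀ w ∈ W, (E : ZMod N) * (r ⬝ᵥ w) = 0 then 1 else 0 : ℝ) : ℂ) =
      (Fintype.card W : ℂ)⁻¹ *
        ∑ w : W, (ZMod.stdAddChar (r ⬝ᵥ ((E : ZMod N) • (w : Fin m → ZMod N))) : ℂ) := by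
    intro r
    have := orth W ((E : ZMod N) • r)
    simp only [smul_dotProduct, smul_eq_mul] at this
    simp only [dotProduct_smul, smul_eq_mul]
    rw [this]
    split_ifs <;> simp
  have hDd : (((D : ℝ)⁻¹ ^ d : ℝ) : ℂ) = (Fintype.card W : ℂ)⁻¹ *
      ∑ w : W, if (E : ZMod N) • (w : Fin m → ZMod N) = 0 then (1 : ℂ) else 0 := by
    rw [hcE, hcW, ← h]
    have : (E : ℂ) ≠ 0 := by exact_mod_cast hE0
    have : (D : ℂ) ≠ 0 := by exact_mod_cast hD0
    push_cast
    rw [inv_pow, mul_pow]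
    field_simp
  have hsum : (((∑ r, rowW a r * (if ∀ w ∈ W, (E : ZMod N) * (r ⬝ᵥ w) = 0 then 1 else 0)) -
      ((D : ℝ)⁻¹) ^ d : ℝ) : ℂ) = (Fintype.card W : ℂ)⁻¹ * ∑ w : W,
        ((∑ r, (rowW a r : ℂ) *
          ZMod.stdAddChar (r ⬝ᵥ ((E : ZMod N) • (w : Fin m → ZMod N)))) -
          if (E : ZMod N) • (w : Fin m → ZMod N) = 0 then (1 : ℂ) else 0) := by
    rw [Finset.sum_sub_distrib, mul_sub, ← hDd, Complex.ofReal_sub, Complex.ofReal_sum]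
    congr 1
    rw [Finset.sum_comm, Finset.mul_sum]
    refine Finset.sum_congr rfl fun r _ => ?_
    rw [Complex.ofReal_mul, hind, ← Finset.mul_sum]
    ring
  rw [← Real.norm_eq_abs, ← Complex.norm_real, hsum, norm_mul, norm_inv]
  have hb : ∀ w : W, ‖(∑ r, (rowW a r : ℂ) *
          ZMod.stdAddChar (r ⬝ᵥ ((E : ZMod N) • (w : Fin m → ZMod N)))) -
          if (E : ZMod N) • (w : Fin m → ZMod N) = 0 then (1 : ℂ) else 0‖ ≤ ρ ^ s := by
    intro w
    split_ifs with h0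
    · rw [h0]
      simp only [dotProduct_zero, AddChar.map_zero_eq_one, mul_one]
      rw [← Complex.ofReal_sum, rowW_sum ha]
      simpa using pow_nonneg hρ0 s
    · rw [sub_zero]
      refine row_char_bound hρ0 hρ1 hρ a ha _ s (hG _ h0 fun i => ?_)
      rw [dotProduct_smul, (mem_kerA A w).1 w.2 i, smul_zero]
  have hb2 := (norm_sum_le _ _).trans (Finset.sum_le_sum fun w (_ : w ∈ Finset.univ) => hb w)
  rw [Finset.sum_const, nsmul_eq_mul, Finset.card_univ] at hb2
  have hpos : 0 < ‖(Fintype.card W : ℂ)‖ := norm_pos_iff.2 hWC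
  rw [inv_mul_le_iff₀ hpos]
  refine hb2.trans (le_of_eq ?_)
  rw [Complex.norm_natCast]

lemma msurj_tail {N l m : ℕ} (r : Fin m → ZMod N) (A : Fin l → Fin m → ZMod N)
    (h : MSurj (Fin.cons r A : Fin (l + 1) → Fin m → ZMod N)) : MSurj A := by
  intro y
  obtain ⟨v, hv⟩ := h (Fin.cons 0 y)
  exact ⟨v, fun i => by simpa using hv i.succ⟩

lemma msurj_head {N l m : ℕ} (r : Fin m → ZMod N) (A : Fin l → Fin m → ZMod N)
    (h : MSurj (Fin.cons r A : Fin (l + 1) → Fin m → ZMod N)) :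
    ∃ w ∈ kerA A, r ⬝ᵥ w = 1 := by
  obtain ⟨v, hv⟩ := h (Fin.cons 1 0)
  exact ⟨v, (mem_kerA A v).2 fun i => by simpa using hv i.succ, by simpa using hv 0⟩

lemma compl_mul (P S : Finset Nat.Primes) (hS : S ⊆ P) :
    (∏ p ∈ P \ S, (p : ℕ)) * (∏ p ∈ S, (p : ℕ)) = ∏ p ∈ P, (p : ℕ) :=
  Finset.prod_sdiff hS

lemma primes_prod_dvd_iff (S : Finset Nat.Primes) (x : ℕ) :
    (∏ p ∈ S, (p : ℕ)) ∣ x ↔ ∀ p ∈ S, (p : ℕ) ∣ x := by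
  constructor
  · intro h p hp
    exact (Finset.dvd_prod_of_mem _ hp).trans h
  · intro h
    refine Finset.prod_dvd_of_isRelPrime ?_ h
    intro p _ q _ hpq
    refine Nat.coprime_iff_isRelPrime.1 ((Nat.coprime_primes p.2 q.2).2 fun h => hpq (Subtype.ext h))

open Classical in
lemma step_prob {N l m d s : ℕ} [NeZero N] (P : Finset Nat.Primes) (hN : N = ∏ p ∈ P, (p : ℕ))
    (hd : l + d = m)
    {q ρ : ℝ} (hρ0 : 0 ≤ ρ) (hρ1 : ρ < 1)
    (hρ : ∀ a : ZMod N → ℝ, WBal q a → ∀ z : ZMod N, z ≠ 0 →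
      ‖∑ x, (a x : ℂ) * ZMod.stdAddChar (x * z)‖ ≤ ρ)
    (a : Fin m → ZMod N → ℝ) (ha : ∀ j, WBal q (a j))
    (A : Fin l → Fin m → ZMod N) (hA : MSurj A) (hG : GoodMat s A) :
    (∑ r, if MSurj (Fin.cons r A : Fin (l + 1) → Fin m → ZMod N) then rowW a r else 0) ≤
      ∏ p ∈ P, (1 - ((p : ℕ) : ℝ)⁻¹ ^ d) + 2 ^ P.card * ρ ^ s := by
  set E : Finset Nat.Primes → ℕ := fun S => ∏ p ∈ P \ S, (p : ℕ) with hE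
  set D : Finset Nat.Primes → ℕ := fun S => ∏ p ∈ S, (p : ℕ) with hD
  have hED : ∀ S ⊆ P, E S * D S = N := fun S hS => (compl_mul P S hS).trans hN.symm
  let g : Finset Nat.Primes → (Fin m → ZMod N) → ℝ := fun S r =>
    if ∀ w ∈ kerA A, (E S : ZMod N) * (r ⬝ᵥ w) = 0 then 1 else 0
  have hgp : ∀ S ⊆ P, ∀ r, ∏ p ∈ S, g {p} r = g S r := by
    intro S hS r
    have : (∀ w ∈ kerA A, (E S : ZMod N) * (r ⬝ᵥ w) = 0) ↔
        ∀ p ∈ S, ∀ w ∈ kerA A, (E {p} : ZMod N) * (r ⬝ᵥ w) = 0 := by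
      constructor
      · intro h p hp w hw
        rw [tors_iff (hED {p} (Finset.singleton_subset_iff.2 (hS hp)))]
        have := h w hw
        rw [tors_iff (hED S hS)] at this
        simpa [hD] using (primes_prod_dvd_iff S _).1 this p hp
      · intro h w hw
        rw [tors_iff (hED S hS)]
        refine (primes_prod_dvd_iff S _).2 fun p hp => ?_
        have := h p hp w hw
        rw [tors_iff (hED {p} (Finset.singleton_subset_iff.2 (hS hp)))] at this
        simpa [hD] using this
    by_cases hc : ∀ w ∈ kerA A, (E S : ZMod N) * (r ⬝ᵥ w) = 0
    · have h1 : g S r = 1 := if_pos hc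
      rw [h1]
      exact Finset.prod_eq_one fun p hp => if_pos (this.1 hc p hp)
    · have h1 : g S r = 0 := if_neg hc
      rw [h1]
      rw [this] at hc
      simp only [not_forall] at hc
      obtain ⟨p, hp, hc⟩ := hc
      refine Finset.prod_eq_zero hp (if_neg ?_)
      simp only [not_forall]
      exact hc
  have hpt : ∀ r, (if MSurj (Fin.cons r A : Fin (l + 1) → Fin m → ZMod N) then rowW a r else 0) ≤
      rowW a r * ∏ p ∈ P, (1 - g {p} r) := by
    intro r
    have hr := rowW_nonneg ha r
    split_ifs with h
    · obtain ⟨w, hw, hw1⟩ := msurj_head r A h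
      have : ∏ p ∈ P, (1 - g {p} r) = 1 := by
        refine Finset.prod_eq_one fun p hp => ?_
        have : g {p} r = 0 := by
          refine if_neg fun hc => ?_
          have h1 := hc w hw
          rw [hw1, tors_iff (hED {p} (Finset.singleton_subset_iff.2 hp))] at h1
          have h2 : (p : ℕ) ∣ N := hN ▸ Finset.dvd_prod_of_mem _ hp
          have h3 : (p : ℕ) ∣ (1 : ZMod N).val := by simpa [hD] using h1
          have h4 : (1 : ZMod N) = ((1 : ℕ) : ZMod N) := by simp
          rw [h4, ZMod.val_natCast, Nat.dvd_mod_iff h2] at h3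
          exact p.2.one_lt.ne' (Nat.dvd_one.1 h3)
        rw [this, sub_zero]
      rw [this, mul_one]
    · refine mul_nonneg hr (Finset.prod_nonneg fun p _ => ?_)
      simp only [g]
      split_ifs <;> norm_num
  have hexp : ∀ r, ∏ p ∈ P, (1 - g {p} r) = ∑ S ∈ P.powerset, (-1) ^ S.card * g S r := by
    intro r
    rw [Finset.prod_sub]
    refine Finset.sum_congr rfl fun S hS => ?_
    rw [hgp S (Finset.mem_powerset.1 hS)]
    simp
  have hF : ∏ p ∈ P, (1 - ((p : ℕ) : ℝ)⁻¹ ^ d) =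
      ∑ S ∈ P.powerset, (-1) ^ S.card * ((D S : ℕ) : ℝ)⁻¹ ^ d := by
    rw [Finset.prod_sub]
    refine Finset.sum_congr rfl fun S _ => ?_
    simp [hD, Finset.prod_pow]
  calc _ ≤ ∑ r, rowW a r * ∏ p ∈ P, (1 - g {p} r) := Finset.sum_le_sum fun r _ => hpt r
    _ = ∑ S ∈ P.powerset, (-1) ^ S.card * ∑ r, rowW a r * g S r := by
        simp_rw [hexp, Finset.mul_sum]
        rw [Finset.sum_comm]
        refine Finset.sum_congr rfl fun S _ => Finset.sum_congr rfl fun r _ => ?_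
        ring
    _ ≤ ∑ S ∈ P.powerset, ((-1) ^ S.card * ((D S : ℕ) : ℝ)⁻¹ ^ d + ρ ^ s) := by
        refine Finset.sum_le_sum fun S hS => ?_
        have h1 := tors_prob (hED S (Finset.mem_powerset.1 hS)) hd hρ0 hρ1 hρ a ha A hA hG
        have h2 : |(-1 : ℝ) ^ S.card * ((∑ r, rowW a r * g S r) - ((D S : ℕ) : ℝ)⁻¹ ^ d)| ≤
            ρ ^ s := by
          rw [abs_mul, abs_pow, abs_neg, abs_one, one_pow, one_mul]
          exact h1
        have h3 := (abs_le.1 h2).2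
        rw [mul_sub] at h3
        linarith
    _ = _ := by
        rw [Finset.sum_add_distrib, ← hF]
        simp

open Classical in
/-- Probability of an event for a matrix with independent entries with weights `a`. -/
noncomputable def pr {N l m : ℕ} [NeZero N] (a : Fin l → Fin m → ZMod N → ℝ)
    (T : (Fin l → Fin m → ZMod N) → Prop) : ℝ :=
  ∑ A, if T A then ∏ i, rowW (a i) (A i) else 0

lemma pr_total {N l m : ℕ} [NeZero N] {q : ℝ} (a : Fin l → Fin m → ZMod N → ℝ)
    (ha : ∀ i j, WBal q (a i j)) : ∑ A : Fin l → Fin m → ZMod N, ∏ i, rowW (a i) (A i) = 1 := by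
  classical
  rw [← Fintype.prod_sum (fun i r => rowW (a i) r)]
  exact Finset.prod_eq_one fun i _ => rowW_sum (ha i)

lemma pr_le_one {N l m : ℕ} [NeZero N] {q : ℝ} (a : Fin l → Fin m → ZMod N → ℝ)
    (ha : ∀ i j, WBal q (a i j)) (T : (Fin l → Fin m → ZMod N) → Prop) : pr a T ≤ 1 := by
  classical
  rw [← pr_total a ha]
  refine Finset.sum_le_sum fun A _ => ?_
  have : 0 ≤ ∏ i, rowW (a i) (A i) := Finset.prod_nonneg fun i _ => rowW_nonneg (ha i) _
  split_ifs
  · exact le_rfl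
  · exact this

lemma sparse_card {N m s : ℕ} [NeZero N] (hm : 0 < m) :
    (Finset.univ.filter (fun w : Fin m → ZMod N =>
      (Finset.univ.filter (fun j => w j ≠ 0)).card < s)).card ≤ (m * N) ^ s := by
  classical
  have h : Finset.univ.filter (fun w : Fin m → ZMod N =>
      (Finset.univ.filter (fun j => w j ≠ 0)).card < s) ⊆
      Finset.univ.image (fun f : Fin s → Fin m × ZMod N =>
        (fun j => if h : ∃ t, (f t).1 = j then (f h.choose).2 else 0 : Fin m → ZMod N)) := by
    intro w hw
    simp only [Finset.mem_filter, Finset.mem_univ, true_and] at hw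
    rw [Finset.mem_image]
    have j0 : Fin m := ⟨0, hm⟩
    let S := Finset.univ.filter (fun j => w j ≠ 0)
    have : ∃ e : Fin s → Fin m, ∀ j ∈ S, ∃ t, e t = j := by
      refine ⟨fun t => if h : (t : ℕ) < S.card then (S.equivFin.symm ⟨t, h⟩ : Fin m) else j0, ?_⟩
      intro j hj
      refine ⟨⟨(S.equivFin ⟨j, hj⟩ : ℕ), (S.equivFin ⟨j, hj⟩).2.trans hw⟩, ?_⟩
      simp
    obtain ⟨e, he⟩ := this
    refine ⟨fun t => (e t, w (e t)), Finset.mem_univ _, ?_⟩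
    funext j
    dsimp only
    split_ifs with h
    · rw [h.choose_spec]
    · by_contra hne
      exact h (he j (by simpa [S] using fun h0 => hne h0.symm))
  refine (Finset.card_le_card h).trans (Finset.card_image_le.trans ?_)
  simp [ZMod.card]

lemma bad_prob {N l m s : ℕ} [NeZero N] (hm : 0 < m) {q : ℝ}
    (a : Fin l → Fin m → ZMod N → ℝ)
    (ha : ∀ i j, WBal q (a i j)) (hq : 0 ≤ q) :
    pr a (fun A => ¬ GoodMat s A) ≤ ((m * N : ℕ) : ℝ) ^ s * q ^ l := by
  classical
  set Q := Finset.univ.filter (fun w : Fin m → ZMod N =>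
      (Finset.univ.filter (fun j => w j ≠ 0)).card < s) with hQ
  have hpt : ∀ A : Fin l → Fin m → ZMod N,
      (if ¬ GoodMat s A then ∏ i, rowW (a i) (A i) else 0) ≤
      ∑ w ∈ Q.filter (fun w => w ≠ 0),
        ∏ i, (if A i ⬝ᵥ w = 0 then rowW (a i) (A i) else 0) := by
    intro A
    have hnn : ∀ w ∈ Q.filter (fun w => w ≠ 0),
        0 ≤ ∏ i, (if A i ⬝ᵥ w = 0 then rowW (a i) (A i) else 0) := by
      intro w _
      refine Finset.prod_nonneg fun i _ => ?_
      have := rowW_nonneg (ha i) (A i)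
      split_ifs
      · exact this
      · exact le_rfl
    split_ifs with h
    · exact Finset.sum_nonneg hnn
    · unfold GoodMat at h
      push Not at h
      obtain ⟨w, hw0, hwA, hws⟩ := h
      refine le_trans (le_of_eq ?_) (Finset.single_le_sum hnn (a := w) ?_)
      · exact Finset.prod_congr rfl fun i _ => by rw [if_pos (hwA i)]
      · simp [hQ, hw0, hws]
  calc pr a (fun A => ¬ GoodMat s A)
      ≤ ∑ A : Fin l → Fin m → ZMod N, ∑ w ∈ Q.filter (fun w => w ≠ 0),
        ∏ i, (if A i ⬝ᵥ w = 0 then rowW (a i) (A i) else 0) := by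
        unfold pr
        exact Finset.sum_le_sum fun A _ => by
          refine le_trans (le_of_eq ?_) (hpt A)
          congr
    _ = ∑ w ∈ Q.filter (fun w => w ≠ 0), ∏ i,
          ∑ r, (if r ⬝ᵥ w = 0 then rowW (a i) r else 0) := by
        rw [Finset.sum_comm]
        refine Finset.sum_congr rfl fun w _ => ?_
        rw [Fintype.prod_sum (fun i r => if r ⬝ᵥ w = 0 then rowW (a i) r else 0)]
    _ ≤ ∑ w ∈ Q.filter (fun w => w ≠ 0), q ^ l := by
        refine Finset.sum_le_sum fun w hw => ?_
        have : ∏ i : Fin l, q = q ^ l := by simp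
        rw [← this]
        refine Finset.prod_le_prod (fun i _ => Finset.sum_nonneg fun r _ => ?_)
          (fun i _ => row_orth (a i) (ha i) w (Finset.mem_filter.1 hw).2)
        have := rowW_nonneg (ha i) r
        split_ifs
        · exact this
        · exact le_rfl
    _ ≤ ((m * N : ℕ) : ℝ) ^ s * q ^ l := by
        rw [Finset.sum_const, nsmul_eq_mul]
        refine mul_le_mul_of_nonneg_right ?_ (pow_nonneg hq l)
        have h1 : (Q.filter (fun w => w ≠ 0)).card ≤ (m * N) ^ s :=
          (Finset.card_filter_le _ _).trans (sparse_card hm)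
        exact_mod_cast h1

lemma pr_succ {N l m : ℕ} [NeZero N] (a : Fin (l + 1) → Fin m → ZMod N → ℝ)
    (T : (Fin (l + 1) → Fin m → ZMod N) → Prop) [DecidablePred T] :
    pr a T = ∑ A : Fin l → Fin m → ZMod N, (∏ i, rowW (a i.succ) (A i)) *
      ∑ r, if T (Fin.cons r A : Fin (l + 1) → Fin m → ZMod N) then rowW (a 0) r else 0 := by
  classical
  unfold pr
  rw [← (Fin.consEquiv (fun _ => Fin m → ZMod N)).sum_comp, Fintype.sum_prod_type_right]
  refine Finset.sum_congr rfl fun A _ => ?_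
  rw [Finset.mul_sum]
  refine Finset.sum_congr rfl fun r _ => ?_
  have e : Fin.consEquiv (fun _ : Fin (l + 1) => Fin m → ZMod N) (r, A) =
    (Fin.cons r A : Fin (l + 1) → Fin m → ZMod N) := rfl
  rw [e]
  split_ifs
  · rw [Fin.prod_univ_succ, mul_comm]
    simp
  · simp

lemma pr_step {N l m d s : ℕ} [NeZero N] (P : Finset Nat.Primes) (hN : N = ∏ p ∈ P, (p : ℕ))
    (hd : l + d = m) (hm : 0 < m)
    {q ρ : ℝ} (hq : 0 ≤ q) (hρ0 : 0 ≤ ρ) (hρ1 : ρ < 1)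
    (hρ : ∀ a : ZMod N → ℝ, WBal q a → ∀ z : ZMod N, z ≠ 0 →
      ‖∑ x, (a x : ℂ) * ZMod.stdAddChar (x * z)‖ ≤ ρ)
    (a : Fin (l + 1) → Fin m → ZMod N → ℝ) (ha : ∀ i j, WBal q (a i j)) :
    pr a MSurj ≤ (∏ p ∈ P, (1 - ((p : ℕ) : ℝ)⁻¹ ^ d)) * pr (fun i => a i.succ) MSurj +
      (2 ^ P.card * ρ ^ s + ((m * N : ℕ) : ℝ) ^ s * q ^ l) := by
  classical
  set F := ∏ p ∈ P, (1 - ((p : ℕ) : ℝ)⁻¹ ^ d) with hF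
  have hF0 : 0 ≤ F := by
    refine Finset.prod_nonneg fun p _ => sub_nonneg.2 (pow_le_one₀ (by positivity) ?_)
    exact inv_le_one_of_one_le₀ (by exact_mod_cast p.2.one_lt.le)
  have hbad := bad_prob (s := s) hm (fun i : Fin l => a i.succ) (fun i => ha i.succ) hq
  have h1 : pr a MSurj ≤ ∑ A : Fin l → Fin m → ZMod N,
      (F * (if MSurj A then ∏ i, rowW (a i.succ) (A i) else 0) +
        2 ^ P.card * ρ ^ s * (∏ i, rowW (a i.succ) (A i)) +
        (if ¬ GoodMat s A then ∏ i, rowW (a i.succ) (A i) else 0)) := by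
    rw [pr_succ]
    refine Finset.sum_le_sum fun A _ => ?_
    have hw : 0 ≤ ∏ i : Fin l, rowW (a i.succ) (A i) :=
      Finset.prod_nonneg fun i _ => rowW_nonneg (ha i.succ) _
    have hr : 0 ≤ 2 ^ P.card * ρ ^ s := by positivity
    by_cases hA : MSurj A
    · by_cases hG : GoodMat s A
      · have := step_prob P hN hd hρ0 hρ1 hρ (a 0) (ha 0) A hA hG
        have := mul_le_mul_of_nonneg_left this hw
        rw [if_pos hA, if_neg (not_not.2 hG)]
        refine this.trans (le_of_eq ?_)
        ring
      · have h2 : (∑ r, if MSurj (Fin.cons r A : Fin (l + 1) → Fin m → ZMod N)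
            then rowW (a 0) r else 0) ≤ 1 := by
          rw [← rowW_sum (ha 0)]
          refine Finset.sum_le_sum fun r _ => ?_
          have := rowW_nonneg (ha 0) r
          split_ifs
          · exact le_rfl
          · exact this
        have := mul_le_mul_of_nonneg_left h2 hw
        rw [if_pos hA, if_pos hG]
        nlinarith [mul_nonneg hF0 hw, mul_nonneg hr hw]
    · have h2 : (∑ r, if MSurj (Fin.cons r A : Fin (l + 1) → Fin m → ZMod N)
            then rowW (a 0) r else 0) = 0 :=
        Finset.sum_eq_zero fun r _ => if_neg fun h => hA (msurj_tail r A h)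
      rw [h2, if_neg hA, mul_zero, mul_zero, zero_add]
      refine add_nonneg (mul_nonneg hr hw) ?_
      split_ifs
      · exact le_rfl
      · exact hw
  rw [Finset.sum_add_distrib, Finset.sum_add_distrib, ← Finset.mul_sum, ← Finset.mul_sum,
    pr_total (fun i : Fin l => a i.succ) (fun i => ha i.succ)] at h1
  have e1 : pr (fun i => a i.succ) MSurj = ∑ A : Fin l → Fin m → ZMod N,
    (if MSurj A then ∏ i, rowW (a i.succ) (A i) else 0) := by
    unfold pr; congr
  have e2 : pr (fun i => a i.succ) (fun A => ¬ GoodMat s A) = ∑ A : Fin l → Fin m → ZMod N,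
    (if ¬ GoodMat s A then ∏ i, rowW (a i.succ) (A i) else 0) := by
    unfold pr
    refine Finset.sum_congr rfl fun A _ => ?_
    congr
  rw [← e1, ← e2] at h1
  linarith

lemma pr_iter {N l s : ℕ} [NeZero N] (P : Finset Nat.Primes) (hN : N = ∏ p ∈ P, (p : ℕ))
    {q ρ : ℝ} (hq : 0 ≤ q) (hq1 : q ≤ 1) (hρ0 : 0 ≤ ρ) (hρ1 : ρ < 1)
    (hρ : ∀ a : ZMod N → ℝ, WBal q a → ∀ z : ZMod N, z ≠ 0 →
      ‖∑ x, (a x : ℂ) * ZMod.stdAddChar (x * z)‖ ≤ ρ) (K : ℕ) :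
    ∀ (u m : ℕ), l + K + u = m → 0 < m → ∀ (a : Fin (l + K) → Fin m → ZMod N → ℝ),
      (∀ i j, WBal q (a i j)) →
    pr a MSurj ≤ ∏ k ∈ Finset.range K, ∏ p ∈ P, (1 - ((p : ℕ) : ℝ)⁻¹ ^ (k + 1 + u)) +
      K * (2 ^ P.card * ρ ^ s + ((m * N : ℕ) : ℝ) ^ s * q ^ l) := by
  induction K with
  | zero =>
    intro u m hm hm0 a ha
    simpa using pr_le_one a ha _
  | succ K ih =>
    intro u m hm hm0 a ha
    have h1 := pr_step (s := s) (l := l + K) (d := 1 + u) P hN (by omega) hm0 hq hρ0 hρ1 hρ a ha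
    have h2 := ih (u + 1) m (by omega) hm0 (fun i => a i.succ) (fun i => ha i.succ)
    set F := ∏ p ∈ P, (1 - ((p : ℕ) : ℝ)⁻¹ ^ (1 + u)) with hF
    have hx : ∀ p : Nat.Primes, ((p : ℕ) : ℝ)⁻¹ ^ (1 + u) ≤ 1 := fun p =>
      pow_le_one₀ (by positivity) (inv_le_one_of_one_le₀ (by exact_mod_cast p.2.one_lt.le))
    have hF0 : 0 ≤ F := Finset.prod_nonneg fun p _ => sub_nonneg.2 (hx p)
    have hF1 : F ≤ 1 := Finset.prod_le_one (fun p _ => sub_nonneg.2 (hx p))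
      (fun p _ => sub_le_self _ (by positivity))
    have h3 : ((m * N : ℕ) : ℝ) ^ s * q ^ (l + K) ≤ ((m * N : ℕ) : ℝ) ^ s * q ^ l :=
      mul_le_mul_of_nonneg_left (pow_le_pow_of_le_one hq hq1 (by omega)) (by positivity)
    rw [Finset.prod_range_succ']
    have e0 : ∏ p ∈ P, (1 - ((p : ℕ) : ℝ)⁻¹ ^ (0 + 1 + u)) = F := by
      rw [hF, Nat.zero_add]
    have e1 : ∏ k ∈ Finset.range K, ∏ p ∈ P, (1 - ((p : ℕ) : ℝ)⁻¹ ^ (k + 1 + (u + 1))) =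
        ∏ k ∈ Finset.range K, ∏ p ∈ P, (1 - ((p : ℕ) : ℝ)⁻¹ ^ (k + 1 + 1 + u)) := by
      refine Finset.prod_congr rfl fun k _ => Finset.prod_congr rfl fun p _ => ?_
      congr 2
      ring
    rw [e0]
    rw [e1] at h2
    set G := ∏ k ∈ Finset.range K, ∏ p ∈ P, (1 - ((p : ℕ) : ℝ)⁻¹ ^ (k + 1 + 1 + u))
    set X := 2 ^ P.card * ρ ^ s + ((m * N : ℕ) : ℝ) ^ s * q ^ l with hX
    have hX0 : 0 ≤ X := by positivity
    have h4 : F * pr (fun i => a i.succ) MSurj ≤ F * (G + K * X) :=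
      mul_le_mul_of_nonneg_left h2 hF0
    have h5 : F * (K * X) ≤ K * X := mul_le_of_le_one_left (by positivity) hF1
    push_cast
    nlinarith

/-- Mass function of the reduction modulo `N`. -/
noncomputable def redW (N : ℕ) (μ : Measure ℤ) (x : ZMod N) : ℝ :=
  (μ ((fun y : ℤ => (y : ZMod N)) ⁻¹' {x})).toReal

lemma redW_sum {N : ℕ} [NeZero N] (μ : Measure ℤ) [IsProbabilityMeasure μ]
    (S : Finset (ZMod N)) :
    ∑ x ∈ S, redW N μ x = (μ ((fun y : ℤ => (y : ZMod N)) ⁻¹' (S : Set (ZMod N)))).toReal := by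
  unfold redW
  rw [← sum_measure_preimage_singleton S (fun y _ => MeasurableSet.of_discrete),
    ENNReal.toReal_sum (fun x _ => measure_ne_top _ _)]

lemma wbal_of_balanced {N : ℕ} [NeZero N] (P : Finset Nat.Primes) (hN : N = ∏ p ∈ P, (p : ℕ))
    {ε q : ℝ} (hq : 0 ≤ q) (hεq : 1 - ε ≤ q) (μ : Measure ℤ) [IsProbabilityMeasure μ]
    (hμ : IsBalanced ε μ) : WBal q (redW N μ) := by
  classical
  refine ⟨fun x => ENNReal.toReal_nonneg, ?_, ?_⟩
  · rw [redW_sum]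
    simp
  · intro z hz t
    rw [← Finset.sum_filter, redW_sum]
    refine ENNReal.toReal_le_of_le_ofReal hq ?_
    by_cases hne : ∃ y0 : ℤ, (y0 : ZMod N) * z = t
    · obtain ⟨y0, hy0⟩ := hne
      have hp : ∃ p ∈ P, ¬ (p : ℕ) ∣ z.val := by
        by_contra hcon
        push Not at hcon
        have := (primes_prod_dvd_iff P z.val).2 hcon
        rw [← hN] at this
        have h0 := Nat.eq_zero_of_dvd_of_lt this (ZMod.val_lt z)
        exact hz ((ZMod.val_eq_zero z).1 h0)
      obtain ⟨p, hpP, hpz⟩ := hp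
      refine le_trans (measure_mono ?_) ((hμ p p.2 (y0 : ZMod p)).trans
        (ENNReal.ofReal_le_ofReal hεq))
      intro y hy
      have hy1 : (y : ZMod N) * z = t := by simpa using hy
      show (y : ZMod p) = (y0 : ZMod p)
      have h1 : (((y - y0) * (z.val : ℤ) : ℤ) : ZMod N) = 0 := by
        push_cast
        rw [ZMod.natCast_zmod_val, sub_mul, hy1, hy0, sub_self]
      rw [ZMod.intCast_zmod_eq_zero_iff_dvd] at h1
      have h2 : ((p : ℕ) : ℤ) ∣ (N : ℤ) := by
        exact_mod_cast (hN ▸ Finset.dvd_prod_of_mem _ hpP : (p : ℕ) ∣ N)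
      have h3 := (Nat.prime_iff_prime_int.1 p.2).dvd_or_dvd (h2.trans h1)
      rcases h3 with h3 | h3
      · have := (ZMod.intCast_zmod_eq_zero_iff_dvd (y - y0) (p : ℕ)).2 h3
        push_cast at this
        exact sub_eq_zero.1 this
      · exact absurd (by exact_mod_cast h3) hpz
    · have : (fun y : ℤ => (y : ZMod N)) ⁻¹'
          ((Finset.univ.filter (fun x : ZMod N => x * z = t) : Finset (ZMod N)) : Set (ZMod N))
          = ∅ := by
        ext y
        simp only [Set.mem_preimage, Finset.coe_filter, Finset.mem_univ, true_and,
          Set.mem_ofPred_eq, Set.mem_empty_iff_false, iff_false]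
        exact fun h => hne ⟨y, h⟩
      rw [this]
      simp

lemma law_le_pr {N n m : ℕ} [NeZero N] (ν : Fin n → Fin m → Measure ℤ)
    [hprob : ∀ i j, IsProbabilityMeasure (ν i j)] :
    ((matrixLaw ν) {A | Function.Surjective (Matrix.of A).mulVecLin}).toReal ≤
      pr (fun i j => redW N (ν i j)) MSurj := by
  classical
  let box : (Fin n → Fin m → ZMod N) → Set (Fin n → Fin m → ℤ) := fun B =>
    Set.univ.pi fun i => Set.univ.pi fun j => (fun y : ℤ => (y : ZMod N)) ⁻¹' {B i j}
  have hsub : {A : Fin n → Fin m → ℤ | Function.Surjective (Matrix.of A).mulVecLin} ⊆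
      ⋃ B ∈ Finset.univ.filter (fun B : Fin n → Fin m → ZMod N => MSurj B), box B := by
    intro A hA
    have hA' : Function.Surjective (Matrix.of A).mulVecLin := hA
    simp only [Set.mem_iUnion, Finset.mem_filter, Finset.mem_univ, true_and]
    refine ⟨fun i j => (A i j : ZMod N), ?_, ?_⟩
    · intro y
      obtain ⟨v, hv⟩ := hA' (fun i => ((y i).val : ℤ))
      refine ⟨fun j => (v j : ZMod N), fun i => ?_⟩
      have h1 := congrFun hv i
      have h2 : ∑ j, A i j * v j = ((y i).val : ℤ) := h1
      have h3 := congrArg (fun x : ℤ => (x : ZMod N)) h2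
      simp only [Int.cast_sum, Int.cast_mul, Int.cast_natCast, ZMod.natCast_zmod_val] at h3
      exact h3
    · intro i _ j _
      rfl
  have hbox : ∀ B, (matrixLaw ν) (box B) =
      ∏ i, ∏ j, ν i j ((fun y : ℤ => (y : ZMod N)) ⁻¹' {B i j}) := by
    intro B
    unfold matrixLaw
    rw [Measure.pi_pi]
    refine Finset.prod_congr rfl fun i _ => ?_
    rw [Measure.pi_pi]
  have hle := (measure_mono hsub).trans (measure_biUnion_finset_le (μ := matrixLaw ν) _ box)
  have hfin : ∀ B, (matrixLaw ν) (box B) ≠ ⊤ := by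
    intro B
    rw [hbox]
    exact ENNReal.prod_ne_top fun i _ => ENNReal.prod_ne_top fun j _ => measure_ne_top _ _
  have h2 := ENNReal.toReal_mono (ENNReal.sum_ne_top.2 fun B _ => hfin B) hle
  refine h2.trans (le_of_eq ?_)
  rw [ENNReal.toReal_sum (fun B _ => hfin B), Finset.sum_filter]
  unfold pr
  refine Finset.sum_congr rfl fun B _ => ?_
  rw [hbox, ENNReal.toReal_prod]
  simp only [ENNReal.toReal_prod, rowW, redW]

lemma limsup_fin (ε : ℝ) (hε : 0 < ε) (u : ℕ) (hu : 1 ≤ u)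
    (ν : (n : ℕ) → Fin n → Fin (n + u) → Measure ℤ)
    (hprob : ∀ n i j, IsProbabilityMeasure (ν n i j))
    (hbal : ∀ n i j, IsBalanced ε (ν n i j)) (P : Finset Nat.Primes) (K : ℕ) :
    limsup (fun n : ℕ =>
        ((matrixLaw (ν n)) {A | Function.Surjective (Matrix.of A).mulVecLin}).toReal) atTop ≤
      ∏ k ∈ Finset.range K, ∏ p ∈ P, (1 - ((p : ℕ) : ℝ)⁻¹ ^ (k + 1 + u)) := by
  set G := ∏ k ∈ Finset.range K, ∏ p ∈ P, (1 - ((p : ℕ) : ℝ)⁻¹ ^ (k + 1 + u)) with hG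
  obtain ⟨N, hN⟩ : ∃ N : ℕ, N = ∏ p ∈ P, (p : ℕ) := ⟨_, rfl⟩
  haveI : NeZero N := ⟨by rw [hN]; exact Finset.prod_ne_zero_iff.2 fun p _ => p.2.ne_zero⟩
  set q : ℝ := max (1 - ε) (1 / 2) with hq
  have hq1 : q < 1 := max_lt (by linarith) (by norm_num)
  have hq0 : 0 < q := lt_of_lt_of_le (by norm_num) (le_max_right _ _)
  obtain ⟨ρ, hρ0, hρ1, hρ⟩ := rho_exists N q hq1
  refine le_of_forall_pos_le_add fun η hη => ?_
  refine limsup_le_of_le ?_ ?_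
  · exact isCoboundedUnder_le_of_le atTop (x := 0) fun n => ENNReal.toReal_nonneg
  obtain ⟨s, hs⟩ : ∃ s : ℕ, K * (2 ^ P.card * ρ ^ s) < η / 2 := by
    have h := ((tendsto_pow_atTop_nhds_zero_of_lt_one hρ0 hρ1).const_mul
      ((2 : ℝ) ^ P.card)).const_mul (K : ℝ)
    rw [mul_zero, mul_zero] at h
    exact (h.eventually_lt_const (half_pos hη)).exists
  have hlim : Tendsto (fun n : ℕ => (K : ℝ) * (((N : ℝ) ^ s * (q ^ (u + K))⁻¹) *
      (((n + u : ℕ) : ℝ) ^ s * q ^ (n + u)))) atTop (nhds 0) := by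
    have h := tendsto_pow_const_mul_const_pow_of_abs_lt_one s
      (r := q) (by rw [abs_of_pos hq0]; exact hq1)
    have h' := h.comp (tendsto_add_atTop_nat u)
    have h2 := (h'.const_mul ((N : ℝ) ^ s * (q ^ (u + K))⁻¹)).const_mul (K : ℝ)
    rw [mul_zero, mul_zero] at h2
    exact h2
  filter_upwards [hlim.eventually_lt_const (half_pos hη), eventually_ge_atTop K] with n hn hnK
  obtain ⟨l, rfl⟩ : ∃ l, n = l + K := ⟨n - K, by omega⟩
  haveI := hprob (l + K)
  refine (law_le_pr (N := N) (ν (l + K))).trans ?_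
  have h1 := pr_iter (l := l) (s := s) P hN hq0.le hq1.le hρ0 hρ1 hρ K u (l + K + u) rfl (by omega)
    (fun i j => redW N (ν (l + K) i j))
    (fun i j => wbal_of_balanced P hN hq0.le (le_max_left _ _) _ (hbal _ i j))
  refine h1.trans ?_
  rw [← hG]
  have h2 : (((l + K + u) * N : ℕ) : ℝ) ^ s * q ^ l = ((N : ℝ) ^ s * (q ^ (u + K))⁻¹) *
      (((l + K + u : ℕ) : ℝ) ^ s * q ^ (l + K + u)) := by
    have : q ^ (l + K + u) = q ^ l * q ^ (u + K) := by rw [← pow_add]; congr 1; ring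
    rw [this, Nat.cast_mul, mul_pow]
    have := hq0.ne'
    field_simp
  rw [h2, mul_add]
  linarith

theorem stmt1 (ε : ℝ) (hε : 0 < ε) (u : ℕ) (hu : 1 ≤ u)
    (ν : (n : ℕ) → Fin n → Fin (n + u) → Measure ℤ)
    (hprob : ∀ n i j, IsProbabilityMeasure (ν n i j))
    (hbal : ∀ n i j, IsBalanced ε (ν n i j)) :
    limsup (fun n : ℕ =>
        ((matrixLaw (ν n)) {A | Function.Surjective (Matrix.of A).mulVecLin}).toReal) atTop ≤
      ∏' p : Nat.Primes, ∏' k : ℕ, (1 - ((p : ℕ) : ℝ)⁻¹ ^ (k + 1 + u)) ∧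
    ((∏' p : Nat.Primes, ∏' k : ℕ, (1 - ((p : ℕ) : ℝ)⁻¹ ^ (k + 1 + u)) : ℝ) : ℂ) =
      ∏' k : ℕ, (riemannZeta ((k : ℂ) + u + 1))⁻¹ := by
  refine ⟨?_, zeta_part u hu⟩
  have hP : HasProd (fun p : Nat.Primes => ∏' k : ℕ, (1 - ((p : ℕ) : ℝ)⁻¹ ^ (k + 1 + u)))
      (∏' x : Nat.Primes × ℕ, (1 - ((x.1 : ℕ) : ℝ)⁻¹ ^ (x.2 + 1 + u))) :=
    (mult_pair u hu).hasProd.prod_fiberwise fun p => (mult_k u hu p).hasProd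
  rw [hP.tprod_eq]
  refine ge_of_tendsto' hP fun P => ?_
  have hK : Tendsto (fun K : ℕ => ∏ p ∈ P, ∏ k ∈ Finset.range K,
      (1 - ((p : ℕ) : ℝ)⁻¹ ^ (k + 1 + u))) atTop
      (nhds (∏ p ∈ P, ∏' k : ℕ, (1 - ((p : ℕ) : ℝ)⁻¹ ^ (k + 1 + u)))) :=
    tendsto_finsetProd P fun p _ => (mult_k u hu p).hasProd.tendsto_prod_nat
  refine ge_of_tendsto' hK fun K => ?_
  rw [Finset.prod_comm]
  exact limsup_fin ε hε u hu ν hprob hbal P K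
end

section
/- Fix ε > 0. For each n, let A_n be a random n×n integer matrix that is ε-balanced (with laws that may depend arbitrarily on n). Then lim_{n→∞} P(A_n : ℤ^n → ℤ^n is surjective) = 0. -/
open MeasureTheory Filter

/-- heat recursion -/
noncomputable def heatU (δ : ℝ) : ℕ → ℕ → ℝ
  | 0, m => if m = 0 then 0 else 1
  | _ + 1, 0 => 0
  | k + 1, m + 1 => (1 - 2 * δ) * heatU δ k (m + 1) + δ * (heatU δ k (m + 2) + heatU δ k m)

lemma heatU_zero_right (δ : ℝ) (k : ℕ) : heatU δ k 0 = 0 := by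
  cases k <;> simp [heatU]

lemma heatU_bounds (δ : ℝ) (h0 : 0 < δ) (h1 : δ ≤ 1 / 2) (k : ℕ) :
    ∀ m, 0 ≤ heatU δ k m ∧ heatU δ k m ≤ 1 := by
  induction k with
  | zero => intro m; by_cases h : m = 0 <;> simp [heatU, h]
  | succ k ih =>
    intro m
    cases m with
    | zero => simp [heatU]
    | succ m =>
      simp only [heatU]
      have a := ih (m + 1)
      have b := ih (m + 2)
      have c := ih m
      constructor
      · have := mul_nonneg (by linarith : 0 ≤ 1 - 2 * δ) a.1
        have := mul_nonneg h0.le (add_nonneg b.1 c.1)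
        linarith
      · have := mul_le_mul_of_nonneg_left a.2 (by linarith : 0 ≤ 1 - 2 * δ)
        have := mul_le_mul_of_nonneg_left (add_le_add b.2 c.2) h0.le
        linarith

lemma heatU_anti (δ : ℝ) (h0 : 0 < δ) (h1 : δ ≤ 1 / 2) (k : ℕ) :
    ∀ m, heatU δ (k + 1) m ≤ heatU δ k m := by
  induction k with
  | zero =>
    intro m
    cases m with
    | zero => simp [heatU]
    | succ m => exact (heatU_bounds δ h0 h1 1 (m + 1)).2.trans (by simp [heatU])
  | succ k ih =>
    intro m
    cases m with
    | zero => simp [heatU]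
    | succ m =>
      rw [heatU.eq_3 δ (k + 1) m]
      refine le_trans ?_ (heatU.eq_3 δ k m).ge
      have := mul_le_mul_of_nonneg_left (ih (m+1)) (by linarith : 0 ≤ 1 - 2 * δ)
      have := mul_le_mul_of_nonneg_left (add_le_add (ih (m+2)) (ih m)) h0.le
      linarith

lemma heatU_tendsto (δ : ℝ) (h0 : 0 < δ) (h1 : δ ≤ 1 / 2) (m : ℕ) :
    Tendsto (fun k => heatU δ k m) atTop (nhds 0) := by
  have hex : ∀ m, ∃ l, Tendsto (fun k => heatU δ k m) atTop (nhds l) := fun m =>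
    ⟨_, tendsto_atTop_ciInf (antitone_nat_of_succ_le fun k => heatU_anti δ h0 h1 k m)
      ⟨0, by rintro _ ⟨k, rfl⟩; exact (heatU_bounds δ h0 h1 k m).1⟩⟩
  choose l hl using hex
  have hl0 : l 0 = 0 := by
    refine tendsto_nhds_unique (hl 0) ?_
    simp [heatU_zero_right]
  have hrec : ∀ m, l (m + 2) = 2 * l (m + 1) - l m := by
    intro m
    have ha := (tendsto_add_atTop_iff_nat 1).2 (hl (m + 1))
    have hb : Tendsto (fun k => heatU δ (k + 1) (m + 1)) atTop
        (nhds ((1 - 2 * δ) * l (m + 1) + δ * (l (m + 2) + l m))) := by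
      simp only [heatU]
      exact ((hl (m+1)).const_mul _).add (((hl (m+2)).add (hl m)).const_mul _)
    have := tendsto_nhds_unique ha hb
    have h2 : δ * (l (m + 2) - (2 * l (m + 1) - l m)) = 0 := by linarith
    rcases mul_eq_zero.1 h2 with h | h <;> linarith
  have hlin : ∀ m : ℕ, l m = m * l 1 ∧ l (m + 1) = (m + 1) * l 1 := by
    intro m
    induction m with
    | zero => simp [hl0]
    | succ m ih =>
      refine ⟨by push_cast; exact ih.2, ?_⟩
      rw [hrec, ih.1, ih.2]; push_cast; ring
  have hb : ∀ m, 0 ≤ l m ∧ l m ≤ 1 := fun m =>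
    ⟨ge_of_tendsto' (hl m) fun k => (heatU_bounds δ h0 h1 k m).1,
      le_of_tendsto' (hl m) fun k => (heatU_bounds δ h0 h1 k m).2⟩
  have hl1 : l 1 = 0 := by
    by_contra hne
    have hpos : 0 < l 1 := lt_of_le_of_ne (hb 1).1 (Ne.symm hne)
    obtain ⟨N, hN⟩ := exists_nat_gt (1 / l 1)
    rw [div_lt_iff₀ hpos] at hN
    have := (hb N).2
    rw [(hlin N).1] at this
    linarith
  have := hl m
  rwa [(hlin m).1, hl1, mul_zero] at this

lemma avg_bound (δ : ℝ) (h1 : δ ≤ 1 / 2) (μ : Measure ℤ) [IsProbabilityMeasure μ]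
    (hμ : ∀ a, μ.real {a} ≤ 1 - δ) (t : ℤ → ℝ) (U W : ℝ) (ht0 : ∀ a, 0 ≤ t a)
    (htU : ∀ a, t a ≤ U) (hW : ∀ a b, a ≠ b → t a + t b ≤ W) (hd : 0 < δ) :
    ∫ a, t a ∂μ ≤ (1 - 2 * δ) * U + δ * W := by
  have hintg : Integrable t μ := by
    refine Integrable.of_bound (C := U) (measurable_from_top.aestronglyMeasurable) ?_
    exact Eventually.of_forall fun a => by
      rw [Real.norm_eq_abs, abs_of_nonneg (ht0 a)]; exact htU a
  have hconst : ∀ C, (∀ a, t a ≤ C) → ∫ a, t a ∂μ ≤ C := by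
    intro C hC
    calc ∫ a, t a ∂μ ≤ ∫ a, C ∂μ := integral_mono hintg (integrable_const _) hC
      _ = C := by simp
  by_cases hWU : 2 * U ≤ W
  · have := hconst U htU
    nlinarith
  push Not at hWU
  by_cases hex : ∃ a, W / 2 < t a
  · obtain ⟨a, ha⟩ := hex
    have hle : ∀ b, t b ≤ (W - t a) + Set.indicator {a} (fun _ => 2 * t a - W) b := by
      intro b
      by_cases hb : b = a
      · subst hb; simp; linarith
      · simp [hb]; have := hW b a hb; linarith
    have hi : Integrable (Set.indicator {a} (fun _ : ℤ => 2 * t a - W)) μ :=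
      (integrable_const _).indicator (measurableSet_singleton a)
    have := integral_mono hintg ((integrable_const (W - t a)).add hi) hle
    have h3 : ∫ b, ((fun _ : ℤ => W - t a) + Set.indicator {a} (fun _ : ℤ => 2 * t a - W) : ℤ → ℝ) b ∂μ
        = (W - t a) + μ.real {a} * (2 * t a - W) := by
      simp only [Pi.add_apply]
      rw [integral_add (integrable_const _) hi, integral_indicator (measurableSet_singleton a)]
      simp
      exact Or.inl rfl
    rw [h3] at this
    have h4 := mul_le_mul_of_nonneg_right (hμ a) (by linarith : 0 ≤ 2 * t a - W)
    have h5 := mul_le_mul_of_nonneg_left (htU a) (by linarith : 0 ≤ 1 - 2 * δ)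
    linarith
  · push Not at hex
    have := hconst _ hex
    nlinarith

lemma pi_split {n : ℕ} (α : Type) [MeasurableSpace α] [Countable α] [MeasurableSingletonClass α]
    (μ : Fin (n + 1) → Measure α)
    [∀ j, IsProbabilityMeasure (μ j)] (i : Fin (n + 1)) (E : Set (Fin (n + 1) → α)) :
    Measure.pi μ E = ((μ i).prod (Measure.pi fun j => μ (i.succAbove j)))
      {p | i.insertNth (α := fun _ => α) p.1 p.2 ∈ E} := by
  have h := (measurePreserving_piFinSuccAbove (fun j : Fin (n+1) => μ j) i).symm
  rw [← h.measure_preimage (Set.to_countable E).measurableSet.nullMeasurableSet]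
  rfl

lemma pi_real_split {n : ℕ} (μ : Fin (n + 1) → Measure ℤ)
    [∀ j, IsProbabilityMeasure (μ j)] (i : Fin (n + 1)) (E : Set (Fin (n + 1) → ℤ)) :
    (Measure.pi μ).real E = ∫ a, (Measure.pi fun j => μ (i.succAbove j)).real
      {y | i.insertNth (α := fun _ => ℤ) a y ∈ E} ∂(μ i) := by
  rw [Measure.real, pi_split, Measure.prod_apply (Set.to_countable _).measurableSet]
  rw [← integral_toReal measurable_from_top.aemeasurable
    (Eventually.of_forall fun a => measure_lt_top _ _)]
  rfl

lemma LO (δ : ℝ) (h0 : 0 < δ) (h1 : δ ≤ 1 / 2) : ∀ (n : ℕ) (μ : Fin n → Measure ℤ)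
    (_ : ∀ j, IsProbabilityMeasure (μ j)) (_ : ∀ j a, (μ j).real {a} ≤ 1 - δ)
    (c : Fin n → ℤ) (k : ℕ) (_ : k ≤ (Finset.univ.filter fun j => c j ≠ 0).card) (T : Finset ℤ),
    (Measure.pi μ).real {x | ∑ j, c j * x j ∈ T} ≤ heatU δ k T.card := by
  intro n
  induction n with
  | zero =>
    intro μ _ hμ c k hk T
    have hk0 : k = 0 := by simpa using hk
    subst hk0
    by_cases hT : T = ∅
    · subst hT; simp [heatU]
    · simp only [heatU, Finset.card_eq_zero, hT, if_false]
      exact measureReal_le_one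
  | succ n ih =>
    intro μ hp hμ c k hk T
    by_cases hT : T = ∅
    · subst hT; simp [heatU_zero_right]
    rw [pi_real_split μ 0]
    set ρ := Measure.pi fun j : Fin n => μ (Fin.succAbove 0 j) with hρ
    set c' : Fin n → ℤ := fun j => c j.succ with hc'
    set T' : ℤ → Finset ℤ := fun a => T.map (addRightEmbedding (-(c 0 * a))) with hT'
    have hcard : ∀ a, (T' a).card = T.card := fun a => by simp [hT']
    have hset : ∀ a, {y : Fin n → ℤ | Fin.insertNth (α := fun _ => ℤ) 0 a y ∈
        {x : Fin (n+1) → ℤ | ∑ j, c j * x j ∈ T}} = {y | ∑ j, c' j * y j ∈ T' a} := by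
      intro a
      ext y
      simp only [Set.mem_ofPred_eq, Fin.sum_univ_succ, Fin.insertNth_zero', Fin.cons_zero,
        Fin.cons_succ, hT', hc', Finset.mem_map, addRightEmbedding_apply]
      constructor
      · intro h; exact ⟨_, h, by ring⟩
      · rintro ⟨b, hb, h⟩
        convert hb using 1
        rw [← h]; ring
    simp only [hset]
    have hcount : (Finset.univ.filter fun j => c j ≠ 0).card =
        (if c 0 ≠ 0 then 1 else 0) + (Finset.univ.filter fun j => c' j ≠ 0).card := by
      rw [Fin.card_filter_univ_succ]
      split_ifs <;> simp [hc', Function.comp_def] <;> omega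
    have ih' := fun k hk S => ih (fun j => μ (Fin.succAbove 0 j)) (fun j => hp _)
      (fun j a => hμ _ a) c' k hk S
    have hintg : ∀ S : ℤ → Finset ℤ,
        Integrable (fun a => ρ.real {y : Fin n → ℤ | ∑ j, c' j * y j ∈ S a}) (μ 0) := by
      intro S
      refine Integrable.of_bound (C := 1) (measurable_from_top.aestronglyMeasurable) ?_
      exact Eventually.of_forall fun a => by
        rw [Real.norm_eq_abs, abs_of_nonneg measureReal_nonneg]; exact measureReal_le_one
    by_cases hk' : k ≤ (Finset.univ.filter fun j => c' j ≠ 0).card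
    · calc _ ≤ ∫ a, heatU δ k T.card ∂(μ 0) := by
            refine integral_mono (hintg T') (integrable_const _) fun a => ?_
            have := ih' k hk' (T' a)
            rwa [hcard] at this
        _ = _ := by simp
    · have hc0 : c 0 ≠ 0 := by
        intro h; rw [hcount] at hk; simp [h] at hk; exact hk' (by simpa using hk)
      obtain ⟨k, rfl⟩ : ∃ k', k = k' + 1 := ⟨k - 1, by omega⟩
      have hk2 : k ≤ (Finset.univ.filter fun j => c' j ≠ 0).card := by
        rw [hcount, if_pos hc0] at hk; omega
      obtain ⟨m, hm⟩ : ∃ m, T.card = m + 1 :=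
        ⟨T.card - 1, by have := Finset.card_pos.2 (Finset.nonempty_iff_ne_empty.2 hT); omega⟩
      rw [hm]
      simp only [heatU]
      have hun : ∀ (A : Finset ℤ), MeasurableSet {y : Fin n → ℤ | ∑ j, c' j * y j ∈ A} :=
        fun A => (Set.to_countable _).measurableSet
      refine avg_bound δ h1 (μ 0) (hμ 0) _ _ _ (fun a => measureReal_nonneg) ?_ ?_ h0
      · intro a
        have := ih' k hk2 (T' a)
        rwa [hcard, hm] at this
      · intro a b hab
        have hne : ¬ (T' a ⊆ T' b) := by
          intro hsub
          have heq := Finset.eq_of_subset_of_card_le hsub (by rw [hcard, hcard])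
          have hs : ∑ x ∈ T' a, x = ∑ x ∈ T' b, x := by rw [heq]
          simp only [hT', Finset.sum_map, addRightEmbedding_apply, Finset.sum_add_distrib,
            Finset.sum_const, hm] at hs
          have h5 : (m + 1 : ℤ) * (c 0 * (a - b)) = 0 := by
            simp only [nsmul_eq_mul] at hs; push_cast at hs; linarith
          have h6 : (m + 1 : ℤ) ≠ 0 := by positivity
          have h7 : a - b ≠ 0 := sub_ne_zero.2 hab
          exact (mul_ne_zero h6 (mul_ne_zero hc0 h7)) h5
        obtain ⟨x, hxa, hxb⟩ := Finset.not_subset.1 hne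
        have i1 := ih' k hk2 (insert x (T' b))
        have i2 := ih' k hk2 ((T' a).erase x)
        rw [Finset.card_insert_of_notMem hxb, hcard, hm] at i1
        rw [Finset.card_erase_of_mem hxa, hcard, hm, Nat.add_sub_cancel] at i2
        have e1 : ρ.real {y : Fin n → ℤ | ∑ j, c' j * y j ∈ insert x (T' b)} =
            ρ.real {y : Fin n → ℤ | ∑ j, c' j * y j ∈ T' b} +
            ρ.real {y : Fin n → ℤ | ∑ j, c' j * y j ∈ ({x} : Finset ℤ)} := by
          rw [← measureReal_union _ (hun _)]
          · congr 1; ext y; simp [or_comm]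
          · rw [Set.disjoint_left]; intro y hy hy2
            simp only [Set.mem_ofPred_eq, Finset.mem_singleton] at hy hy2
            exact hxb (hy2 ▸ hy)
        have e2 : ρ.real {y : Fin n → ℤ | ∑ j, c' j * y j ∈ T' a} =
            ρ.real {y : Fin n → ℤ | ∑ j, c' j * y j ∈ (T' a).erase x} +
            ρ.real {y : Fin n → ℤ | ∑ j, c' j * y j ∈ ({x} : Finset ℤ)} := by
          rw [← measureReal_union _ (hun _)]
          · congr 1; ext y
            simp only [Set.mem_ofPred_eq, Set.mem_union, Finset.mem_erase, Finset.mem_singleton]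
            by_cases h : ∑ j, c' j * y j = x
            · simp [h, hxa]
            · simp [h]
          · rw [Set.disjoint_left]; intro y hy hy2
            simp only [Set.mem_ofPred_eq, Finset.mem_singleton, Finset.mem_erase] at hy hy2
            exact hy.1 hy2
        linarith

lemma parity_bound {n : ℕ} (q : ENNReal) (μ : Fin (n + 1) → Measure ℤ)
    [∀ j, IsProbabilityMeasure (μ j)]
    (hμ : ∀ j (r : ZMod 2), μ j {x : ℤ | (x : ZMod 2) = r} ≤ q)
    (s : Finset (Fin (n + 1))) (hs : s.Nonempty) :
    Measure.pi μ {x | ((∑ j ∈ s, x j : ℤ) : ZMod 2) = 0} ≤ q := by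
  obtain ⟨i, hi⟩ := hs
  rw [pi_split ℤ μ i, Measure.prod_apply_symm (Set.to_countable _).measurableSet]
  calc _ ≤ ∫⁻ y, q ∂(Measure.pi fun j => μ (i.succAbove j)) := by
        refine lintegral_mono fun y => ?_
        refine le_trans (measure_mono ?_) (hμ i
          (-((∑ j ∈ s.erase i, Fin.insertNth (α := fun _ => ℤ) i 0 y j : ℤ) : ZMod 2)))
        intro a ha
        have ha' : ((∑ j ∈ s, Fin.insertNth (α := fun _ => ℤ) i a y j : ℤ) : ZMod 2) = 0 := ha
        rw [← Finset.add_sum_erase _ _ hi, Fin.insertNth_apply_same] at ha'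
        have he : ∑ j ∈ s.erase i, Fin.insertNth (α := fun _ => ℤ) i a y j =
            ∑ j ∈ s.erase i, Fin.insertNth (α := fun _ => ℤ) i 0 y j := by
          refine Finset.sum_congr rfl fun j hj => ?_
          obtain ⟨l, rfl⟩ := Fin.exists_succAbove_eq (Finset.ne_of_mem_erase hj)
          simp
        rw [he, Int.cast_add] at ha'
        exact eq_neg_of_add_eq_zero_left ha'
    _ = q := by simp

/-- the exceptional set of rows -/
def badRows (N k : ℕ) : Set (Fin N → Fin (N + 1) → ℤ) :=
  {Y | ∃ s : Finset (Fin (N + 1)), s.Nonempty ∧ s.card ≤ k ∧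
    ∀ i, ((∑ j ∈ s, Y i j : ℤ) : ZMod 2) = 0}

lemma badRows_bound (N k : ℕ) (q : ENNReal) (ν : Fin N → Fin (N + 1) → Measure ℤ)
    [∀ i j, IsProbabilityMeasure (ν i j)]
    (hν : ∀ i j (r : ZMod 2), ν i j {x : ℤ | (x : ZMod 2) = r} ≤ q) :
    (Measure.pi fun i => Measure.pi fun j => ν i j) (badRows N k) ≤
      ∑ l ∈ Finset.range (k + 1), ((N + 1 : ℕ) : ENNReal) ^ l * q ^ N := by
  set ρ := (Measure.pi fun i => Measure.pi fun j => ν i j) with hρ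
  have hs : ∀ s : Finset (Fin (N + 1)),
      ρ {Y | s.Nonempty ∧ ∀ i, ((∑ j ∈ s, Y i j : ℤ) : ZMod 2) = 0} ≤ q ^ N := by
    intro s
    by_cases hne : s.Nonempty
    · have : {Y : Fin N → Fin (N + 1) → ℤ |
          s.Nonempty ∧ ∀ i, ((∑ j ∈ s, Y i j : ℤ) : ZMod 2) = 0} =
          Set.univ.pi fun _ => {x | ((∑ j ∈ s, x j : ℤ) : ZMod 2) = 0} := by
        ext Y; simp [hne]
      rw [this, hρ, Measure.pi_pi]
      calc _ ≤ ∏ i : Fin N, q := Finset.prod_le_prod' fun i _ => parity_bound q (ν i) (hν i) s hne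
        _ = q ^ N := by simp
    · simp [hne]
  have hsub : badRows N k ⊆ ⋃ l ∈ Finset.range (k + 1),
      ⋃ s ∈ Finset.powersetCard l (Finset.univ : Finset (Fin (N + 1))),
        {Y | s.Nonempty ∧ ∀ i, ((∑ j ∈ s, Y i j : ℤ) : ZMod 2) = 0} := by
    rintro Y ⟨s, h1, h2, h3⟩
    simp only [Set.mem_iUnion]
    exact ⟨s.card, by simp; omega, s, by simp, h1, h3⟩
  refine (measure_mono hsub).trans ((measure_biUnion_finset_le _ _).trans ?_)
  refine Finset.sum_le_sum fun l _ => (measure_biUnion_finset_le _ _).trans ?_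
  refine (Finset.sum_le_sum fun s _ => hs s).trans ?_
  rw [Finset.sum_const, Finset.card_powersetCard, nsmul_eq_mul]
  refine mul_le_mul_left ?_ _
  rw [Finset.card_univ, Fintype.card_fin]
  exact_mod_cast Nat.choose_le_pow (N + 1) l

/-- cofactors along row zero -/
def cof {N : ℕ} (Y : Fin N → Fin (N + 1) → ℤ) (j : Fin (N + 1)) : ℤ :=
  (-1) ^ (j : ℕ) * (Matrix.of fun a b => Y a (j.succAbove b)).det

lemma det_cons {N : ℕ} (Y : Fin N → Fin (N + 1) → ℤ) (x : Fin (N + 1) → ℤ) :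
    (Matrix.of (Fin.cons (α := fun _ => Fin (N + 1) → ℤ) x Y)).det = ∑ j, cof Y j * x j := by
  rw [Matrix.det_succ_row_zero]
  refine Finset.sum_congr rfl fun j _ => ?_
  have : (Matrix.of (Fin.cons (α := fun _ => Fin (N + 1) → ℤ) x Y)).submatrix Fin.succ j.succAbove
      = Matrix.of fun a b => Y a (j.succAbove b) := by
    ext a b; simp
  rw [this, cof]
  simp; ring

lemma cof_orth {N : ℕ} (Y : Fin N → Fin (N + 1) → ℤ) (i : Fin N) :
    ∑ j, cof Y j * Y i j = 0 := by
  rw [← det_cons]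
  refine Matrix.det_zero_of_row_eq (i := 0) (j := i.succ) (Fin.succ_ne_zero i).symm ?_
  ext b; simp

lemma support_large {N k : ℕ} (Y : Fin N → Fin (N + 1) → ℤ) (hY : Y ∉ badRows N k)
    (hc : cof Y ≠ 0) : k ≤ (Finset.univ.filter fun j => cof Y j ≠ 0).card := by
  by_contra hlt
  push Not at hlt
  obtain ⟨g, hg, hg1⟩ := Finset.extract_gcd (s := Finset.univ) (cof Y) Finset.univ_nonempty
  set d := Finset.univ.gcd (cof Y) with hd
  have hd0 : d ≠ 0 := by
    intro h
    apply hc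
    ext j
    rw [hg j (Finset.mem_univ j), h]; simp
  have horth : ∀ i, ∑ j, g j * Y i j = 0 := by
    intro i
    have := cof_orth Y i
    have h2 : d * ∑ j, g j * Y i j = 0 := by
      rw [← this, Finset.mul_sum]
      refine Finset.sum_congr rfl fun j hj => ?_
      rw [hg j hj]; ring
    exact (mul_eq_zero.1 h2).resolve_left hd0
  apply hY
  refine ⟨Finset.univ.filter fun j => ((g j : ℤ) : ZMod 2) ≠ 0, ?_, ?_, ?_⟩
  · by_contra hemp
    rw [Finset.not_nonempty_iff_eq_empty, Finset.filter_eq_empty_iff] at hemp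
    have : (2 : ℤ) ∣ Finset.univ.gcd g := Finset.dvd_gcd fun j hj => by
      have := hemp hj
      push Not at this
      exact (ZMod.intCast_zmod_eq_zero_iff_dvd (g j) 2).1 this
    rw [hg1] at this
    norm_num at this
  · refine (Finset.card_le_card ?_).trans hlt.le
    intro j
    simp only [Finset.mem_filter, Finset.mem_univ, true_and]
    intro h h2
    apply h
    rw [hg j (Finset.mem_univ j)] at h2
    rw [(mul_eq_zero.1 h2).resolve_left hd0]; simp
  · intro i
    have h := congrArg (Int.cast : ℤ → ZMod 2) (horth i)
    push_cast at h ⊢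
    rw [Finset.sum_filter]
    refine Eq.trans ?_ h
    refine Finset.sum_congr rfl fun j _ => ?_
    have : ∀ z : ZMod 2, z = 0 ∨ z = 1 := by decide
    rcases this (g j : ZMod 2) with h | h <;> simp [h]

lemma det_of_surj {n : ℕ} (A : Fin n → Fin n → ℤ)
    (h : Function.Surjective (Matrix.of A).mulVecLin) :
    (Matrix.of A).det = 1 ∨ (Matrix.of A).det = -1 := by
  obtain ⟨B, hB⟩ := Matrix.mulVec_surjective_iff_exists_right_inverse.1 h
  exact Int.isUnit_iff.1 (Matrix.isUnit_det_of_right_inverse hB)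

lemma main_bound (δ : ℝ) (h0 : 0 < δ) (h1 : δ ≤ 1 / 2) (N k : ℕ)
    (ν : Fin (N + 1) → Fin (N + 1) → Measure ℤ)
    (hp : ∀ i j, IsProbabilityMeasure (ν i j))
    (hν : ∀ i j (r : ZMod 2), ν i j {x : ℤ | (x : ZMod 2) = r} ≤ ENNReal.ofReal (1 - δ)) :
    ((matrixLaw ν) {A | Function.Surjective (Matrix.of A).mulVecLin}).toReal ≤
      (∑ l ∈ Finset.range (k + 1), ((N + 1 : ℕ) : ℝ) ^ l * (1 - δ) ^ N) + heatU δ k 2 := by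
  have hu := (heatU_bounds δ h0 h1 k 2).1
  have hδ : (0 : ℝ) ≤ 1 - δ := by linarith
  have hsum : 0 ≤ ∑ l ∈ Finset.range (k + 1), ((N + 1 : ℕ) : ℝ) ^ l * (1 - δ) ^ N := by
    positivity
  refine ENNReal.toReal_le_of_le_ofReal (by positivity) ?_
  have hatom : ∀ j a, (ν 0 j).real {a} ≤ 1 - δ := by
    intro j a
    refine ENNReal.toReal_le_of_le_ofReal hδ ((measure_mono ?_).trans (hν 0 j (a : ZMod 2)))
    intro x hx
    rw [Set.mem_singleton_iff.1 hx]; rfl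
  rw [matrixLaw, pi_split _ _ 0, Measure.prod_apply_symm (Set.to_countable _).measurableSet]
  set ρ := (Measure.pi fun i : Fin N => Measure.pi fun j => ν (Fin.succAbove 0 i) j) with hρ
  have hB := badRows_bound N k _ (fun i j => ν (Fin.succAbove 0 i) j) (fun i j r => hν _ j r)
  rw [← hρ] at hB
  calc _ ≤ ∫⁻ Y, ((badRows N k).indicator 1 Y + ENNReal.ofReal (heatU δ k 2)) ∂ρ := by
        refine lintegral_mono fun Y => ?_
        by_cases hY : Y ∈ badRows N k
        · simp only [Set.indicator_of_mem hY, Pi.one_apply]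
          exact prob_le_one.trans le_self_add
        · simp only [Set.indicator_of_notMem hY, zero_add]
          by_cases hc : cof Y = 0
          · refine (measure_mono (t := ∅) ?_).trans (by simp)
            intro x hx
            have hdet := det_of_surj _ hx
            rw [Fin.insertNth_zero', det_cons, hc] at hdet
            simp at hdet
          · have := LO δ h0 h1 (N + 1) (ν 0) (hp 0) hatom (cof Y) k (support_large Y hY hc) {1, -1}
            rw [show ({1, -1} : Finset ℤ).card = 2 from rfl] at this
            refine le_trans (measure_mono ?_) (ENNReal.le_ofReal_iff_toReal_le (measure_ne_top _ _) hu |>.2 this)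
            intro x hx
            have hdet := det_of_surj _ hx
            rw [Fin.insertNth_zero', det_cons] at hdet
            simpa using hdet
    _ = ρ (badRows N k) + ENNReal.ofReal (heatU δ k 2) := by
        rw [lintegral_add_right _ measurable_const,
          lintegral_indicator_one (Set.to_countable _).measurableSet]
        simp
    _ ≤ _ := by
        rw [ENNReal.ofReal_add hsum hu]
        refine add_le_add (hB.trans (le_of_eq ?_)) le_rfl
        rw [ENNReal.ofReal_sum_of_nonneg (fun l _ => by positivity)]
        refine Finset.sum_congr rfl fun l _ => ?_
        rw [ENNReal.ofReal_mul (by positivity), ENNReal.ofReal_pow (by positivity),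
          ENNReal.ofReal_pow hδ, ENNReal.ofReal_natCast]

theorem stmt2 (ε : ℝ) (hε : 0 < ε)
    (ν : (n : ℕ) → Fin n → Fin n → Measure ℤ)
    (hprob : ∀ n i j, IsProbabilityMeasure (ν n i j))
    (hbal : ∀ n i j, IsBalanced ε (ν n i j)) :
    Tendsto (fun n : ℕ =>
        ((matrixLaw (ν n)) {A | Function.Surjective (Matrix.of A).mulVecLin}).toReal) atTop
      (nhds 0) := by
  set δ := min ε (1 / 2) with hδ
  have h0 : 0 < δ := by positivity
  have h1 : δ ≤ 1 / 2 := min_le_right _ _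
  rw [← tendsto_add_atTop_iff_nat 1, Metric.tendsto_atTop']
  intro η hη
  obtain ⟨k, hk⟩ := ((heatU_tendsto δ h0 h1 2).eventually_lt_const (half_pos hη)).exists
  have hlim : Tendsto (fun N : ℕ => ∑ l ∈ Finset.range (k + 1),
      ((N + 1 : ℕ) : ℝ) ^ l * (1 - δ) ^ N) atTop (nhds 0) := by
    rw [← Finset.sum_const_zero (s := Finset.range (k + 1)) (ι := ℕ) (M := ℝ)]
    refine tendsto_finsetSum _ fun l _ => ?_
    have h := (tendsto_add_atTop_iff_nat 1).2
      (tendsto_pow_const_mul_const_pow_of_lt_one l (r := 1 - δ) (by linarith) (by linarith))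
    have h2 := h.mul_const (1 - δ)⁻¹
    rw [zero_mul] at h2
    refine h2.congr fun N => ?_
    have : (1 - δ) ≠ 0 := by linarith
    rw [pow_succ (1 - δ)]
    field_simp
  obtain ⟨N0, hN0⟩ := eventually_atTop.1 (hlim.eventually_lt_const (half_pos hη))
  refine ⟨N0, fun N hN => ?_⟩
  rw [Real.dist_eq, sub_zero, abs_of_nonneg ENNReal.toReal_nonneg]
  have := main_bound δ h0 h1 N k (ν (N + 1)) (hprob _) (fun i j r =>
    (hbal (N + 1) i j 2 Nat.prime_two r).trans
      (ENNReal.ofReal_le_ofReal (by have := min_le_left ε (1 / 2); linarith)))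
  have := hN0 N hN.le
  linarith
end

section
/- Fix an integer u ≥ 1. Let R = ∏_{p prime} ℤ_p be the product over all primes of the rings of p-adic integers, and for each n let A be a random n×(n+u) matrix over R whose entries are independent and identically distributed according to the Haar probability measure on R. Then lim_{n→∞} P(A : R^(n+u) → R^n is surjective) = ∏_{k=u+1}^{∞} ζ(k)^(−1), where ζ is the Riemann zeta function. -/
open MeasureTheory Filter

instance (p : Nat.Primes) : Fact (Nat.Prime (p : ℕ)) := ⟨p.2⟩

noncomputable instance (p : ℕ) [Fact p.Prime] : MeasurableSpace ℤ_[p] := borel _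

instance (p : ℕ) [Fact p.Prime] : BorelSpace ℤ_[p] := ⟨rfl⟩

/-- The product of the rings of `p`-adic integers over all primes `p`
(isomorphic to the profinite completion of `ℤ`). -/
abbrev Zhat : Type := ∀ p : Nat.Primes, ℤ_[(p : ℕ)]

namespace SurjAux

/-- Left-invariant probability measures push forward to uniform ones on finite quotients. -/
lemma uniform_preimage {G H : Type*} [AddGroup G] [MeasurableSpace G] [MeasurableAdd G]
    (ν : Measure G) [IsProbabilityMeasure ν] [ν.IsAddLeftInvariant]
    [AddGroup H] [Finite H] (φ : G →+ H) (hφ : Function.Surjective φ)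
    (hm : ∀ h, MeasurableSet (φ ⁻¹' {h})) (T : Set H) :
    (ν (φ ⁻¹' T)).toReal = (Nat.card T : ℝ) / Nat.card H := by
  classical
  have := Fintype.ofFinite H
  have hc : ∀ h, ν (φ ⁻¹' {h}) = ν (φ ⁻¹' {0}) := by
    intro h
    obtain ⟨g, rfl⟩ := hφ h
    rw [← measure_preimage_add ν g (φ ⁻¹' {φ g})]
    congr 1
    ext x
    simp
  have key : ∀ S : Finset H, ν (φ ⁻¹' (S : Set H)) = S.card * ν (φ ⁻¹' {0}) := by
    intro S
    have : φ ⁻¹' (S : Set H) = ⋃ h ∈ S, φ ⁻¹' {h} := by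
      ext x; simp
    rw [this, measure_biUnion_finset _ (fun h _ => hm h)]
    · simp [hc]
    · intro a _ b _ hab
      exact Disjoint.preimage _ (by simpa using hab)
  have h1 := key Finset.univ
  simp only [Finset.coe_univ, Set.preimage_univ, measure_univ, Finset.card_univ] at h1
  have h2 := key T.toFinset
  simp only [Set.coe_toFinset] at h2
  have h1' := congrArg ENNReal.toReal h1
  simp only [ENNReal.toReal_one, ENNReal.toReal_mul, ENNReal.toReal_natCast] at h1'
  rw [h2, ENNReal.toReal_mul, ENNReal.toReal_natCast, Nat.card_eq_fintype_card,
    Nat.card_eq_fintype_card, Set.toFinset_card]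
  have hH : (Fintype.card H : ℝ) ≠ 0 := by
    intro h; rw [h] at h1'; simp at h1'
  rw [eq_div_iff hH, mul_assoc, mul_comm (ENNReal.toReal _), ← h1', mul_one]

lemma measurable_fiber (p : ℕ) [Fact p.Prime] (a : ZMod p) :
    MeasurableSet {x : ℤ_[p] | PadicInt.toZMod x = a} := by
  apply IsOpen.measurableSet
  rw [Metric.isOpen_iff]
  intro x hx
  refine ⟨1, one_pos, fun y hy => ?_⟩
  have h : y - x ∈ RingHom.ker (PadicInt.toZMod : ℤ_[p] →+* ZMod p) := by
    rw [PadicInt.ker_toZMod, IsLocalRing.mem_maximalIdeal, PadicInt.mem_nonunits]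
    simpa [dist_eq_norm] using hy
  rw [RingHom.mem_ker, map_sub, sub_eq_zero] at h
  exact h.trans hx

lemma li_iff {K : Type*} [Field K] {n m : ℕ} (A : Matrix (Fin n) (Fin m) K) :
    LinearIndependent K A.row ↔ ∃ B : Matrix (Fin m) (Fin n) K, A * B = 1 := by
  constructor
  · intro h
    rw [← Matrix.mulVec_surjective_iff_exists_right_inverse]
    have h1 := h.rank_matrix
    have : LinearMap.range A.mulVecLin = ⊤ := by
      apply Submodule.eq_top_of_finrank_eq
      simpa [Matrix.rank] using h1
    exact LinearMap.range_eq_top.1 this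
  · rintro ⟨B, hB⟩
    rw [← Matrix.vecMul_injective_iff]
    intro v w h
    have h2 := congrArg (fun z => Matrix.vecMul z B) h
    simpa [Matrix.vecMul_vecMul, hB] using h2

lemma lift_right_inverse (p : ℕ) [Fact p.Prime] {n m : ℕ} (A : Matrix (Fin n) (Fin m) ℤ_[p])
    (h : ∃ B : Matrix (Fin m) (Fin n) (ZMod p), A.map PadicInt.toZMod * B = 1) :
    ∃ B : Matrix (Fin m) (Fin n) ℤ_[p], A * B = 1 := by
  obtain ⟨B, hB⟩ := h
  have hs := ZMod.ringHom_surjective (PadicInt.toZMod (p := p))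
  choose g hg using hs
  have hC : (A * B.map g).map PadicInt.toZMod = 1 := by
    rw [Matrix.map_mul, Matrix.map_map]
    have : (PadicInt.toZMod ∘ g) = id := funext hg
    rw [this, Matrix.map_id, hB]
  have hd : IsUnit (A * B.map g).det := by
    by_contra hcon
    have : (A * B.map g).det ∈ RingHom.ker (PadicInt.toZMod : ℤ_[p] →+* ZMod p) := by
      rw [PadicInt.ker_toZMod]; exact hcon
    rw [RingHom.mem_ker, RingHom.map_det, RingHom.mapMatrix_apply, hC, Matrix.det_one] at this
    exact one_ne_zero this
  exact ⟨B.map g * (A * B.map g)⁻¹, by rw [← Matrix.mul_assoc, Matrix.mul_nonsing_inv _ hd]⟩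

/-- Reduction of a matrix modulo one prime. -/
noncomputable def red (n m : ℕ) (p : Nat.Primes) (A : Fin n → Fin m → Zhat) :
    Fin n → Fin m → ZMod (p : ℕ) := fun i j => PadicInt.toZMod (A i j p)

lemma surj_iff (n m : ℕ) (A : Fin n → Fin m → Zhat) :
    Function.Surjective (Matrix.of A).mulVecLin ↔
      ∀ p : Nat.Primes, LinearIndependent (ZMod (p : ℕ)) (red n m p A) := by
  constructor
  · intro h p
    have h' : Function.Surjective (Matrix.of A).mulVec := h
    rw [Matrix.mulVec_surjective_iff_exists_right_inverse] at h'
    obtain ⟨B, hB⟩ := h'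
    refine (li_iff (Matrix.of (red n m p A))).2 ?_
    let f : Zhat →+* ZMod (p : ℕ) := PadicInt.toZMod.comp (Pi.evalRingHom _ p)
    refine ⟨B.map f, ?_⟩
    have : Matrix.of (red n m p A) = (Matrix.of A).map f := rfl
    rw [this, ← Matrix.map_mul, hB]
    simp
  · intro h w
    have h2 : ∀ p : Nat.Primes, ∃ v : Fin m → ℤ_[(p : ℕ)],
        (Matrix.of fun i j => A i j p).mulVec v = fun i => w i p := by
      intro p
      have h3 := lift_right_inverse p (Matrix.of fun i j => A i j p)
        ((li_iff (Matrix.of (red n m p A))).1 (h p))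
      rw [← Matrix.mulVec_surjective_iff_exists_right_inverse] at h3
      exact h3 _
    choose v hv using h2
    refine ⟨fun j p => v p j, ?_⟩
    ext i p
    have := congrFun (hv p) i
    rw [← this]
    simp [Matrix.mulVec, dotProduct]

lemma card_li (p : ℕ) [Fact p.Prime] (n u : ℕ) :
    (Nat.card {s : Fin n → Fin (n + u) → ZMod p // LinearIndependent (ZMod p) s} : ℝ) /
      Nat.card (Fin n → Fin (n + u) → ZMod p) =
      ∏ k ∈ Finset.range n, (1 - ((p : ℝ) ^ (k + u + 1))⁻¹) := by
  have hp : (p : ℝ) ≠ 0 := by exact_mod_cast (Fact.out : p.Prime).ne_zero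
  have hp1 : 1 ≤ p := (Fact.out : p.Prime).one_lt.le
  rw [card_linearIndependent (by simp)]
  simp only [Module.finrank_fin_fun, ZMod.card, Nat.card_pi, Nat.card_zmod, Finset.prod_const,
    Finset.card_univ, Fintype.card_fin, Nat.cast_prod, Nat.cast_pow]
  rw [Fin.prod_univ_eq_prod_range (fun i => ((p ^ (n + u) - p ^ i : ℕ) : ℝ)) n,
    ← Finset.prod_range_reflect]
  have : ((p : ℝ) ^ (n + u)) ^ n = ∏ k ∈ Finset.range n, (p : ℝ) ^ (n + u) := by simp
  rw [this, ← Finset.prod_div_distrib]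
  refine Finset.prod_congr rfl fun k hk => ?_
  have hk := Finset.mem_range.1 hk
  rw [Nat.cast_sub (Nat.pow_le_pow_right hp1 (by omega))]
  push_cast
  have e : (p : ℝ) ^ (n + u) = (p : ℝ) ^ (n - 1 - k) * (p : ℝ) ^ (k + u + 1) := by
    rw [← pow_add]; congr 1; omega
  rw [e]
  field_simp

lemma measure_finset (n u : ℕ) (μ : Measure Zhat) [IsProbabilityMeasure μ] [μ.IsAddHaarMeasure]
    (S : Finset Nat.Primes) :
    MeasurableSet {A : Fin n → Fin (n + u) → Zhat |
      ∀ p ∈ S, LinearIndependent (ZMod (p : ℕ)) (red n (n + u) p A)} ∧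
    ((Measure.pi fun _ : Fin n => Measure.pi fun _ : Fin (n + u) => μ)
      {A | ∀ p ∈ S, LinearIndependent (ZMod (p : ℕ)) (red n (n + u) p A)}).toReal =
    ∏ p ∈ S, ∏ k ∈ Finset.range n, (1 - (((p : ℕ) : ℝ) ^ (k + u + 1))⁻¹) := by
  classical
  let φ : (Fin n → Fin (n + u) → Zhat) →+
      ((p : S) → (Fin n → Fin (n + u) → ZMod (p.1 : ℕ))) :=
    { toFun := fun A p => red n (n + u) p.1 A
      map_zero' := by ext; simp [red]
      map_add' := by intros; ext; simp [red] }
  have hφ : Function.Surjective φ := by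
    intro y
    have hs := fun p : Nat.Primes => ZMod.ringHom_surjective (PadicInt.toZMod (p := (p : ℕ)))
    choose g hg using hs
    refine ⟨fun i j p => if h : p ∈ S then g p (y ⟨p, h⟩ i j) else 0, ?_⟩
    ext p i j
    simp [φ, red, hg]
  have hm : ∀ h, MeasurableSet (φ ⁻¹' {h}) := by
    intro h
    have : φ ⁻¹' {h} = ⋂ (p : S) (i : Fin n) (j : Fin (n + u)),
        (fun A : Fin n → Fin (n + u) → Zhat => A i j p.1) ⁻¹'
          {x | PadicInt.toZMod x = h p i j} := by
      ext A
      simp only [Set.mem_preimage, Set.mem_singleton_iff, Set.mem_iInter, Set.mem_ofPred_eq]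
      constructor
      · rintro rfl p i j; rfl
      · intro H; ext p i j; exact H p i j
    rw [this]
    refine MeasurableSet.iInter fun p => MeasurableSet.iInter fun i => MeasurableSet.iInter fun j =>
      ?_
    exact (by fun_prop : Measurable (fun A : Fin n → Fin (n + u) → Zhat => A i j p.1))
      (measurable_fiber _ _)
  have hset : {A : Fin n → Fin (n + u) → Zhat |
      ∀ p ∈ S, LinearIndependent (ZMod (p : ℕ)) (red n (n + u) p A)} =
      φ ⁻¹' {y | ∀ p, LinearIndependent (ZMod (p.1 : ℕ)) (y p)} := by
    ext A
    simp [φ]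
  rw [hset]
  constructor
  · rw [← Set.biUnion_preimage_singleton]
    exact MeasurableSet.biUnion (Set.to_countable _) fun h _ => hm h
  · have i0 : MeasurableAdd Zhat := inferInstance
    have i1 : (Measure.pi fun _ : Fin (n + u) => μ).IsAddLeftInvariant :=
      Measure.pi.isAddLeftInvariant _
    have i2 : (Measure.pi fun _ : Fin n => Measure.pi fun _ : Fin (n + u) => μ).IsAddLeftInvariant :=
      Measure.pi.isAddLeftInvariant _
    rw [uniform_preimage _ φ hφ hm]
    have e : {y : (p : S) → (Fin n → Fin (n + u) → ZMod (p.1 : ℕ)) |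
        ∀ p, LinearIndependent (ZMod (p.1 : ℕ)) (y p)} ≃
        ((p : S) → {s : Fin n → Fin (n + u) → ZMod (p.1 : ℕ) //
          LinearIndependent (ZMod (p.1 : ℕ)) s}) :=
      { toFun := fun y p => ⟨y.1 p, y.2 p⟩
        invFun := fun y => ⟨fun p => (y p).1, fun p => (y p).2⟩
        left_inv := fun _ => rfl
        right_inv := fun _ => rfl }
    rw [Nat.card_congr e, Nat.card_pi, Nat.card_pi, Nat.cast_prod, Nat.cast_prod,
      ← Finset.prod_div_distrib, ← Finset.prod_coe_sort S]
    exact Finset.prod_congr rfl fun p _ => card_li _ n u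

lemma tendsto_finset (n u : ℕ) (μ : Measure Zhat) [IsProbabilityMeasure μ] [μ.IsAddHaarMeasure] :
    Tendsto (fun S : Finset Nat.Primes =>
      ∏ p ∈ S, ∏ k ∈ Finset.range n, (1 - (((p : ℕ) : ℝ) ^ (k + u + 1))⁻¹)) atTop
    (nhds ((Measure.pi fun _ : Fin n => Measure.pi fun _ : Fin (n + u) => μ)
            {A | Function.Surjective (Matrix.of A).mulVecLin}).toReal) := by
  have h := tendsto_measure_iInter_atTop
    (μ := Measure.pi fun _ : Fin n => Measure.pi fun _ : Fin (n + u) => μ)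
    (s := fun S : Finset Nat.Primes => {A : Fin n → Fin (n + u) → Zhat |
      ∀ p ∈ S, LinearIndependent (ZMod (p : ℕ)) (red n (n + u) p A)})
    (fun S => (measure_finset n u μ S).1.nullMeasurableSet)
    (fun S T hST A hA p hp => hA p (hST hp))
    ⟨∅, measure_ne_top _ _⟩
  have e : (⋂ S : Finset Nat.Primes, {A : Fin n → Fin (n + u) → Zhat |
      ∀ p ∈ S, LinearIndependent (ZMod (p : ℕ)) (red n (n + u) p A)}) =
      {A | Function.Surjective (Matrix.of A).mulVecLin} := by
    ext A
    simp only [Set.mem_iInter, Set.mem_ofPred_eq]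
    rw [surj_iff]
    exact ⟨fun H p => H {p} p (by simp), fun H S p _ => H p⟩
  rw [e] at h
  have h2 := (ENNReal.tendsto_toReal (measure_ne_top _ _)).comp h
  refine h2.congr fun S => ?_
  exact (measure_finset n u μ S).2

lemma prob_eq (n u : ℕ) (hu : 1 ≤ u) (μ : Measure Zhat) [IsProbabilityMeasure μ]
    [μ.IsAddHaarMeasure] :
    ((((Measure.pi fun _ : Fin n => Measure.pi fun _ : Fin (n + u) => μ)
            {A | Function.Surjective (Matrix.of A).mulVecLin}).toReal : ℝ) : ℂ) =
      ∏ k ∈ Finset.range n, (riemannZeta ((k : ℂ) + u + 1))⁻¹ := by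
  have h1 := (Complex.continuous_ofReal.tendsto _).comp (tendsto_finset n u μ)
  refine tendsto_nhds_unique h1 ?_
  have h2 : ∀ k ∈ Finset.range n, Tendsto (fun S : Finset Nat.Primes =>
      ∏ p ∈ S, (1 - (((p : ℕ) : ℂ) ^ (k + u + 1))⁻¹)) atTop
      (nhds (riemannZeta ((k : ℂ) + u + 1))⁻¹) := by
    intro k _
    have hre : 1 < ((k : ℂ) + u + 1).re := by
      have : (1 : ℝ) ≤ u := by exact_mod_cast hu
      have : (0 : ℝ) ≤ k := by positivity
      simp; linarith
    have h3 : Tendsto _ _ _ := riemannZeta_eulerProduct_hasProd hre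
    have h4 := h3.inv₀ (riemannZeta_ne_zero_of_one_lt_re hre)
    refine Tendsto.congr (fun S => ?_) h4
    rw [← Finset.prod_inv_distrib]
    refine Finset.prod_congr rfl fun p _ => ?_
    rw [inv_inv, Complex.cpow_neg]
    congr 2
    rw [← Complex.cpow_natCast]
    push_cast
    rfl
  refine (tendsto_finsetProd _ h2).congr fun S => ?_
  rw [Finset.prod_comm]
  simp

lemma zeta_bound (k : ℕ) : ‖(riemannZeta ((k + 2 : ℕ) : ℂ))⁻¹ - 1‖ ≤
    (1 / 2 : ℝ) ^ k * ∑' n : ℕ, 1 / ((n : ℝ) + 2) ^ 2 := by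
  have hs : Summable fun n : ℕ => 1 / (n : ℝ) ^ (k + 2) :=
    Real.summable_one_div_nat_pow.2 (by omega)
  have hs2 : Summable fun n : ℕ => 1 / ((n : ℝ) + 2) ^ 2 := by
    have := (summable_nat_add_iff 2).2 (Real.summable_one_div_nat_pow (p := 2).2 (by omega))
    simpa using this
  set t : ℝ := ∑' n : ℕ, 1 / ((n : ℝ) + 2) ^ (k + 2) with ht
  have hz : riemannZeta ((k + 2 : ℕ) : ℂ) = ((1 + t : ℝ) : ℂ) := by
    rw [zeta_nat_eq_tsum_of_gt_one (by omega)]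
    have := hs.sum_add_tsum_nat_add 2
    rw [ht]
    simp [Finset.sum_range_succ] at this
    simp only [one_div]
    rw [this]
    push_cast
    rfl
  have ht0 : 0 ≤ t := tsum_nonneg fun n => by positivity
  have htb : t ≤ (1 / 2 : ℝ) ^ k * ∑' n : ℕ, 1 / ((n : ℝ) + 2) ^ 2 := by
    rw [← tsum_mul_left]
    refine Summable.tsum_le_tsum (fun n => ?_) ?_ (hs2.mul_left _)
    · rw [pow_add, div_pow, one_pow, div_mul_div_comm, one_mul]
      gcongr
      linarith [(Nat.cast_nonneg n : (0 : ℝ) ≤ n)]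
    · have := (summable_nat_add_iff 2).2 hs
      simpa using this
  refine le_trans ?_ htb
  rw [hz, ← Complex.ofReal_inv, ← Complex.ofReal_one, ← Complex.ofReal_sub, Complex.norm_real,
    Real.norm_eq_abs]
  have e : (1 + t)⁻¹ - 1 = -(t / (1 + t)) := by field_simp; ring
  rw [e, abs_neg, abs_of_nonneg (by positivity)]
  exact div_le_self ht0 (by linarith)

lemma multipliable_zeta (u : ℕ) (hu : 1 ≤ u) :
    Multipliable fun k : ℕ => (riemannZeta ((k : ℂ) + u + 1))⁻¹ := by
  have h : Summable fun k : ℕ => ‖(riemannZeta ((k : ℂ) + u + 1))⁻¹ - 1‖ := by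
    obtain ⟨v, rfl⟩ := Nat.exists_eq_add_of_le' hu
    have h0 : Summable fun k : ℕ => ‖(riemannZeta ((k + 2 : ℕ) : ℂ))⁻¹ - 1‖ :=
      Summable.of_nonneg_of_le (fun _ => norm_nonneg _) zeta_bound
        (Summable.mul_right _ (summable_geometric_of_lt_one (by norm_num) (by norm_num)))
    refine ((summable_nat_add_iff v).2 h0).congr fun k => ?_
    congr 4
    push_cast
    ring
  simpa using multipliable_one_add_of_summable h

end SurjAux

theorem stmt3 (u : ℕ) (hu : 1 ≤ u) (μ : Measure Zhat)
    [IsProbabilityMeasure μ] [μ.IsAddHaarMeasure] :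
    Tendsto (fun n : ℕ =>
        ((((Measure.pi fun _ : Fin n => Measure.pi fun _ : Fin (n + u) => μ)
            {A | Function.Surjective (Matrix.of A).mulVecLin}).toReal : ℝ) : ℂ)) atTop
      (nhds (∏' k : ℕ, (riemannZeta ((k : ℂ) + u + 1))⁻¹)) := by
  simp only [SurjAux.prob_eq _ u hu μ]
  exact (SurjAux.multipliable_zeta u hu).hasProd.tendsto_prod_nat
end

section
/- Let R = ∏_{p prime} ℤ_p, and for each n let A be a random n×n matrix over R whose entries are independent and identically distributed according to the Haar probability measure on R. Then lim_{n→∞} P(A : R^n → R^n is surjective) = 0. -/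
open MeasureTheory Filter

theorem zhat_cover (d : ℕ) (hd : d ≠ 0) :
    ∀ x : Zhat, ∃ k < d, ∃ y : Zhat, x = (k : Zhat) + (d : Zhat) * y := by
  induction d using induction_on_primes with
  | zero => exact absurd rfl hd
  | one => intro x; exact ⟨0, by norm_num, x, by simp⟩
  | prime_mul q d hq ih =>
    intro x
    have hd' : d ≠ 0 := by rintro rfl; simp at hd
    have key : ∃ k < q, ∃ y : Zhat, x = (k : Zhat) + (q : Zhat) * y := by
      have hF : Fact (Nat.Prime ((⟨q, hq⟩ : Nat.Primes) : ℕ)) := ⟨hq⟩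
      obtain ⟨k, hk, hm⟩ := PadicInt.exists_mem_range (p := ((⟨q, hq⟩ : Nat.Primes) : ℕ))
        (x ⟨q, hq⟩)
      refine ⟨k, hk, ?_⟩
      have : ∀ p : Nat.Primes, ∃ z : ℤ_[(p : ℕ)], x p = (k : ℤ_[(p : ℕ)]) + (q : ℤ_[(p : ℕ)]) * z := by
        intro p
        by_cases hp : p = ⟨q, hq⟩
        · subst hp
          rw [PadicInt.maximalIdeal_eq_span_p, Ideal.mem_span_singleton] at hm
          obtain ⟨z, hz⟩ := hm
          exact ⟨z, by rw [← hz]; ring⟩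
        · have hu : IsUnit (q : ℤ_[(p : ℕ)]) := by
            rw [PadicInt.isUnit_iff, PadicInt.norm_natCast_eq_one_iff]
            rw [Nat.coprime_primes p.2 hq]
            intro h
            exact hp (Subtype.ext h)
          obtain ⟨u, hu⟩ := hu
          refine ⟨(↑u⁻¹ : ℤ_[(p : ℕ)]) * (x p - k), ?_⟩
          rw [← hu, Units.mul_inv_cancel_left]; ring
      choose y hy using this
      exact ⟨y, funext fun p => by simpa using hy p⟩
    obtain ⟨k, hk, y, rfl⟩ := key
    obtain ⟨k', hk', z, rfl⟩ := ih hd' y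
    refine ⟨k + q * k', ?_, z, ?_⟩
    · have : q * (k' + 1) ≤ q * d := Nat.mul_le_mul_left _ hk'
      nlinarith
    · push_cast; ring

instance zhat_sc : SecondCountableTopology Zhat := by
  have : ∀ p : Nat.Primes, SecondCountableTopology ℤ_[(p : ℕ)] := fun p => inferInstance
  infer_instance

instance zhat_borel : BorelSpace Zhat := by
  infer_instance

theorem zhat_isUnit_iff (x : Zhat) : IsUnit x ↔ ∀ p, ‖x p‖ = 1 := by
  rw [Pi.isUnit_iff]
  simp only [PadicInt.isUnit_iff]

theorem zhat_units_closed : IsClosed {x : Zhat | IsUnit x} := by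
  simp only [zhat_isUnit_iff, Set.ofPred_forall]
  exact isClosed_iInter fun p =>
    isClosed_eq (continuous_norm.comp (continuous_apply p)) continuous_const

theorem zhat_mul_inj (d : ℕ) (hd : d ≠ 0) : Function.Injective (fun x : Zhat => (d : Zhat) * x) := by
  intro x y h
  funext p
  have := congrFun h p
  simp only [Pi.mul_apply, Pi.natCast_apply] at this
  exact mul_left_cancel₀ (by exact_mod_cast hd) this

theorem zhat_scale (μ : Measure Zhat) [IsProbabilityMeasure μ] [μ.IsAddHaarMeasure]
    (d : ℕ) (hd : d ≠ 0) (E : Set Zhat) :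
    μ E ≤ d * μ ((fun x : Zhat => (d : Zhat) * x) '' E) := by
  have hce : Topology.IsClosedEmbedding (fun x : Zhat => (d : Zhat) * x) :=
    (continuous_const.mul continuous_id).isClosedEmbedding (zhat_mul_inj d hd)
  have hme : MeasurableEmbedding (fun x : Zhat => (d : Zhat) * x) := hce.measurableEmbedding
  let f : Zhat →+ Zhat := AddMonoidHom.mulLeft (d : Zhat)
  have hfe : MeasurableEmbedding f := hme
  have hinv : (μ.comap f).IsAddLeftInvariant := Measure.IsAddLeftInvariant.comap μ hfe
  have hfin : IsFiniteMeasure (μ.comap f) := ⟨by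
    rw [hfe.comap_apply]; exact measure_lt_top _ _⟩
  have h := Measure.isAddLeftInvariant_eq_smul (μ.comap f) μ
  set c := Measure.addHaarScalarFactor (μ.comap f) μ
  have hE : ∀ E, μ (f '' E) = c * μ E := fun E => by
    rw [← hfe.comap_apply, h]; rfl
  have h1 : (1 : ENNReal) ≤ d * c := by
    have hu : μ (f '' Set.univ) = c := by rw [hE]; simp
    have hcov : (Set.univ : Set Zhat) ⊆
        ⋃ k ∈ Finset.range d, (fun x => (k : Zhat) + x) '' (f '' Set.univ) := by
      intro x _
      obtain ⟨k, hk, y, rfl⟩ := zhat_cover d hd x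
      simp only [Set.mem_iUnion]
      exact ⟨k, Finset.mem_range.2 hk, _, ⟨y, trivial, rfl⟩, rfl⟩
    calc (1 : ENNReal) = μ Set.univ := by simp
      _ ≤ _ := measure_mono hcov
      _ ≤ ∑ k ∈ Finset.range d, μ ((fun x => (k : Zhat) + x) '' (f '' Set.univ)) :=
        measure_biUnion_finset_le _ _
      _ = ∑ k ∈ Finset.range d, (c : ENNReal) := by
        refine Finset.sum_congr rfl fun k _ => ?_
        rw [Set.image_add_left, measure_preimage_add, hu]
      _ = _ := by simp
  change μ E ≤ d * μ (f '' E)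
  rw [hE, ← mul_assoc]
  calc μ E = 1 * μ E := (one_mul _).symm
    _ ≤ _ := by gcongr

theorem zhat_units_null (μ : Measure Zhat) [IsProbabilityMeasure μ] [μ.IsAddHaarMeasure] :
    μ {x : Zhat | IsUnit x} = 0 := by
  set U := {x : Zhat | IsUnit x} with hU
  by_contra hne
  let s : ℕ → Set Zhat := fun n => (fun x : Zhat => ((n + 1 : ℕ) : Zhat) * x) '' U
  have hs : ∀ n, NullMeasurableSet (s n) μ := fun n =>
    (((continuous_const.mul continuous_id).isClosedEmbedding
      (zhat_mul_inj (n + 1) (by omega))).isClosedMap _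
      zhat_units_closed).measurableSet.nullMeasurableSet
  have hdisj : Pairwise (Function.onFun (AEDisjoint μ) s) := by
    intro m n hmn
    refine Disjoint.aedisjoint (Set.disjoint_left.2 ?_)
    rintro _ ⟨u, hu, rfl⟩ ⟨v, hv, h⟩
    apply hmn
    have hu' := (zhat_isUnit_iff u).1 hu
    have hv' := (zhat_isUnit_iff v).1 hv
    have hval : ∀ p : Nat.Primes, padicValNat p (n + 1) = padicValNat p (m + 1) := by
      intro p
      have h1 := congrArg norm (congrFun h p)
      simp only [Pi.mul_apply, norm_mul, hu', hv', mul_one, Pi.natCast_apply] at h1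
      rw [PadicInt.norm_def, PadicInt.norm_def, PadicInt.coe_natCast, PadicInt.coe_natCast,
        Padic.norm_eq_zpow_neg_valuation (by exact_mod_cast Nat.succ_ne_zero n),
        Padic.norm_eq_zpow_neg_valuation (by exact_mod_cast Nat.succ_ne_zero m),
        Padic.valuation_natCast, Padic.valuation_natCast] at h1
      have := zpow_right_injective₀ (a := ((p : ℕ) : ℝ)) (by exact_mod_cast p.2.pos)
        (by exact_mod_cast p.2.one_lt.ne') h1
      omega
    have : n + 1 = m + 1 := by
      refine Nat.eq_of_factorization_eq (by omega) (by omega) fun p => ?_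
      by_cases hp : p.Prime
      · rw [Nat.factorization_def _ hp, Nat.factorization_def _ hp]
        exact hval ⟨p, hp⟩
      · rw [Nat.factorization_eq_zero_of_not_prime _ hp,
          Nat.factorization_eq_zero_of_not_prime _ hp]
    omega
  have hle := tsum_measure_le_measure_univ hs hdisj
  rw [measure_univ] at hle
  have hsum : ∑' n, μ (s n) ≠ ⊤ := ne_top_of_le_ne_top ENNReal.one_ne_top hle
  have hreal := ENNReal.summable_toReal hsum
  have hpos : 0 < (μ U).toReal := ENNReal.toReal_pos hne (measure_ne_top _ _)
  have hbd : ∀ n : ℕ, 1 / ((n + 1 : ℕ) : ℝ) ≤ (μ (s n)).toReal / (μ U).toReal := by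
    intro n
    have h := zhat_scale μ (n + 1) (by omega) U
    have h2 := ENNReal.toReal_mono (by finiteness) h
    rw [ENNReal.toReal_mul, ENNReal.toReal_natCast] at h2
    rw [div_le_div_iff₀ (by positivity) hpos]
    linarith
  have hsm : Summable (fun n : ℕ => 1 / ((n + 1 : ℕ) : ℝ)) :=
    Summable.of_nonneg_of_le (fun n => by positivity) hbd (hreal.div_const _)
  exact Real.not_summable_one_div_natCast
    ((summable_nat_add_iff (f := fun n : ℕ => 1 / (n : ℝ)) 1).1 hsm)

theorem zhat_lin_null (μ : Measure Zhat) [IsProbabilityMeasure μ] [μ.IsAddHaarMeasure]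
    (n : ℕ) (L : (Fin n → Zhat) →ₗ[Zhat] Zhat) :
    (Measure.pi fun _ : Fin n => μ) {v | IsUnit (L v)} = 0 := by
  by_cases hex : ∃ v, IsUnit (L v)
  · obtain ⟨v, u, hu⟩ := hex
    have hsurj : Function.Surjective L := fun x =>
      ⟨(x * (↑u⁻¹ : Zhat)) • v, by rw [map_smul, ← hu, smul_eq_mul, Units.inv_mul_cancel_right]⟩
    have hc : Continuous L := L.continuous_on_pi
    have hmap : ((Measure.pi fun _ : Fin n => μ).map L.toAddMonoidHom).IsAddHaarMeasure :=
      Measure.isAddHaarMeasure_map_of_isFiniteMeasure _ L.toAddMonoidHom hc hsurj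
    have hpr : IsProbabilityMeasure ((Measure.pi fun _ : Fin n => μ).map L.toAddMonoidHom) :=
      Measure.isProbabilityMeasure_map hc.measurable.aemeasurable
    have h0 := zhat_units_null ((Measure.pi fun _ : Fin n => μ).map L.toAddMonoidHom)
    rw [Measure.map_apply (f := L.toAddMonoidHom) hc.measurable zhat_units_closed.measurableSet] at h0
    exact h0
  · push Not at hex
    simp [hex]

theorem zhat_det_null (μ : Measure Zhat) [IsProbabilityMeasure μ] [μ.IsAddHaarMeasure] (n : ℕ) :
    (Measure.pi fun _ : Fin (n + 1) => Measure.pi fun _ : Fin (n + 1) => μ)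
      {A | IsUnit (Matrix.of A).det} = 0 := by
  let ν : Measure (Fin (n + 1) → Zhat) := Measure.pi fun _ : Fin (n + 1) => μ
  have hcont : Continuous fun A : Fin (n + 1) → Fin (n + 1) → Zhat => (Matrix.of A).det :=
    Continuous.matrix_det continuous_id
  have hmp := (measurePreserving_piFinSuccAbove (fun _ : Fin (n + 1) => ν) 0).symm
  have hS : MeasurableSet {A : Fin (n + 1) → Fin (n + 1) → Zhat | IsUnit (Matrix.of A).det} :=
    (zhat_units_closed.preimage hcont).measurableSet
  change (Measure.pi fun _ : Fin (n + 1) => ν) _ = 0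
  rw [← hmp.measure_preimage hS.nullMeasurableSet]
  rw [← Measure.measurePreserving_swap.measure_preimage (hmp.measurable hS).nullMeasurableSet]
  refine Measure.measure_prod_null_of_ae_null
    (measurable_swap (hmp.measurable hS)) (Eventually.of_forall fun B => ?_)
  let L := (Matrix.detRowAlternating (n := Fin (n + 1)) (R := Zhat)).toMultilinearMap.toLinearMap
    (Fin.cons 0 B) 0
  have := zhat_lin_null μ (n + 1) L
  refine (congrArg ν ?_).trans this
  ext v
  simp only [Set.mem_preimage, Set.mem_ofPred_eq, L, MultilinearMap.toLinearMap_apply]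
  rw [Fin.update_cons_zero]
  have he : (MeasurableEquiv.piFinSuccAbove (fun _ : Fin (n + 1) => Fin (n + 1) → Zhat) 0).symm
      (B, v).swap = (Fin.cons v B : Fin (n + 1) → Fin (n + 1) → Zhat) := by
    change Fin.insertNth (α := fun _ => Fin (n + 1) → Zhat) 0 v B = _
    exact Fin.insertNth_zero' v B
  rw [he]
  rfl

theorem stmt4 (μ : Measure Zhat) [IsProbabilityMeasure μ] [μ.IsAddHaarMeasure] :
    Tendsto (fun n : ℕ =>
        ((Measure.pi fun _ : Fin n => Measure.pi fun _ : Fin n => μ)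
          {A | Function.Surjective (Matrix.of A).mulVecLin}).toReal) atTop
      (nhds 0) := by
  refine tendsto_const_nhds.congr' ?_
  filter_upwards [eventually_ge_atTop 1] with n hn
  obtain ⟨n, rfl⟩ : ∃ m, n = m + 1 := ⟨n - 1, by omega⟩
  have h : {A : Fin (n + 1) → Fin (n + 1) → Zhat |
      Function.Surjective (Matrix.of A).mulVecLin} = {A | IsUnit (Matrix.of A).det} := by
    ext A
    rw [Set.mem_ofPred_eq, Set.mem_ofPred_eq, ← Matrix.isUnit_iff_isUnit_det,
      ← Matrix.mulVec_surjective_iff_isUnit]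
    rfl
  rw [h, zhat_det_null μ n]
  simp
end

section
/- Let u : ℕ → ℕ be a sequence with u(n) → ∞ as n → ∞. Let R = ∏_{p prime} ℤ_p, and for each n let A be a random n×(n+u(n)) matrix over R whose entries are independent and identically distributed according to the Haar probability measure on R. Then lim_{n→∞} P(A : R^(n+u(n)) → R^n is surjective) = 1. -/
open MeasureTheory Filter

theorem haar_ker_le {G F : Type*} [AddCommGroup G] [MeasurableSpace G] [MeasurableAdd G]
    (ν : Measure G) [IsProbabilityMeasure ν] [ν.IsAddLeftInvariant] [AddCommGroup F] [Fintype F]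
    (φ : G →+ F) (hφ : Function.Surjective φ) (hm : MeasurableSet {x | φ x = 0}) :
    ν {x | φ x = 0} ≤ (Fintype.card F : ENNReal)⁻¹ := by
  choose s hs using hφ
  have key : ∀ y : F, ν ((fun x => -s y + x) ⁻¹' {x | φ x = 0}) = ν {x | φ x = 0} := fun y =>
    measure_preimage_add _ _ _
  have hdis : Pairwise (Function.onFun Disjoint
      (fun y : F => (fun x => -s y + x) ⁻¹' {x | φ x = 0})) := by
    intro y z hyz
    refine Set.disjoint_left.2 fun x hx hx' => hyz ?_
    simp only [Set.mem_preimage, Set.mem_ofPred_eq, map_add, map_neg, hs] at hx hx'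
    rw [neg_add_eq_zero] at hx hx'
    rw [hx, hx']
  have h1 := measure_iUnion hdis (μ := ν) (fun y => (measurable_const_add (-s y)) hm)
  simp only [key, tsum_fintype, Finset.sum_const, Finset.card_univ, nsmul_eq_mul] at h1
  have h2 : (Fintype.card F : ENNReal) * ν {x | φ x = 0} ≤ 1 := h1 ▸ prob_le_one
  rw [ENNReal.le_inv_iff_mul_le, mul_comm]
  exact h2

theorem surj_of_mod (p : ℕ) [Fact p.Prime] {n m : ℕ} (A : Matrix (Fin n) (Fin m) ℤ_[p])
    (h : ∀ w : Fin n → ZMod p, (∀ j, ∑ i, w i * PadicInt.toZMod (A i j) = 0) → w = 0) :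
    Function.Surjective A.mulVec := by
  set Ab : Matrix (Fin n) (Fin m) (ZMod p) := A.map PadicInt.toZMod with hAb
  have hinj : LinearMap.ker (Ab.transpose.mulVecLin) = ⊥ := by
    rw [LinearMap.ker_eq_bot']
    intro w hw
    apply h
    intro j
    have := congrFun hw j
    simpa [Matrix.vecMul, dotProduct, hAb] using this
  obtain ⟨g, hg⟩ := LinearMap.exists_leftInverse_of_injective _ hinj
  have hB : LinearMap.toMatrix' g * Ab.transpose = 1 := by
    have := congrArg LinearMap.toMatrix' hg
    rwa [LinearMap.toMatrix'_comp, LinearMap.toMatrix'_id, ← Matrix.toLin'_apply',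
      LinearMap.toMatrix'_toLin'] at this
  have hB' : Ab * (LinearMap.toMatrix' g).transpose = 1 := by
    have := congrArg Matrix.transpose hB
    simpa using this
  choose l hl using (ZMod.ringHom_surjective (PadicInt.toZMod (p := p)))
  let B : Matrix (Fin m) (Fin n) ℤ_[p] := (LinearMap.toMatrix' g).transpose.map l
  have hBm : B.map PadicInt.toZMod = (LinearMap.toMatrix' g).transpose := by
    ext i j; simp [B, hl]
  have hAB : (A * B).map PadicInt.toZMod = 1 := by
    rw [Matrix.map_mul, hBm, ← hAb, hB']
  have hdet : PadicInt.toZMod (A * B).det = 1 := by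
    rw [RingHom.map_det, RingHom.mapMatrix_apply, hAB, Matrix.det_one]
  have hu : IsUnit (A * B).det := by
    by_contra hc
    have : (A * B).det ∈ RingHom.ker (PadicInt.toZMod (p := p)) := by
      rw [PadicInt.ker_toZMod]; exact hc
    rw [RingHom.mem_ker, hdet] at this
    exact one_ne_zero this
  intro y
  refine ⟨B.mulVec ((A * B)⁻¹.mulVec y), ?_⟩
  rw [Matrix.mulVec_mulVec, Matrix.mulVec_mulVec, Matrix.mul_nonsing_inv _ hu, Matrix.one_mulVec]

theorem bad_le (μ : Measure Zhat) [IsProbabilityMeasure μ] [μ.IsAddHaarMeasure] (n m : ℕ)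
    (p : Nat.Primes) (w : Fin n → ZMod p) (hw : w ≠ 0) :
    (Measure.pi fun _ : Fin n => Measure.pi fun _ : Fin m => μ)
      {A | ∀ j, ∑ i, w i * PadicInt.toZMod (A i j p) = 0} ≤ ((p : ℕ) ^ m : ENNReal)⁻¹ := by
  let φ : (Fin n → Fin m → Zhat) →+ (Fin m → ZMod p) :=
    { toFun := fun A j => ∑ i, w i * PadicInt.toZMod (A i j p)
      map_zero' := by ext; simp
      map_add' := by intro A B; ext; simp [mul_add, Finset.sum_add_distrib] }
  have hset : {A : Fin n → Fin m → Zhat | ∀ j, ∑ i, w i * PadicInt.toZMod (A i j p) = 0}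
      = {A | φ A = 0} := by
    ext A; simp [φ, funext_iff]
  choose l hl using (ZMod.ringHom_surjective (PadicInt.toZMod (p := (p : ℕ))))
  have hmeas : MeasurableSet {A | φ A = 0} := by
    have : {A | φ A = 0} = ⋂ j : Fin m, {A : Fin n → Fin m → Zhat |
        ‖∑ i, l (w i) * A i j p‖ < 1} := by
      ext A
      simp only [φ, AddMonoidHom.coe_mk, ZeroHom.coe_mk, Set.mem_ofPred_eq, funext_iff,
        Set.mem_iInter, Pi.zero_apply]
      refine forall_congr' fun j => ?_
      rw [← PadicInt.mem_nonunits, ← IsLocalRing.mem_maximalIdeal, ← PadicInt.ker_toZMod,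
        RingHom.mem_ker, map_sum]
      simp [hl]
    rw [this]
    refine MeasurableSet.iInter fun j => ?_
    have hm : Measurable fun A : Fin n → Fin m → Zhat => ∑ i, l (w i) * A i j p := by
      refine Finset.measurable_sum _ fun i _ => ?_
      have : Measurable fun A : Fin n → Fin m → Zhat => A i j p :=
        (measurable_pi_apply p).comp ((measurable_pi_apply j).comp (measurable_pi_apply i))
      exact this.const_mul _
    exact measurableSet_lt hm.norm measurable_const
  have hsurj : Function.Surjective φ := by
    obtain ⟨i0, hi0⟩ := Function.ne_iff.1 hw
    intro y
    refine ⟨fun i j => if i = i0 then Pi.single p (l ((w i0)⁻¹ * y j)) else 0, ?_⟩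
    ext j
    simp only [φ, AddMonoidHom.coe_mk, ZeroHom.coe_mk]
    rw [Finset.sum_eq_single i0]
    · simp [hl]
      rw [mul_inv_cancel_left₀ hi0]
    · intro b _ hb; simp [hb]
    · simp
  rw [hset]
  have i1 : (Measure.pi fun _ : Fin m => μ).IsAddLeftInvariant :=
    Measure.pi.isAddLeftInvariant (fun _ : Fin m => μ)
  have i2 : (Measure.pi fun _ : Fin n => Measure.pi fun _ : Fin m => μ).IsAddLeftInvariant :=
    Measure.pi.isAddLeftInvariant (fun _ : Fin n => Measure.pi fun _ : Fin m => μ)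
  refine (haar_ker_le _ φ hsurj hmeas).trans ?_
  simp [ZMod.card]

theorem nonsurj_le (μ : Measure Zhat) [IsProbabilityMeasure μ] [μ.IsAddHaarMeasure] (n k : ℕ) :
    (Measure.pi fun _ : Fin n => Measure.pi fun _ : Fin (n + k) => μ)
      {A | Function.Surjective (Matrix.of A).mulVecLin}ᶜ
      ≤ ∑' p : Nat.Primes, ((p : ℕ) ^ k : ENNReal)⁻¹ := by
  set ν := (Measure.pi fun _ : Fin n => Measure.pi fun _ : Fin (n + k) => μ)
  have hsub : {A : Fin n → Fin (n + k) → Zhat | Function.Surjective (Matrix.of A).mulVecLin}ᶜ ⊆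
      ⋃ p : Nat.Primes, ⋃ w : {w : Fin n → ZMod p // w ≠ 0},
        {A | ∀ j, ∑ i, w.1 i * PadicInt.toZMod (A i j p) = 0} := by
    intro A hA
    by_contra hc
    simp only [Set.mem_iUnion, not_exists] at hc
    apply hA
    have hs : ∀ p : Nat.Primes, Function.Surjective
        (Matrix.of fun i j => A i j p : Matrix (Fin n) (Fin (n + k)) ℤ_[p]).mulVec := by
      intro p
      apply surj_of_mod
      intro w hw
      by_contra hw0
      exact hc p ⟨w, hw0⟩ hw
    intro y
    choose x hx using fun p => hs p (fun i => y i p)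
    refine ⟨fun j p => x p j, ?_⟩
    ext i p
    have := congrFun (hx p) i
    rw [← this]
    simp [Matrix.mulVec, dotProduct]
  refine (measure_mono hsub).trans ((measure_iUnion_le _).trans (ENNReal.tsum_le_tsum fun p => ?_))
  refine (measure_iUnion_le _).trans ?_
  refine (ENNReal.tsum_le_tsum fun w : {w : Fin n → ZMod p // w ≠ 0} => bad_le μ n (n + k) p w.1 w.2).trans ?_
  rw [tsum_fintype, Finset.sum_const, nsmul_eq_mul]
  have hcard : (Finset.univ : Finset {w : Fin n → ZMod p // w ≠ 0}).card ≤ (p : ℕ) ^ n := by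
    rw [Finset.card_univ]
    refine (Fintype.card_subtype_le _).trans ?_
    simp [ZMod.card]
  have hp0 : ((p : ℕ) : ENNReal) ≠ 0 := by exact_mod_cast p.2.ne_zero
  calc _ ≤ (((p : ℕ) ^ n : ℕ) : ENNReal) * ((p : ℕ) ^ (n + k) : ENNReal)⁻¹ := by
        gcongr
    _ = ((p : ℕ) ^ k : ENNReal)⁻¹ := by
        rw [pow_add, ENNReal.mul_inv (by simp [hp0]) (by simp), ← mul_assoc, Nat.cast_pow,
          ENNReal.mul_inv_cancel (by simp [hp0]) (by simp), one_mul]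

theorem tail_tendsto :
    Tendsto (fun k : ℕ => ∑' p : Nat.Primes, ((p : ℕ) ^ k : ENNReal)⁻¹) atTop (nhds 0) := by
  set C : ENNReal := ∑' p : Nat.Primes, ((p : ℕ) ^ 2 : ENNReal)⁻¹ with hC
  have hCtop : C ≠ ⊤ := by
    have hs : Summable fun p : Nat.Primes => (((p : ℕ) : NNReal) ^ 2)⁻¹ := by
      have : Summable fun n : ℕ => ((n : NNReal) ^ 2)⁻¹ := by
        rw [← NNReal.summable_coe]; push_cast
        exact Real.summable_nat_pow_inv.2 (by norm_num)
      have h2 := NNReal.summable_comp_injective this (i := fun p : Nat.Primes => (p : ℕ))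
        Nat.Primes.coe_nat_injective
      simpa only [Function.comp_def] using h2
    have := ENNReal.tsum_coe_ne_top_iff_summable.2 hs
    rw [hC]
    refine ne_of_eq_of_ne (tsum_congr fun p => ?_) this
    have : (p : ℕ) ≠ 0 := p.2.ne_zero
    rw [ENNReal.coe_inv (by positivity)]
    simp
  have hle : ∀ k, ∑' p : Nat.Primes, ((p : ℕ) ^ (k + 2) : ENNReal)⁻¹ ≤ (2⁻¹ : ENNReal) ^ k * C := by
    intro k
    rw [hC, ← ENNReal.tsum_mul_left]
    refine ENNReal.tsum_le_tsum fun p => ?_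
    have hp0 : ((p : ℕ) : ENNReal) ≠ 0 := by exact_mod_cast p.2.ne_zero
    have h2 : (2 : ENNReal) ≤ ((p : ℕ) : ENNReal) := by exact_mod_cast p.2.two_le
    rw [pow_add, ENNReal.mul_inv (by simp [hp0]) (by simp), ← ENNReal.inv_pow]
    gcongr
  rw [← tendsto_add_atTop_iff_nat 2]
  refine tendsto_of_tendsto_of_tendsto_of_le_of_le tendsto_const_nhds ?_ (fun _ => zero_le) hle
  have := ENNReal.Tendsto.mul_const
    (ENNReal.tendsto_pow_atTop_nhds_zero_of_lt_one (r := 2⁻¹) (by simp)) (Or.inr hCtop)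
  simpa using this

theorem stmt5 (u : ℕ → ℕ) (hu : Tendsto u atTop atTop)
    (μ : Measure Zhat) [IsProbabilityMeasure μ] [μ.IsAddHaarMeasure] :
    Tendsto (fun n : ℕ =>
        ((Measure.pi fun _ : Fin n => Measure.pi fun _ : Fin (n + u n) => μ)
          {A | Function.Surjective (Matrix.of A).mulVecLin}).toReal) atTop
      (nhds 1) := by
  rw [← ENNReal.toReal_one]
  refine (ENNReal.tendsto_toReal ENNReal.one_ne_top).comp ?_
  have h0 := tail_tendsto.comp hu
  have h1 := ENNReal.Tendsto.sub (tendsto_const_nhds (x := (1 : ENNReal)) (f := atTop)) h0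
    (Or.inl ENNReal.one_ne_top)
  rw [tsub_zero] at h1
  refine tendsto_of_tendsto_of_tendsto_of_le_of_le h1 tendsto_const_nhds (fun n => ?_)
    (fun n => prob_le_one)
  rw [tsub_le_iff_right]
  set ν := (Measure.pi fun _ : Fin n => Measure.pi fun _ : Fin (n + u n) => μ) with hν
  set S := {A : Fin n → Fin (n + u n) → Zhat | Function.Surjective (Matrix.of A).mulVecLin}
  calc (1 : ENNReal) = ν (S ∪ Sᶜ) := by rw [Set.union_compl_self]; simp
    _ ≤ ν S + ν Sᶜ := measure_union_le _ _
    _ ≤ _ := by gcongr; exact nonsurj_le μ n (u n)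
end

section
/- Let A be an n×m integer matrix with m ≥ n. Then A : ℤ^m → ℤ^n is surjective if and only if for every prime p the reduced matrix A/p, with entries (A/p)_{ij} = A_{ij} mod p, is surjective as a linear map (ℤ/pℤ)^m → (ℤ/pℤ)^n. -/
theorem stmt6 (n m : ℕ) (hnm : n ≤ m) (A : Matrix (Fin n) (Fin m) ℤ) :
    Function.Surjective A.mulVecLin ↔
      ∀ p : ℕ, p.Prime →
        Function.Surjective (A.map (Int.cast : ℤ → ZMod p)).mulVecLin := by
  have key : ∀ (p : ℕ) (v : Fin m → ℤ) (i : Fin n),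
      (A.map (Int.cast : ℤ → ZMod p)).mulVecLin (fun j => (v j : ZMod p)) i
        = ((A.mulVecLin v i : ℤ) : ZMod p) := by
    intro p v i
    simp [Matrix.mulVec, dotProduct]
  constructor
  · intro h p hp w
    choose w' hw' using fun i => ZMod.intCast_surjective (w i)
    obtain ⟨v, hv⟩ := h w'
    refine ⟨fun j => (v j : ZMod p), ?_⟩
    funext i
    rw [key, hv, hw']
  · intro h
    rw [← LinearMap.range_eq_top]
    rcases eq_top_or_exists_le_coatom (LinearMap.range A.mulVecLin) with ht | ⟨N, hN, hle⟩
    · exact ht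
    exfalso
    have hs : IsSimpleModule ℤ ((Fin n → ℤ) ⧸ N) := isSimpleModule_iff_isCoatom.mpr hN
    obtain ⟨I, hI, ⟨e⟩⟩ := isSimpleModule_iff_quot_maximal.mp hs
    have hb : I ≠ ⊥ := Ring.ne_bot_of_isMaximal_of_not_isField hI Int.not_isField
    have hpI : Prime (Submodule.IsPrincipal.generator I) :=
      Submodule.IsPrincipal.prime_generator_of_isPrime I hb
    set g := Submodule.IsPrincipal.generator I with hg
    have hgI : g ∈ I := Submodule.IsPrincipal.generator_mem I
    have hp : g.natAbs.Prime := Int.prime_iff_natAbs_prime.mp hpI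
    have hgN : ∀ u : Fin n → ℤ, g • u ∈ N := by
      intro u
      rw [← Submodule.Quotient.mk_eq_zero, Submodule.Quotient.mk_smul]
      apply e.injective
      rw [map_smul, map_zero]
      obtain ⟨x, hx⟩ := Ideal.Quotient.mk_surjective (e (Submodule.Quotient.mk u))
      rw [← hx]
      change Ideal.Quotient.mk I (g • x) = 0
      rw [Ideal.Quotient.eq_zero_iff_mem]
      exact I.mul_mem_right x hgI
    apply hN.1
    rw [eq_top_iff]
    intro w _
    obtain ⟨v, hv⟩ := h g.natAbs hp (fun i => (w i : ZMod g.natAbs))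
    choose v' hv' using fun j => ZMod.intCast_surjective (v j)
    have hd : ∀ i, g ∣ w i - A.mulVecLin v' i := by
      intro i
      have h1 := key g.natAbs v' i
      simp only [hv'] at h1
      have h2 := congrFun hv i
      rw [← Int.natAbs_dvd, ← ZMod.intCast_eq_intCast_iff_dvd_sub]
      exact h1.symm.trans h2
    choose u hu using hd
    have hw : w = A.mulVecLin v' + g • u := by
      funext i
      have := hu i
      simp only [Pi.add_apply, Pi.smul_apply, smul_eq_mul]
      linarith
    rw [hw]
    exact N.add_mem (hle ⟨v', rfl⟩) (hgN u)
end

section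
/- For all sufficiently large n and every m ≥ n, there exists a probability measure ν on ℤ, supported on positive integers of size at most e^(3^(nm)), which is (1/2)-balanced, such that if A is a random n×m integer matrix with independent entries each distributed according to ν, then P(A : ℤ^m → ℤ^n is surjective) ≤ e^(−n). (One may take ν to be the law of ∏_{p ∈ P'} p, where P' is a uniformly random subset of the set of the first 2^(nm)·n primes, each prime included independently with probability 1/2.) -/
open MeasureTheory Filter

/-- Chebyshev-type lower bound for the number of primes up to `2 ^ (n * m)`. -/
lemma aux_prime_count (n m : ℕ) (hn : 5 ≤ n) (hm : n ≤ m) :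
    n * 2 ^ m ≤ Nat.primeCounting (2 ^ (n * m)) := by
  set k := n * m with hk
  have hk1 : 1 ≤ k := Nat.mul_pos (by omega) (by omega)
  have hnat : k * (n * 2 ^ m) + k + 1 ≤ 2 ^ k := by
    have h1 : m < 2 ^ m := Nat.lt_two_pow_self
    have h2 : n < 2 ^ m := lt_of_le_of_lt hm h1
    set t := 2 ^ m with ht
    have ht5 : 6 ≤ t := by omega
    have h3 : t ^ 5 ≤ 2 ^ k := by
      rw [ht, ← pow_mul, hk, mul_comm n m]
      exact Nat.pow_le_pow_right (by norm_num) (Nat.mul_le_mul_left _ hn)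
    have h4 : k ≤ t * t := Nat.mul_le_mul h2.le h1.le
    have h5 : n * t ≤ t * t := Nat.mul_le_mul_right _ h2.le
    have h6 : k * (n * t) ≤ (t * t) * (t * t) := Nat.mul_le_mul h4 h5
    have h7 : 36 ≤ t * t := by nlinarith
    have h8 : 6 * ((t*t)*(t*t)) ≤ t ^ 5 := by
      calc 6 * ((t*t)*(t*t)) ≤ t * ((t*t)*(t*t)) := Nat.mul_le_mul_right _ ht5
        _ = t ^ 5 := by ring
    nlinarith
  have hge := Chebyshev.pi_ge (2 ^ k)
  have hl2 : 0 < Real.log 2 := Real.log_pos (by norm_num)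
  have hkR : (0 : ℝ) < k := by exact_mod_cast hk1
  push_cast at hge
  rw [Real.log_pow, div_le_iff₀ (by positivity)] at hge
  have hlog : Real.log ((2:ℝ) ^ k + 1) ≤ (k + 1) * Real.log 2 := by
    have : Real.log ((2:ℝ) ^ k + 1) ≤ Real.log ((2:ℝ) ^ (k+1)) := by
      apply Real.log_le_log (by positivity)
      have : (1:ℝ) ≤ 2 ^ k := one_le_pow₀ (by norm_num)
      rw [pow_succ]; linarith
    rw [Real.log_pow] at this
    push_cast at this
    exact this
  have h9 : ((2:ℝ) ^ k - (k + 1)) * Real.log 2 ≤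
      ((Nat.primeCounting (2 ^ k) : ℝ) * k) * Real.log 2 := by nlinarith
  have h10 := le_of_mul_le_mul_right h9 hl2
  have h11 : ((k * (n * 2 ^ m) + k + 1 : ℕ) : ℝ) ≤ ((2 ^ k : ℕ) : ℝ) := by exact_mod_cast hnat
  push_cast at h11
  have h12 : (k:ℝ) * (n * 2 ^ m) ≤ k * (Nat.primeCounting (2 ^ k) : ℝ) := by linarith
  have h13 := le_of_mul_le_mul_left h12 hkR
  exact_mod_cast h13

/-- Uniform measure on `ι → Bool`. -/
noncomputable def auxMu (ι : Type) [Fintype ι] : Measure (ι → Bool) :=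
  Measure.pi fun _ : ι => ((2 : ENNReal)⁻¹ • Measure.count : Measure Bool)

instance auxBool_prob : IsProbabilityMeasure ((2 : ENNReal)⁻¹ • Measure.count : Measure Bool) := by
  constructor
  have h2 : (2 : ENNReal)⁻¹ * 2 = 1 :=
    ENNReal.inv_mul_cancel two_ne_zero ENNReal.ofNat_ne_top
  have h3 : Measure.count (Set.univ : Set Bool) = 2 := by
    rw [← Finset.coe_univ, Measure.count_apply_finset]
    simp
  rw [Measure.smul_apply, h3, smul_eq_mul, h2]

instance auxMu_prob (ι : Type) [Fintype ι] : IsProbabilityMeasure (auxMu ι) := by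
  unfold auxMu; infer_instance

lemma auxMu_singleton (ι : Type) [Fintype ι] (x : ι → Bool) :
    auxMu ι {x} = (2 : ENNReal)⁻¹ ^ Fintype.card ι := by
  unfold auxMu
  rw [Measure.pi_singleton]
  simp

/-- A set meeting each pair `{ω, g ω}` at most once has measure at most one half. -/
lemma auxMu_half (ι : Type) [Fintype ι] [DecidableEq ι] (q : ι) (B : Set (ι → Bool))
    (h : ∀ ω ∈ B, Function.update ω q (!ω q) ∉ B) : auxMu ι B ≤ (2 : ENNReal)⁻¹ := by
  classical
  set g : (ι → Bool) → (ι → Bool) := fun ω => Function.update ω q (!ω q) with hg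
  have hinv : Function.Involutive g := by
    intro ω; funext i
    by_cases hi : i = q
    · subst hi; simp [hg]
    · simp [hg, hi]
  have hmeas : ∀ S : Set (ι → Bool),
      auxMu ι S = (S.toFinset.card : ENNReal) * (2 : ENNReal)⁻¹ ^ Fintype.card ι := by
    intro S
    conv_lhs => rw [← Set.coe_toFinset S]
    rw [← sum_measure_singleton]
    simp [auxMu_singleton]
  have himg : auxMu ι (g '' B) = auxMu ι B := by
    rw [hmeas, hmeas, Set.toFinset_image, Finset.card_image_of_injective _ hinv.injective]
  have hdisj : Disjoint B (g '' B) := by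
    rw [Set.disjoint_left]
    rintro _ hx ⟨y, hy, rfl⟩
    exact h y hy hx
  have h1 : auxMu ι B + auxMu ι (g '' B) ≤ 1 := by
    rw [← measure_union hdisj (Set.toFinite _).measurableSet]
    exact prob_le_one
  rw [himg, ← two_mul] at h1
  rw [ENNReal.le_inv_iff_mul_le, mul_comm]
  exact h1

lemma auxMu_row (ι : Type) [Fintype ι] (m : ℕ) :
    (Measure.pi fun _ : Fin m => auxMu ι) {g | ∀ i, ∃ j, g j i = false} =
      ((2 ^ m - 1 : ℕ) : ENNReal) ^ Fintype.card ι * ((2 : ENNReal)⁻¹ ^ m) ^ Fintype.card ι := by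
  classical
  set S : Set (Fin m → ι → Bool) := {g | ∀ i, ∃ j, g j i = false} with hS
  have hmeas : (Measure.pi fun _ : Fin m => auxMu ι) S =
      (S.toFinset.card : ENNReal) * ((2 : ENNReal)⁻¹ ^ Fintype.card ι) ^ m := by
    conv_lhs => rw [← Set.coe_toFinset S]
    rw [← sum_measure_singleton]
    simp [auxMu_singleton, Measure.pi_singleton]
  rw [hmeas, ← pow_mul, ← pow_mul, mul_comm (Fintype.card ι) m]
  congr 1
  have hcard : S.toFinset.card = (2 ^ m - 1) ^ Fintype.card ι := by
    have e : S ≃ (ι → {h : Fin m → Bool // h ≠ fun _ => true}) :=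
      { toFun := fun g i => ⟨fun j => g.1 j i, by
          obtain ⟨j, hj⟩ := g.2 i
          intro h
          have := congrFun h j
          simp [hj] at this⟩
        invFun := fun f => ⟨fun j i => (f i).1 j, by
          intro i
          by_contra hcon
          push Not at hcon
          exact (f i).2 (funext fun j => by simpa using hcon j)⟩
        left_inv := fun g => rfl
        right_inv := fun f => rfl }
    rw [Set.toFinset_card, Fintype.card_congr e, Fintype.card_fun]
    congr 1
    rw [Fintype.card_subtype_compl, Fintype.card_subtype_eq]
    simp
  rw [hcard]; push_cast; rfl

/-- The random product of primes. -/
def auxF (X : ℕ) (ω : {p // p ∈ Nat.primesLE X} → Bool) : ℤ :=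
  ∏ i, if ω i then ((i : ℕ) : ℤ) else 1

lemma auxF_prime {X : ℕ} (i : {p // p ∈ Nat.primesLE X}) : (i : ℕ).Prime :=
  Nat.prime_of_mem_primesLE i.2

lemma auxF_pos (X : ℕ) (ω) : 0 < auxF X ω := by
  unfold auxF
  apply Finset.prod_pos
  intro i _
  have := (auxF_prime i).pos
  split_ifs
  · exact_mod_cast this
  · norm_num

lemma auxF_le (X : ℕ) (ω) : auxF X ω ≤ 4 ^ X := by
  have h1 : auxF X ω ≤ ∏ i : {p // p ∈ Nat.primesLE X}, ((i : ℕ) : ℤ) := by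
    unfold auxF
    apply Finset.prod_le_prod
    · intro i _
      split_ifs <;> simp
    · intro i _
      have := (auxF_prime i).pos
      split_ifs
      · exact le_rfl
      · exact_mod_cast this
  have h2 : ∏ i : {p // p ∈ Nat.primesLE X}, ((i : ℕ) : ℤ) = (primorial X : ℤ) := by
    rw [primorial_eq_prod_primesLE, Finset.prod_coe_sort (Nat.primesLE X) (fun p => (p : ℤ))]
    push_cast; rfl
  rw [h2] at h1
  exact h1.trans (by exact_mod_cast primorial_le_four_pow X)

lemma auxF_dvd (X : ℕ) (ω) (i : {p // p ∈ Nat.primesLE X}) (h : ω i = true) :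
    ((i : ℕ) : ℤ) ∣ auxF X ω := by
  unfold auxF
  have := Finset.dvd_prod_of_mem (fun i => if ω i then ((i : ℕ) : ℤ) else 1) (Finset.mem_univ i)
  simpa [h] using this

lemma auxF_flip (X : ℕ) (hX : 2 ≤ X) (p : ℕ) (hp : p.Prime) :
    ∃ q : {p // p ∈ Nat.primesLE X}, ∀ ω,
      ((auxF X (Function.update ω q (!ω q)) : ℤ) : ZMod p) ≠ ((auxF X ω : ℤ) : ZMod p) := by
  have := Fact.mk hp
  obtain ⟨q, hq1, hq2⟩ : ∃ q : {p // p ∈ Nat.primesLE X},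
      (((q : ℕ) : ZMod p) ≠ 1) ∧ ∀ i : {p // p ∈ Nat.primesLE X}, i ≠ q → ((i:ℕ) : ZMod p) ≠ 0 := by
    by_cases hpX : p ≤ X
    · refine ⟨⟨p, Nat.mem_primesLE.2 ⟨hpX, hp⟩⟩, by simp, ?_⟩
      intro i hi h0
      rw [ZMod.natCast_eq_zero_iff, Nat.prime_dvd_prime_iff_eq hp (auxF_prime i)] at h0
      exact hi (Subtype.ext h0.symm)
    · refine ⟨⟨2, Nat.mem_primesLE.2 ⟨hX, Nat.prime_two⟩⟩, ?_, ?_⟩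
      · intro h
        have h2 : ((2 : ℕ) : ZMod p) = 1 + 1 := by norm_num
        simp only [h2] at h
        simp at h
      · intro i _ h0
        rw [ZMod.natCast_eq_zero_iff, Nat.prime_dvd_prime_iff_eq hp (auxF_prime i)] at h0
        exact hpX (h0 ▸ (Nat.mem_primesLE.1 i.2).1)
  refine ⟨q, fun ω => ?_⟩
  have key : ∀ w : {p // p ∈ Nat.primesLE X} → Bool, ((auxF X w : ℤ) : ZMod p) =
      (if w q then ((q : ℕ) : ZMod p) else 1) *
        ∏ i ∈ Finset.univ.erase q, (if w i then ((i : ℕ) : ZMod p) else 1) := by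
    intro w
    unfold auxF
    rw [← Finset.mul_prod_erase _ _ (Finset.mem_univ q)]
    push_cast
    rfl
  have hrest : ∏ i ∈ Finset.univ.erase q,
      (if (Function.update ω q (!ω q)) i then ((i : ℕ) : ZMod p) else 1) =
      ∏ i ∈ Finset.univ.erase q, (if ω i then ((i : ℕ) : ZMod p) else 1) := by
    apply Finset.prod_congr rfl
    intro i hi
    rw [Function.update_of_ne (Finset.ne_of_mem_erase hi)]
  have hne : ∏ i ∈ Finset.univ.erase q, (if ω i then ((i : ℕ) : ZMod p) else 1) ≠ 0 := by
    rw [Finset.prod_ne_zero_iff]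
    intro i hi
    split_ifs
    · exact hq2 i (Finset.ne_of_mem_erase hi)
    · exact one_ne_zero
  rw [key, key, hrest, Function.update_self]
  intro h
  have h' := mul_right_cancel₀ hne h
  cases hω : ω q <;> simp [hω] at h'
  · exact hq1 h'
  · exact hq1 h'.symm

lemma auxF_meas (X : ℕ) : Measurable (auxF X) := measurable_of_finite _

theorem stmt9 : ∃ N : ℕ, ∀ n ≥ N, ∀ m ≥ n, ∃ ν : Measure ℤ,
    IsProbabilityMeasure ν ∧
    ν {x : ℤ | ¬ (0 < x ∧ (x : ℝ) ≤ Real.exp ((3 : ℝ) ^ (n * m)))} = 0 ∧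
    IsBalanced (1 / 2) ν ∧
    ((matrixLaw fun _ : Fin n => fun _ : Fin m => ν)
        {A | Function.Surjective (Matrix.of A).mulVecLin}).toReal ≤ Real.exp (-(n : ℝ)) := by
  refine ⟨5, fun n hn m hm => ?_⟩
  set X := 2 ^ (n * m) with hXdef
  have hk1 : 1 ≤ n * m := Nat.mul_pos (by omega) (by omega)
  have hX : 2 ≤ X := by
    calc 2 = 2 ^ 1 := rfl
      _ ≤ X := Nat.pow_le_pow_right (by norm_num) hk1
  have hprob : IsProbabilityMeasure ((auxMu {p // p ∈ Nat.primesLE X}).map (auxF X)) :=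
    Measure.isProbabilityMeasure_map (auxF_meas X).aemeasurable
  refine ⟨(auxMu {p // p ∈ Nat.primesLE X}).map (auxF X), hprob, ?_, ?_, ?_⟩
  · rw [Measure.map_apply (auxF_meas X) (MeasurableSet.of_discrete)]
    convert measure_empty (μ := auxMu {p // p ∈ Nat.primesLE X})
    rw [Set.eq_empty_iff_forall_notMem]
    intro ω hω
    apply hω
    refine ⟨auxF_pos X ω, ?_⟩
    have h1 : ((auxF X ω : ℤ) : ℝ) ≤ 4 ^ X := by exact_mod_cast auxF_le X ω
    refine h1.trans ?_
    have h4 : (4 : ℝ) ^ X = Real.exp (X * Real.log 4) := by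
      rw [mul_comm, Real.exp_mul, Real.exp_log (by norm_num), Real.rpow_natCast]
    rw [h4, Real.exp_le_exp]
    have hl4 : Real.log 4 ≤ 3 / 2 := by
      have : (4 : ℝ) = 2 ^ 2 := by norm_num
      rw [this, Real.log_pow]
      have := Real.log_two_lt_d9
      push_cast; linarith
    have h32 : (3 / 2 : ℝ) ≤ (3 / 2 : ℝ) ^ (n * m) := le_self_pow₀ (by norm_num) (by omega)
    calc (X : ℝ) * Real.log 4 ≤ 2 ^ (n * m) * (3 / 2 : ℝ) ^ (n * m) := by
          rw [hXdef]; push_cast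
          exact mul_le_mul_of_nonneg_left (hl4.trans h32) (by positivity)
      _ = 3 ^ (n * m) := by rw [← mul_pow]; norm_num
  · intro p hp r
    rw [Measure.map_apply (auxF_meas X) (MeasurableSet.of_discrete)]
    obtain ⟨q, hq⟩ := auxF_flip X hX p hp
    have h12 : ENNReal.ofReal (1 - 1 / 2) = (2 : ENNReal)⁻¹ := by
      rw [show (1 - 1 / 2 : ℝ) = 2⁻¹ by norm_num, ENNReal.ofReal_inv_of_pos (by norm_num)]
      simp
    rw [h12]
    apply auxMu_half _ q
    intro ω hω hω'
    simp only [Set.mem_preimage, Set.mem_setOf_eq] at hω hω'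
    exact hq ω (hω'.trans hω.symm)
  · set ν := (auxMu {p // p ∈ Nat.primesLE X}).map (auxF X) with hν
    let i0 : Fin n := ⟨0, by omega⟩
    let E : Set (Fin m → ℤ) := {a | ∀ i : {p // p ∈ Nat.primesLE X}, ∃ j, ¬ ((i : ℕ) : ℤ) ∣ a j}
    have hsub : {A : Fin n → Fin m → ℤ | Function.Surjective (Matrix.of A).mulVecLin} ⊆
        Function.eval i0 ⁻¹' E := by
      intro A hA i
      by_contra hcon
      push Not at hcon
      obtain ⟨v, hv⟩ := hA (Pi.single i0 1)
      have h0 := congrFun hv i0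
      simp only [Matrix.mulVecLin_apply, Matrix.mulVec, dotProduct, Matrix.of_apply,
        Pi.single_eq_same] at h0
      have hd : ((i : ℕ) : ℤ) ∣ 1 := by
        rw [← h0]
        exact Finset.dvd_sum fun j _ => Dvd.dvd.mul_right (hcon j) _
      have h1 : (i : ℕ) ∣ 1 := by exact_mod_cast hd
      exact (auxF_prime i).one_lt.ne' (Nat.dvd_one.1 h1)
    have hEm : MeasurableSet E := (Set.to_countable E).measurableSet
    have hle : (matrixLaw fun _ : Fin n => fun _ : Fin m => ν)
        {A | Function.Surjective (Matrix.of A).mulVecLin} ≤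
        ((2 ^ m - 1 : ℕ) : ENNReal) ^ Fintype.card {p // p ∈ Nat.primesLE X} *
          ((2 : ENNReal)⁻¹ ^ m) ^ Fintype.card {p // p ∈ Nat.primesLE X} := by
      refine (measure_mono hsub).trans ?_
      unfold matrixLaw
      rw [(measurePreserving_eval (fun _ : Fin n => Measure.pi fun _ : Fin m => ν) i0).measure_preimage
        hEm.nullMeasurableSet]
      rw [hν, ← Measure.pi_map_pi (fun _ => (auxF_meas X).aemeasurable),
        Measure.map_apply (measurable_of_finite _) hEm, ← auxMu_row]
      apply measure_mono
      intro g hg i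
      obtain ⟨j, hj⟩ := hg i
      refine ⟨j, ?_⟩
      by_contra hcon
      exact hj (auxF_dvd X _ i (by simpa using hcon))
    have hcard : n * 2 ^ m ≤ Fintype.card {p // p ∈ Nat.primesLE X} := by
      rw [Fintype.card_coe, Nat.primesLE_card_eq_primeCounting]
      exact aux_prime_count n m hn hm
    set K := Fintype.card {p // p ∈ Nat.primesLE X} with hK
    have hfin : ((2 ^ m - 1 : ℕ) : ENNReal) ^ K * ((2 : ENNReal)⁻¹ ^ m) ^ K ≠ ⊤ := by
      apply ENNReal.mul_ne_top
      · exact ENNReal.pow_ne_top (ENNReal.natCast_ne_top _)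
      · exact ENNReal.pow_ne_top (ENNReal.pow_ne_top (by simp))
    refine (ENNReal.toReal_mono hfin hle).trans ?_
    rw [ENNReal.toReal_mul, ENNReal.toReal_pow, ENNReal.toReal_pow, ENNReal.toReal_pow,
      ENNReal.toReal_natCast, ENNReal.toReal_inv, ← mul_pow]
    have h2m : (0 : ℝ) < 2 ^ m := by positivity
    have hbase : ((2 ^ m - 1 : ℕ) : ℝ) * ((2 : ENNReal).toReal)⁻¹ ^ m = 1 - ((2:ℝ) ^ m)⁻¹ := by
      rw [Nat.cast_sub Nat.one_le_two_pow]
      push_cast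
      simp only [ENNReal.toReal_ofNat, inv_pow]
      field_simp
    have hnn : 0 ≤ 1 - ((2:ℝ) ^ m)⁻¹ := by
      rw [← hbase]; positivity
    rw [hbase]
    have hb2 : 1 - ((2:ℝ) ^ m)⁻¹ ≤ Real.exp (-((2:ℝ) ^ m)⁻¹) := by
      have := Real.add_one_le_exp (-((2:ℝ) ^ m)⁻¹)
      linarith
    refine (pow_le_pow_left₀ hnn hb2 K).trans ?_
    rw [← Real.exp_nat_mul, Real.exp_le_exp]
    have hc : ((n : ℝ) * 2 ^ m) ≤ K := by exact_mod_cast hcard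
    have : (n : ℝ) ≤ K * ((2:ℝ) ^ m)⁻¹ := by
      rw [← div_eq_mul_inv, le_div_iff₀ h2m]; exact hc
    linarith
end

section
/- Let p be a prime and let A be a random n×m matrix (m ≥ n) over the p-adic integers ℤ_p, whose entries are independent and identically distributed according to the Haar probability measure on ℤ_p. Then P(A : ℤ_p^m → ℤ_p^n is surjective) = ∏_{k=m+1−n}^{m} (1 − p^(−k)). -/
open MeasureTheory Filter

lemma toZMod_surj (p : ℕ) [Fact p.Prime] :
    Function.Surjective (PadicInt.toZMod : ℤ_[p] →+* ZMod p) :=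
  ZMod.ringHom_surjective _

lemma row_iff {K : Type*} [Field K] (n m : ℕ) (B : Matrix (Fin n) (Fin m) K) :
    LinearIndependent K B.row ↔ ∃ C : Matrix (Fin m) (Fin n) K, B * C = 1 := by
  constructor
  · intro h
    rw [← Matrix.mulVec_surjective_iff_exists_right_inverse]
    have hr := h.rank_matrix
    have ht : LinearMap.range B.mulVecLin = ⊤ :=
      Submodule.eq_top_of_finrank_eq (by rw [← Matrix.rank, hr]; simp)
    exact LinearMap.range_eq_top.mp ht
  · rintro ⟨C, hC⟩
    rw [← Matrix.vecMul_injective_iff]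
    refine Function.LeftInverse.injective (g := fun v => Matrix.vecMul v C) fun v => ?_
    simp [Matrix.vecMul_vecMul, hC]

lemma surj_iff_s10 (p : ℕ) [Fact p.Prime] (n m : ℕ) (A : Matrix (Fin n) (Fin m) ℤ_[p]) :
    Function.Surjective A.mulVecLin ↔
      LinearIndependent (ZMod p) (A.map PadicInt.toZMod).row := by
  rw [row_iff]
  rw [show (A.mulVecLin : _ → _) = A.mulVec from rfl,
    Matrix.mulVec_surjective_iff_exists_right_inverse]
  constructor
  · rintro ⟨C, hC⟩
    refine ⟨C.map PadicInt.toZMod, ?_⟩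
    rw [← Matrix.map_mul, hC, Matrix.map_one _ (map_zero _) (map_one _)]
  · rintro ⟨B, hB⟩
    choose s hs using toZMod_surj p
    have hC : (A * B.map s).map PadicInt.toZMod = 1 := by
      rw [Matrix.map_mul, Matrix.map_map]
      rw [show (PadicInt.toZMod : ℤ_[p] →+* ZMod p) ∘ s = id from funext hs, Matrix.map_id, hB]
    have hd : IsUnit (A * B.map s).det := by
      have : IsLocalHom (PadicInt.toZMod : ℤ_[p] →+* ZMod p) :=
        IsLocalHom.of_surjective _ (toZMod_surj p)
      apply isUnit_of_map_unit (PadicInt.toZMod : ℤ_[p] →+* ZMod p)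
      rw [RingHom.map_det, RingHom.mapMatrix_apply, hC, Matrix.det_one]
      exact isUnit_one
    exact ⟨B.map s * (A * B.map s)⁻¹, by rw [← Matrix.mul_assoc, Matrix.mul_nonsing_inv _ hd]⟩

lemma fib_eq (p : ℕ) [Fact p.Prime] (c : ℤ_[p]) :
    (PadicInt.toZMod : ℤ_[p] →+* ZMod p) ⁻¹' {PadicInt.toZMod c} = Metric.ball c 1 := by
  ext x
  rw [Set.mem_preimage, Set.mem_singleton_iff, ← sub_eq_zero, ← map_sub, ← RingHom.mem_ker,
    PadicInt.ker_toZMod, IsLocalRing.mem_maximalIdeal, PadicInt.mem_nonunits, mem_ball_iff_norm]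

lemma meas_fib (p : ℕ) [Fact p.Prime] (a : ZMod p) :
    MeasurableSet ((PadicInt.toZMod : ℤ_[p] →+* ZMod p) ⁻¹' {a}) := by
  obtain ⟨c, rfl⟩ := toZMod_surj p a
  rw [fib_eq]
  exact measurableSet_ball

lemma measure_fib (p : ℕ) [Fact p.Prime] 
    (μ : Measure ℤ_[p]) [IsProbabilityMeasure μ] [μ.IsAddHaarMeasure] (a : ZMod p) :
    μ ((PadicInt.toZMod : ℤ_[p] →+* ZMod p) ⁻¹' {a}) = (p : ENNReal)⁻¹ := by
  have key : ∀ b : ZMod p, μ ((PadicInt.toZMod : ℤ_[p] →+* ZMod p) ⁻¹' {b}) =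
      μ (Metric.ball 0 1) := by
    intro b
    obtain ⟨c, rfl⟩ := toZMod_surj p b
    rw [fib_eq]
    have := measure_preimage_add μ (-c) (Metric.ball 0 1)
    rw [← this]
    congr 1
    ext x
    simp [neg_add_eq_sub, dist_eq_norm]
  have hs := sum_measure_preimage_singleton (μ := μ) (f := (PadicInt.toZMod : ℤ_[p] →+* ZMod p))
    Finset.univ (fun y _ => meas_fib p y)
  simp only [key] at hs
  simp [ZMod.card] at hs
  rw [key]
  exact ENNReal.eq_inv_of_mul_eq_one_left (by rw [mul_comm]; exact hs)

theorem stmt10 (p : ℕ) [Fact p.Prime] (n m : ℕ) (hnm : n ≤ m)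
    (μ : Measure ℤ_[p]) [IsProbabilityMeasure μ] [μ.IsAddHaarMeasure] :
    ((Measure.pi fun _ : Fin n => Measure.pi fun _ : Fin m => μ)
        {A | Function.Surjective (Matrix.of A).mulVecLin}).toReal =
      ∏ k ∈ Finset.Icc (m + 1 - n) m, (1 - (p : ℝ)⁻¹ ^ k) := by
  classical
  have hp : (p : ℝ) ≠ 0 := by exact_mod_cast (Fact.out : p.Prime).ne_zero
  let f : (Fin n → Fin m → ℤ_[p]) → (Fin n → Fin m → ZMod p) :=
    fun A i j => PadicInt.toZMod (A i j)
  have hfib : ∀ B, f ⁻¹' {B} = Set.univ.pi fun i => Set.univ.pi fun j =>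
      (PadicInt.toZMod : ℤ_[p] →+* ZMod p) ⁻¹' {B i j} := by
    intro B
    ext A
    simp [f, funext_iff]
  have hset : {A : Fin n → Fin m → ℤ_[p] | Function.Surjective (Matrix.of A).mulVecLin} =
      f ⁻¹' ↑(Finset.univ.filter fun B : Fin n → Fin m → ZMod p =>
        LinearIndependent (ZMod p) B) := by
    ext A
    simp only [Set.mem_ofPred_eq, surj_iff_s10, Set.mem_preimage, Finset.coe_filter,
      Finset.mem_univ, true_and]
    rfl
  rw [hset, ← sum_measure_preimage_singleton]
  swap
  · intro B _
    rw [hfib]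
    exact MeasurableSet.univ_pi fun i => MeasurableSet.univ_pi fun j => meas_fib p _
  simp only [hfib, Measure.pi_pi, measure_fib]
  have hc := card_linearIndependent (K := ZMod p) (V := Fin m → ZMod p) (k := n) (by simpa using hnm)
  rw [Nat.card_eq_fintype_card, Fintype.card_subtype] at hc
  simp only [Finset.sum_const, Finset.prod_const, Finset.card_univ, Fintype.card_fin, hc,
    ZMod.card, Module.finrank_fin_fun]
  have hcast : ((∏ i : Fin n, (p ^ m - p ^ (i : ℕ)) : ℕ) : ℝ) =
      ∏ i : Fin n, ((p : ℝ) ^ m - p ^ (i : ℕ)) := by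
    rw [Nat.cast_prod]
    refine Finset.prod_congr rfl fun i _ => ?_
    rw [Nat.cast_sub (Nat.pow_le_pow_right (Fact.out : p.Prime).pos (by omega))]
    push_cast; rfl
  rw [nsmul_eq_mul, ENNReal.toReal_mul, ENNReal.toReal_natCast, hcast]
  simp only [ENNReal.toReal_pow, ENNReal.toReal_inv, ENNReal.toReal_natCast]
  rw [Fin.prod_univ_eq_prod_range (fun i => (p : ℝ) ^ m - p ^ i) n, 
    ← Finset.card_range n, ← Finset.prod_const, Finset.card_range, ← Finset.prod_mul_distrib]
  refine Finset.prod_bij' (fun i _ => m - i) (fun k _ => m - k) ?_ ?_ ?_ ?_ ?_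
  · intro i hi; simp at hi ⊢; omega
  · intro i hi; simp at hi ⊢; omega
  · intro i hi; simp at hi ⊢; omega
  · intro i hi; simp at hi ⊢; omega
  · intro i hi
    simp at hi
    have : m = (m - i) + i := by omega
    generalize m - i = k at *
    subst this
    rw [pow_add, inv_pow, inv_pow, pow_add]
    field_simp
end
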